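/- arXiv:1403.2527 — 12 statements merged into one kernel-verified Lean document; each statement's English description precedes it below -/
import Mathlib

section
/- Suppose the optimal value f* of the auxiliary linear program satisfies f* < 0, and assumptions (D1) and (D2) on the recharge rates hold. Then the probability that the optimal lifetime is infinite tends to 1 as the initial energy grows: lim_{e0 → ∞} P(N_opt = ∞) = 1. -/
open MeasureTheory Filter Finset Matrix

/-- Available energy of base station `m` at the end of slot `n`:
`e^(n) = e0·u + τ·Σ_{t=1}^n s^(t) − τ·C·Σ_{t=1}^n v^(t)`. -/
noncomputable def energyVec {M : ℕ} (τ : ℝ) (C : Matrix (Fin M) (Fin M) ℝ)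
    (e0 : ℝ) (s v : ℕ → Fin M → ℝ) (n : ℕ) (m : Fin M) : ℝ :=
  e0 + τ * (∑ t ∈ Finset.Icc 1 n, s t m)
    - τ * C.mulVec (∑ t ∈ Finset.Icc 1 n, v t) m

/-- A decision vector: entries in `{0,1}` with exactly one `1` (i.e. `uᵀv = 1`). -/
def IsDecision {M : ℕ} (v : Fin M → ℝ) : Prop :=
  (∀ m, v m = 0 ∨ v m = 1) ∧ (∑ m, v m) = 1

/-- The optimal lifetime: the supremum in `ℕ ∪ {∞}` of those `N` for which some
sequence of decision vectors keeps all available energies nonnegative up to slot `N`. -/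
noncomputable def Nopt {M : ℕ} (τ : ℝ) (C : Matrix (Fin M) (Fin M) ℝ)
    (e0 : ℝ) (s : ℕ → Fin M → ℝ) : ℕ∞ :=
  sSup {x : ℕ∞ | ∃ N : ℕ, x = (N : ℕ∞) ∧ ∃ v : ℕ → Fin M → ℝ,
    (∀ t, IsDecision (v t)) ∧
    ∀ n, 1 ≤ n → n ≤ N → ∀ m, 0 ≤ energyVec τ C e0 s v n m}

/-- Rounding: a sequence of decision vectors whose counts stay below `n p + 1`. -/
lemma exists_decisions {M : ℕ} (p : Fin M → ℝ) (hp0 : ∀ m, 0 ≤ p m) (hp1 : ∑ m, p m = 1) :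
    ∃ v : ℕ → Fin M → ℝ, (∀ t, IsDecision (v t)) ∧
      ∀ n l, (∑ t ∈ Finset.Icc 1 n, v t) l ≤ n * p l + 1 := by
  have hne : Nonempty (Fin M) := by
    by_contra h
    rw [not_nonempty_iff] at h
    simp at hp1
  have hpick : ∀ (n : ℕ) (c : Fin M → ℝ), ∃ l : Fin M,
      (∑ m, c m = n) → c l ≤ (n + 1) * p l := by
    intro n c
    by_cases h : ∑ m, c m = n
    · obtain ⟨l, -, hl⟩ := Finset.exists_le_of_sum_le (s := Finset.univ) (f := c)
        (g := fun l => ((n : ℝ) + 1) * p l) Finset.univ_nonempty (by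
          rw [← Finset.mul_sum, hp1, h]; linarith)
      exact ⟨l, fun _ => hl⟩
    · exact ⟨Classical.arbitrary _, fun h' => absurd h' h⟩
  choose pick hpick using hpick
  let c : ℕ → Fin M → ℝ := fun n => Nat.rec 0 (fun n c => c + Pi.single (pick n c) 1) n
  have hc0 : c 0 = 0 := rfl
  have hcs : ∀ n, c (n + 1) = c n + Pi.single (pick n (c n)) 1 := fun n => rfl
  have hsum : ∀ n, ∑ m, c n m = n := by
    intro n
    induction n with
    | zero => simp [hc0]
    | succ n ih => simp [hcs, Finset.sum_add_distrib, ih]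
  have hle : ∀ n l, c n l ≤ n * p l + 1 := by
    intro n
    induction n with
    | zero => simp [hc0]
    | succ n ih =>
      intro l
      rw [hcs, Pi.add_apply]
      push_cast
      by_cases h : l = pick n (c n)
      · have := hpick n (c n) (hsum n)
        rw [← h] at this
        rw [← h, Pi.single_eq_same]
        linarith
      · rw [Pi.single_eq_of_ne h]
        have := ih l
        have := hp0 l
        linarith
  refine ⟨fun t => Pi.single (pick (t - 1) (c (t - 1))) 1, ?_, ?_⟩
  · intro t
    refine ⟨fun m => ?_, by simp⟩
    by_cases h : m = pick (t - 1) (c (t - 1))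
    · right; beta_reduce; rw [← h, Pi.single_eq_same]
    · left; beta_reduce; rw [Pi.single_eq_of_ne h]
  · intro n l
    have : ∑ t ∈ Finset.Icc 1 n, (Pi.single (pick (t - 1) (c (t - 1))) 1 : Fin M → ℝ) = c n := by
      induction n with
      | zero => simp [hc0]
      | succ n ih =>
        rw [Finset.sum_Icc_succ_top (by omega), ih, hcs]
        simp
    rw [this]
    exact hle n l

/-- Exponential moment bound for sums of bounded martingale differences. -/
lemma exp_moment {Ω : Type*} {m0 : MeasurableSpace Ω} (μ : Measure Ω) [IsProbabilityMeasure μ]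
    (F : ℕ → MeasurableSpace Ω) (hF : ∀ n, F n ≤ m0)
    (d X : ℕ → Ω → ℝ) (hX0 : ∀ ω, X 0 ω = 0) (hXs : ∀ n ω, X (n + 1) ω = X n ω + d (n + 1) ω)
    (hXm : ∀ n, Measurable[F n] (X n)) (hdm : ∀ n, Measurable (d n)) (S : ℝ)
    (hd : ∀ n, ∀ᵐ ω ∂μ, |d (n + 1) ω| ≤ S)
    (hc : ∀ n, μ[d (n + 1) | F n] =ᵐ[μ] 0)
    (a : ℝ) (ha : 0 ≤ a) (haS : a * S ≤ 1) (n : ℕ) :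
    Integrable (fun ω => Real.exp (-a * X n ω)) μ ∧
      ∫ ω, Real.exp (-a * X n ω) ∂μ ≤ Real.exp (a ^ 2 * S ^ 2 * n) := by
  have hXm' : ∀ n, Measurable (X n) := fun n => (hXm n).mono (hF n) le_rfl
  have hbd : ∀ n, ∀ᵐ ω ∂μ, -a * X n ω ≤ n := by
    intro n
    induction n with
    | zero => simp [hX0]
    | succ n ih =>
      filter_upwards [ih, hd n] with ω h1 h2
      rw [hXs]
      push_cast
      have := abs_le.1 h2
      nlinarith
  have hInt : ∀ n, Integrable (fun ω => Real.exp (-a * X n ω)) μ := by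
    intro n
    refine Integrable.of_bound (C := Real.exp n)
      ((Real.measurable_exp.comp ((hXm' n).const_mul (-a))).aestronglyMeasurable) ?_
    filter_upwards [hbd n] with ω h
    rw [Real.norm_eq_abs, abs_of_pos (Real.exp_pos _)]
    exact Real.exp_le_exp.2 h
  refine ⟨hInt n, ?_⟩
  induction n with
  | zero => simp [hX0]
  | succ n ih =>
    have hdint : Integrable (d (n + 1)) μ :=
      Integrable.of_bound (C := S) (hdm _).aestronglyMeasurable (hd n)
    set g : Ω → ℝ := fun ω => Real.exp (-a * X n ω) with hg
    have hgd : Integrable (g * d (n + 1)) μ :=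
      (hInt n).mul_bdd (c := S) (hdm _).aestronglyMeasurable (hd n)
    have hgF : StronglyMeasurable[F n] g :=
      (Real.measurable_exp.comp ((hXm n).const_mul (-a))).stronglyMeasurable
    have hzero : ∫ ω, (g * d (n + 1)) ω ∂μ = 0 := by
      rw [← integral_condExp (hF n)]
      have h1 := condExp_mul_of_stronglyMeasurable_left hgF hgd hdint
      rw [integral_congr_ae h1]
      have h2 : g * μ[d (n + 1) | F n] =ᵐ[μ] 0 := by
        filter_upwards [hc n] with ω h
        simp [h]
      rw [integral_congr_ae h2]
      simp
    have hle : ∀ᵐ ω ∂μ, Real.exp (-a * X (n + 1) ω)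
        ≤ (1 + a ^ 2 * S ^ 2) * g ω + (-a) * (g * d (n + 1)) ω := by
      filter_upwards [hd n] with ω h
      have h1 : Real.exp (-a * X (n + 1) ω) = g ω * Real.exp (-a * d (n + 1) ω) := by
        rw [hXs, hg, ← Real.exp_add]; ring_nf
      have habs : |-a * d (n + 1) ω| ≤ a * S := by
        rw [abs_mul, abs_neg, abs_of_nonneg ha]
        exact mul_le_mul_of_nonneg_left h ha
      have h2 := (abs_le.1 (Real.abs_exp_sub_one_sub_id_le (habs.trans haS))).2
      have h3 : (-a * d (n + 1) ω) ^ 2 ≤ (a * S) ^ 2 := by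
        rw [← sq_abs]
        exact pow_le_pow_left₀ (abs_nonneg _) habs 2
      have hgpos : 0 < g ω := Real.exp_pos _
      have h4 : Real.exp (-a * d (n + 1) ω) ≤ 1 + a ^ 2 * S ^ 2 + -a * d (n + 1) ω := by
        nlinarith
      rw [h1]
      calc g ω * Real.exp (-a * d (n + 1) ω)
          ≤ g ω * (1 + a ^ 2 * S ^ 2 + -a * d (n + 1) ω) :=
            mul_le_mul_of_nonneg_left h4 hgpos.le
        _ = _ := by simp only [Pi.mul_apply]; ring
    calc ∫ ω, Real.exp (-a * X (n + 1) ω) ∂μ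
        ≤ ∫ ω, ((1 + a ^ 2 * S ^ 2) * g ω + (-a) * (g * d (n + 1)) ω) ∂μ :=
          integral_mono_ae (hInt _) (((hInt n).const_mul _).add (hgd.const_mul _)) hle
      _ = (1 + a ^ 2 * S ^ 2) * ∫ ω, g ω ∂μ := by
          rw [integral_add ((hInt n).const_mul _) (hgd.const_mul _), integral_const_mul,
            integral_const_mul, hzero]
          ring
      _ ≤ Real.exp (a ^ 2 * S ^ 2) * Real.exp (a ^ 2 * S ^ 2 * n) := by
          refine mul_le_mul ?_ ih (integral_nonneg fun ω => (Real.exp_pos _).le)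
            (Real.exp_pos _).le
          linarith [Real.add_one_le_exp (a ^ 2 * S ^ 2)]
      _ = _ := by
          rw [← Real.exp_add]; push_cast; ring_nf

/-- The drifted martingale stays above `-K` with probability tending to one. -/
lemma tail_tendsto {Ω : Type*} {m0 : MeasurableSpace Ω} (μ : Measure Ω) [IsProbabilityMeasure μ]
    (F : ℕ → MeasurableSpace Ω) (hF : ∀ n, F n ≤ m0)
    (d X : ℕ → Ω → ℝ) (hX0 : ∀ ω, X 0 ω = 0) (hXs : ∀ n ω, X (n + 1) ω = X n ω + d (n + 1) ω)
    (hXm : ∀ n, Measurable[F n] (X n)) (hdm : ∀ n, Measurable (d n)) (S : ℝ) (hS : 0 < S)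
    (hd : ∀ n, ∀ᵐ ω ∂μ, |d (n + 1) ω| ≤ S)
    (hc : ∀ n, μ[d (n + 1) | F n] =ᵐ[μ] 0) (δ : ℝ) (hδ : 0 < δ) :
    Tendsto (fun K : ℝ => μ {ω | ∃ n : ℕ, X n ω + n * δ < -K}) atTop (nhds 0) := by
  set a : ℝ := δ / (S * (S + δ)) with ha
  have hapos : 0 < a := by positivity
  have haS : a * S ≤ 1 := by
    have : a * S = δ / (S + δ) := by rw [ha]; field_simp
    rw [this, div_le_one (by positivity)]
    linarith
  have haS2 : a * S ^ 2 < δ := by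
    have : a * S ^ 2 = δ * S / (S + δ) := by rw [ha]; field_simp
    rw [this, div_lt_iff₀ (by positivity)]
    nlinarith
  set r : ℝ := Real.exp (a ^ 2 * S ^ 2 - a * δ) with hr
  have hr1 : r < 1 := by
    rw [hr, Real.exp_lt_one_iff]
    nlinarith
  have hr0 : 0 < r := Real.exp_pos _
  have hone : ∀ (K : ℝ) (n : ℕ), μ {ω | X n ω + n * δ < -K}
      ≤ ENNReal.ofReal (Real.exp (-a * K) * r ^ n) := by
    intro K n
    obtain ⟨hInt, hle⟩ := exp_moment μ F hF d X hX0 hXs hXm hdm S hd hc a hapos.le haS n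
    have hmk := mul_meas_ge_le_integral_of_nonneg (μ := μ)
      (f := fun ω => Real.exp (-a * X n ω)) (ae_of_all _ fun ω => (Real.exp_pos _).le) hInt
      (Real.exp (a * (K + n * δ)))
    have hsub : μ {ω | X n ω + n * δ < -K}
        ≤ μ {ω | Real.exp (a * (K + n * δ)) ≤ Real.exp (-a * X n ω)} := by
      refine measure_mono fun ω h => ?_
      simp only [Set.mem_ofPred_eq] at h ⊢
      rw [Real.exp_le_exp]
      nlinarith
    refine hsub.trans ?_
    rw [← ENNReal.ofReal_toReal (measure_ne_top μ _)]
    refine ENNReal.ofReal_le_ofReal ?_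
    change μ.real _ ≤ _
    have h1 := hmk.trans hle
    have h2 : Real.exp (-a * K) * r ^ n
        = Real.exp (-(a * (K + n * δ))) * Real.exp (a ^ 2 * S ^ 2 * n) := by
      rw [hr, ← Real.exp_nat_mul, ← Real.exp_add, ← Real.exp_add]; ring_nf
    rw [h2, Real.exp_neg, ← div_eq_inv_mul, le_div_iff₀ (Real.exp_pos _), mul_comm]
    exact h1
  have hall : ∀ K : ℝ, μ {ω | ∃ n : ℕ, X n ω + n * δ < -K}
      ≤ ENNReal.ofReal (Real.exp (-a * K) * (1 - r)⁻¹) := by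
    intro K
    rw [Set.ofPred_exists]
    refine (measure_iUnion_le _).trans ((ENNReal.tsum_le_tsum (hone K)).trans ?_)
    rw [← ENNReal.ofReal_tsum_of_nonneg (fun n => by positivity)
      ((summable_geometric_of_lt_one hr0.le hr1).mul_left _), tsum_mul_left,
      tsum_geometric_of_lt_one hr0.le hr1]
  refine tendsto_of_tendsto_of_tendsto_of_le_of_le tendsto_const_nhds ?_
    (fun K => zero_le) hall
  have h1 : Tendsto (fun K : ℝ => Real.exp (-a * K) * (1 - r)⁻¹) atTop (nhds 0) := by
    have : Tendsto (fun K : ℝ => -a * K) atTop atBot :=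
      tendsto_id.const_mul_atTop_of_neg (by linarith)
    simpa using (Real.tendsto_exp_atBot.comp this).mul_const (1 - r)⁻¹
  simpa using ENNReal.tendsto_ofReal h1

/-- If the optimal LP value `f* < 0` and (D1), (D2) hold, then
`P(N_opt = ∞) → 1` as `e0 → ∞`. -/
theorem optimal_lifetime_infinite_of_fstar_neg
    {M : ℕ} (hM : 2 ≤ M)
    (τ : ℝ) (hτ : 0 < τ)
    (C : Matrix (Fin M) (Fin M) ℝ) (hC : ∀ i j, 0 ≤ C i j)
    (sbar : Fin M → ℝ) (S : ℝ) (hS : 0 < S)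
    (hsbarS : ∀ m, 0 ≤ sbar m ∧ sbar m ≤ S)
    (fstar : ℝ) (hfstar : fstar < 0)
    -- `f*` is attained by a feasible point of the auxiliary LP (with `R = C − s̄·uᵀ`)
    (hattain : ∃ vbar : Fin M → ℝ, (∀ m, 0 ≤ vbar m) ∧ (∑ m, vbar m) = 1 ∧
      ∀ m, (C - Matrix.of fun i _ => sbar i).mulVec vbar m ≤ fstar)
    -- and is optimal for it
    (hopt : ∀ (vbar : Fin M → ℝ) (f : ℝ), (∀ m, 0 ≤ vbar m) → (∑ m, vbar m) = 1 →
      (∀ m, (C - Matrix.of fun i _ => sbar i).mulVec vbar m ≤ f) → fstar ≤ f)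
    {Ω : Type*} {m0 : MeasurableSpace Ω} (μ : Measure Ω) [IsProbabilityMeasure μ]
    (s : ℕ → Ω → Fin M → ℝ) (hmeas : ∀ n, Measurable (s n))
    -- (D1): constant conditional expectation given the past
    (hD1 : ∀ n, 1 ≤ n →
      (μ[s n | ⨆ i ∈ Finset.Icc 1 (n-1), MeasurableSpace.comap (s i) inferInstance]
        =ᵐ[μ] (fun _ => sbar)))
    -- (D2): boundedness
    (hD2 : ∀ n, 1 ≤ n → ∀ᵐ ω ∂μ, ∀ m, 0 ≤ s n ω m ∧ s n ω m ≤ S) :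
    Tendsto (fun e0 : ℝ => μ {ω | Nopt τ C e0 (fun t => s t ω) = ⊤})
      atTop (nhds 1) := by
  obtain ⟨p, hp0, hp1, hpf⟩ := hattain
  obtain ⟨v, hv, hvle⟩ := exists_decisions p hp0 hp1
  set Km : ℝ := ∑ m, ∑ l, C m l with hKm
  set F : ℕ → MeasurableSpace Ω := fun n =>
    ⨆ i ∈ Finset.Icc 1 n, MeasurableSpace.comap (s i) inferInstance with hFdef
  have hF : ∀ n, F n ≤ m0 := fun n => iSup₂_le fun i _ => (hmeas i).comap_le
  let X : Fin M → ℕ → Ω → ℝ := fun m n ω => ∑ t ∈ Finset.Icc 1 n, (s t ω m - sbar m)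
  have htail : ∀ m, Tendsto (fun K : ℝ => μ {ω | ∃ n : ℕ, X m n ω + n * (-fstar) < -K})
      atTop (nhds 0) := by
    intro m
    refine tail_tendsto μ F hF (fun t ω => s t ω m - sbar m) (X m) ?_ ?_ ?_ ?_ S hS ?_ ?_
      (-fstar) (by linarith)
    · intro ω; simp [X]
    · intro n ω
      simp only [X]
      rw [Finset.sum_Icc_succ_top (by omega)]
    · intro n
      refine Finset.measurable_sum _ fun t ht => ?_
      have h1 : Measurable[F n] (s t) := by
        rw [measurable_iff_comap_le]
        exact le_iSup₂_of_le (f := fun i (_ : i ∈ Finset.Icc 1 n) =>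
          MeasurableSpace.comap (s i) inferInstance) t ht le_rfl
      exact ((measurable_pi_apply m).comp h1).sub_const _
    · intro n
      exact ((measurable_pi_apply m).comp (hmeas n)).sub_const _
    · intro n
      filter_upwards [hD2 (n + 1) (by omega)] with ω h
      have h1 := h m
      have h2 := hsbarS m
      rw [abs_le]
      constructor <;> linarith
    · intro n
      have hInt : Integrable (s (n + 1)) μ := by
        refine Integrable.of_bound (C := S) (hmeas _).aestronglyMeasurable ?_
        filter_upwards [hD2 (n + 1) (by omega)] with ω h
        rw [pi_norm_le_iff_of_nonneg hS.le]
        intro i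
        rw [Real.norm_eq_abs, abs_of_nonneg (h i).1]
        exact (h i).2
      have h1 := ContinuousLinearMap.comp_condExp_add_const_comm (hF n) hInt
        (ContinuousLinearMap.proj (R := ℝ) (φ := fun _ : Fin M => ℝ) m) (-sbar m)
      have h2 : μ[s (n + 1) | F n] =ᵐ[μ] fun _ => sbar := hD1 (n + 1) (by omega)
      refine EventuallyEq.trans (EventuallyEq.symm h1) ?_
      filter_upwards [h2] with ω h
      simp [h]
  have hbad : Tendsto (fun e0 : ℝ =>
      ∑ m, μ {ω | ∃ n : ℕ, X m n ω + n * (-fstar) < -(e0 / τ - Km)}) atTop (nhds 0) := by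
    have hK : Tendsto (fun e0 : ℝ => e0 / τ - Km) atTop atTop :=
      tendsto_atTop_add_const_right _ _ (tendsto_id.atTop_div_const hτ)
    have := tendsto_finsetSum Finset.univ fun m _ => (htail m).comp hK
    rw [Finset.sum_const_zero] at this
    exact this
  have hgood : ∀ e0 : ℝ, 1 - ∑ m, μ {ω | ∃ n : ℕ, X m n ω + n * (-fstar) < -(e0 / τ - Km)}
      ≤ μ {ω | Nopt τ C e0 (fun t => s t ω) = ⊤} := by
    intro e0
    rw [tsub_le_iff_right]
    have hcover : (Set.univ : Set Ω) ⊆ {ω | Nopt τ C e0 (fun t => s t ω) = ⊤} ∪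
        ⋃ m, {ω | ∃ n : ℕ, X m n ω + n * (-fstar) < -(e0 / τ - Km)} := by
      intro ω _
      by_cases hω : ω ∈ ⋃ m, {ω | ∃ n : ℕ, X m n ω + n * (-fstar) < -(e0 / τ - Km)}
      · exact Or.inr hω
      · left
        simp only [Set.mem_iUnion, Set.mem_ofPred_eq, not_exists, not_lt] at hω
        have hen : ∀ n m, 0 ≤ energyVec τ C e0 (fun t => s t ω) v n m := by
          intro n m
          have h1 := hω m n
          have h2 : C.mulVec (∑ t ∈ Finset.Icc 1 n, v t) m
              ≤ n * C.mulVec p m + ∑ l, C m l := by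
            simp only [Matrix.mulVec, dotProduct]
            rw [Finset.mul_sum, ← Finset.sum_add_distrib]
            refine Finset.sum_le_sum fun l _ => ?_
            calc C m l * (∑ t ∈ Finset.Icc 1 n, v t) l ≤ C m l * (n * p l + 1) :=
                  mul_le_mul_of_nonneg_left (hvle n l) (hC m l)
              _ = _ := by ring
          have h3 : ∑ l, C m l ≤ Km :=
            Finset.single_le_sum (f := fun m => ∑ l, C m l)
              (fun i _ => Finset.sum_nonneg fun j _ => hC i j) (Finset.mem_univ m)
          have h4 : C.mulVec p m - sbar m ≤ fstar := by
            have := hpf m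
            rw [Matrix.sub_mulVec, Pi.sub_apply] at this
            have h5 : (Matrix.of fun i (_ : Fin M) => sbar i).mulVec p m = sbar m := by
              simp [Matrix.mulVec, dotProduct, ← Finset.mul_sum, hp1]
            rwa [h5] at this
          have h5 : X m n ω = (∑ t ∈ Finset.Icc 1 n, s t ω m) - n * sbar m := by
            simp [X, Finset.sum_sub_distrib]
          have h6 : (n : ℝ) * (C.mulVec p m - sbar m) ≤ n * fstar :=
            mul_le_mul_of_nonneg_left h4 (Nat.cast_nonneg n)
          have h7 : 0 ≤ e0 / τ + (∑ t ∈ Finset.Icc 1 n, s t ω m)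
              - C.mulVec (∑ t ∈ Finset.Icc 1 n, v t) m := by
            rw [h5] at h1
            linarith
          have h8 : energyVec τ C e0 (fun t => s t ω) v n m
              = τ * (e0 / τ + (∑ t ∈ Finset.Icc 1 n, s t ω m)
              - C.mulVec (∑ t ∈ Finset.Icc 1 n, v t) m) := by
            simp only [energyVec]
            field_simp
          rw [h8]
          exact mul_nonneg hτ.le h7
        simp only [Set.mem_ofPred_eq]
        refine ENat.eq_top_iff_forall_ge.2 fun N => ?_
        exact le_sSup ⟨N, rfl, v, hv, fun n _ _ m => hen n m⟩
    calc (1 : ENNReal) = μ Set.univ := measure_univ.symm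
      _ ≤ _ := measure_mono hcover
      _ ≤ _ := measure_union_le _ _
      _ ≤ _ := by
        gcongr
        exact measure_iUnion_fintype_le μ _
  refine tendsto_of_tendsto_of_tendsto_of_le_of_le ?_ tendsto_const_nhds hgood
    (fun e0 => prob_le_one)
  simpa using ENNReal.Tendsto.sub (tendsto_const_nhds (x := (1 : ENNReal))) hbad (by simp)
end

section
/- Suppose the optimal value f* of the auxiliary linear program satisfies f* > 0, and assumptions (D1) and (D2) on the recharge rates hold. Then for every δ > 0, lim_{e0 → ∞} P( N_opt is finite and |N_opt / (e0/(τ f*)) − 1| < δ ) = 1. -/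
open MeasureTheory Filter Finset Matrix

theorem aux_dev (u : ℕ → ℝ) (l : ℝ) (h : Tendsto (fun n : ℕ => u n / n) atTop (nhds l))
    (ε : ℝ) (hε : 0 < ε) : ∃ K : ℝ, 0 ≤ K ∧ ∀ n : ℕ, |u n - n * l| ≤ ε * n + K := by
  obtain ⟨n0, hn0⟩ := (Metric.tendsto_atTop.1 h) ε hε
  refine ⟨∑ n ∈ Finset.range (n0 + 1), |u n - n * l|, Finset.sum_nonneg fun _ _ => abs_nonneg _, ?_⟩
  intro n
  by_cases hn : n < n0 + 1
  · have := Finset.single_le_sum (f := fun n : ℕ => |u n - n * l|) (fun _ _ => abs_nonneg _)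
      (Finset.mem_range.2 hn)
    have h2 : 0 ≤ ε * n := by positivity
    linarith
  · have hp : (0 : ℝ) < n := by
      have : 0 < n := by omega
      exact_mod_cast this
    have h1 := hn0 n (by omega)
    rw [Real.dist_eq] at h1
    have h3 : u n - n * l = (u n / n - l) * n := by field_simp
    rw [h3, abs_mul, abs_of_pos hp]
    have h4 : 0 ≤ ∑ n ∈ Finset.range (n0 + 1), |u n - n * l| :=
      Finset.sum_nonneg fun _ _ => abs_nonneg _
    nlinarith

/-- Greedy choice of decisions tracking `vbar`. -/
theorem aux_greedy {M : ℕ} (vbar : Fin M → ℝ) (h0 : ∀ m, 0 ≤ vbar m) (h1 : ∑ m, vbar m = 1) :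
    ∃ v : ℕ → Fin M → ℝ, (∀ t, IsDecision (v t)) ∧
      ∀ n m, (∑ t ∈ Finset.Icc 1 n, v t) m ≤ n * vbar m + 1 := by
  classical
  have key : ∀ (n : ℕ) (V : Fin M → ℝ), ∃ w : Fin M → ℝ, IsDecision w ∧
      ((∑ m, V m = n ∧ ∀ m, V m ≤ n * vbar m + 1) →
      ((∑ m, (V + w) m = n + 1) ∧ ∀ m, (V + w) m ≤ (n + 1) * vbar m + 1)) := by
    intro n V
    have hex : (∑ m, V m = n) → ∃ m, V m ≤ (n + 1) * vbar m := by
      intro hV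
      by_contra hc
      push Not at hc
      have : ∑ m, (n + 1) * vbar m ≤ ∑ m, V m := Finset.sum_le_sum fun m _ => (hc m).le
      rw [← Finset.mul_sum, h1, hV] at this
      linarith
    have dec : ∀ m : Fin M, IsDecision (Pi.single m (1 : ℝ)) := by
      intro m
      refine ⟨fun j => ?_, by simp⟩
      by_cases h : j = m
      · subst h; simp
      · simp [h]
    by_cases hV : ∑ m, V m = n
    · obtain ⟨m, hm⟩ := hex hV
      refine ⟨Pi.single m 1, dec m, fun ⟨_, hb⟩ => ⟨?_, fun j => ?_⟩⟩
      · simp [Finset.sum_add_distrib, hV]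
      · by_cases h : j = m
        · subst h; simp; linarith
        · simp [h]
          have := hb j
          have := h0 j
          linarith
    · have : Nonempty (Fin M) := by
        by_contra hc
        rw [not_nonempty_iff] at hc
        simp at h1
      obtain ⟨m⟩ := this
      exact ⟨Pi.single m 1, dec m, fun h => absurd h.1 hV⟩
  choose w hw1 hw2 using key
  let V : ℕ → Fin M → ℝ := fun n => Nat.rec 0 (fun k Vk => Vk + w k Vk) n
  have hVs : ∀ n, V (n + 1) = V n + w n (V n) := fun n => rfl
  have hinv : ∀ n, (∑ m, V n m = n ∧ ∀ m, V n m ≤ n * vbar m + 1) := by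
    intro n
    induction n with
    | zero => simp [V]
    | succ k ih =>
      rw [hVs]; push_cast
      exact hw2 k (V k) ih
  refine ⟨fun t => w (t - 1) (V (t - 1)), fun t => hw1 _ _, fun n m => ?_⟩
  have hsum : ∀ n, ∑ t ∈ Finset.Icc 1 n, w (t - 1) (V (t - 1)) = V n := by
    intro n
    induction n with
    | zero => simp [V]
    | succ k ih => rw [Finset.sum_Icc_succ_top (by omega), ih, hVs]; simp
  rw [hsum]
  exact (hinv n).2 m

theorem aux_mulVec {M : ℕ} (C : Matrix (Fin M) (Fin M) ℝ) (sbar v : Fin M → ℝ) (m : Fin M) :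
    (C - Matrix.of fun i _ => sbar i).mulVec v m = C.mulVec v m - sbar m * ∑ j, v j := by
  simp [Matrix.mulVec, dotProduct, Finset.mul_sum, sub_mul, Finset.sum_sub_distrib]

theorem aux_upper {M : ℕ} (hM : 2 ≤ M) (τ : ℝ) (hτ : 0 < τ)
    (C : Matrix (Fin M) (Fin M) ℝ) (sbar : Fin M → ℝ) (fstar : ℝ)
    (hopt : ∀ (vbar : Fin M → ℝ) (f : ℝ), (∀ m, 0 ≤ vbar m) → (∑ m, vbar m) = 1 →
      (∀ m, (C - Matrix.of fun i _ => sbar i).mulVec vbar m ≤ f) → fstar ≤ f)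
    (s : ℕ → Fin M → ℝ) (ε K : ℝ) (hK : 0 ≤ K)
    (hs : ∀ m (n : ℕ), |∑ t ∈ Finset.Icc 1 n, s t m - n * sbar m| ≤ ε * n + K)
    (e0 : ℝ) (he0 : 0 ≤ e0) (N : ℕ) (v : ℕ → Fin M → ℝ) (hv : ∀ t, IsDecision (v t))
    (hN : ∀ n, 1 ≤ n → n ≤ N → ∀ m, 0 ≤ energyVec τ C e0 s v n m) :
    N * (fstar - ε) ≤ e0 / τ + K := by
  rcases Nat.eq_zero_or_pos N with h | hpos
  · subst h; simp; positivity
  have hNr : (0 : ℝ) < N := by exact_mod_cast hpos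
  set V := ∑ t ∈ Finset.Icc 1 N, v t with hVdef
  have hVsum : ∑ m, V m = N := by
    simp only [hVdef, Finset.sum_apply]
    rw [Finset.sum_comm]
    simp [fun t => (hv t).2]
  have hVnn : ∀ m, 0 ≤ V m := by
    intro m
    simp only [hVdef, Finset.sum_apply]
    refine Finset.sum_nonneg fun t _ => ?_
    rcases (hv t).1 m with h | h <;> simp [h]
  have : Nonempty (Fin M) := ⟨⟨0, by omega⟩⟩
  set w : Fin M → ℝ := (N : ℝ)⁻¹ • V with hw
  have hwsum : ∑ m, w m = 1 := by
    simp only [hw, Pi.smul_apply, smul_eq_mul]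
    rw [← Finset.mul_sum, hVsum]; field_simp
  obtain ⟨m, hm⟩ := Finite.exists_max (fun m => (C - Matrix.of fun i _ => sbar i).mulVec w m)
  have h1 := hopt w _ (fun j => by simp [hw]; have := hVnn j; positivity) hwsum hm
  rw [aux_mulVec, hwsum, hw, Matrix.mulVec_smul] at h1
  simp only [Pi.smul_apply, smul_eq_mul, mul_one] at h1
  have h2 := hN N hpos le_rfl m
  unfold energyVec at h2
  rw [← hVdef] at h2
  have h3 := (abs_le.1 (hs m N)).2
  have h4 : fstar * N ≤ C.mulVec V m - sbar m * N := by
    have := mul_le_mul_of_nonneg_right h1 hNr.le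
    rw [sub_mul] at this
    field_simp at this
    linarith
  have h5 : 0 ≤ e0 / τ + (∑ t ∈ Finset.Icc 1 N, s t m) - C.mulVec V m := by
    have : e0 / τ + (∑ t ∈ Finset.Icc 1 N, s t m) - C.mulVec V m =
      (e0 + τ * (∑ t ∈ Finset.Icc 1 N, s t m) - τ * C.mulVec V m) / τ := by field_simp
    rw [this]; positivity
  linarith

theorem aux_lower {M : ℕ} (τ : ℝ) (hτ : 0 < τ)
    (C : Matrix (Fin M) (Fin M) ℝ) (hC : ∀ i j, 0 ≤ C i j) (sbar : Fin M → ℝ) (fstar : ℝ)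
    (hattain : ∃ vbar : Fin M → ℝ, (∀ m, 0 ≤ vbar m) ∧ (∑ m, vbar m) = 1 ∧
      ∀ m, (C - Matrix.of fun i _ => sbar i).mulVec vbar m ≤ fstar)
    (s : ℕ → Fin M → ℝ) (ε K : ℝ) (hε : 0 < fstar + ε)
    (hs : ∀ m (n : ℕ), |∑ t ∈ Finset.Icc 1 n, s t m - n * sbar m| ≤ ε * n + K) :
    ∃ v : ℕ → Fin M → ℝ, (∀ t, IsDecision (v t)) ∧ ∀ (e0 : ℝ) (N : ℕ),
      N * (fstar + ε) ≤ e0 / τ - (K + ∑ i, ∑ j, C i j) → 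
      ∀ n, 1 ≤ n → n ≤ N → ∀ m, 0 ≤ energyVec τ C e0 s v n m := by
  obtain ⟨vbar, h0, h1, h2⟩ := hattain
  obtain ⟨v, hv, hV⟩ := aux_greedy vbar h0 h1
  refine ⟨v, hv, fun e0 N hN n hn1 hnN m => ?_⟩
  have h3 := h2 m
  rw [aux_mulVec, h1, mul_one] at h3
  have h4 : C.mulVec (∑ t ∈ Finset.Icc 1 n, v t) m ≤ n * C.mulVec vbar m + ∑ j, C m j := by
    simp only [Matrix.mulVec, dotProduct]
    rw [Finset.mul_sum, ← Finset.sum_add_distrib]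
    refine Finset.sum_le_sum fun j _ => ?_
    have := mul_le_mul_of_nonneg_left (hV n j) (hC m j)
    linarith
  have h5 : ∑ j, C m j ≤ ∑ i, ∑ j, C i j :=
    Finset.single_le_sum (f := fun i => ∑ j, C i j)
      (fun i _ => Finset.sum_nonneg fun j _ => hC i j) (Finset.mem_univ m)
  have h6 := (abs_le.1 (hs m n)).1
  have hnN' : (n : ℝ) ≤ N := by exact_mod_cast hnN
  have h7 : (n : ℝ) * (fstar + ε) ≤ N * (fstar + ε) := mul_le_mul_of_nonneg_right hnN' hε.le
  have h8 : n * (C.mulVec vbar m - sbar m) ≤ n * fstar :=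
    mul_le_mul_of_nonneg_left h3 (by positivity)
  have h9 : 0 ≤ e0 / τ + (∑ t ∈ Finset.Icc 1 n, s t m)
      - C.mulVec (∑ t ∈ Finset.Icc 1 n, v t) m := by linarith
  unfold energyVec
  have : e0 + τ * (∑ t ∈ Finset.Icc 1 n, s t m) - τ * C.mulVec (∑ t ∈ Finset.Icc 1 n, v t) m
     = τ * (e0 / τ + (∑ t ∈ Finset.Icc 1 n, s t m)
      - C.mulVec (∑ t ∈ Finset.Icc 1 n, v t) m) := by field_simp
  rw [this]; positivity

theorem aux_det {M : ℕ} (hM : 2 ≤ M) (τ : ℝ) (hτ : 0 < τ)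
    (C : Matrix (Fin M) (Fin M) ℝ) (hC : ∀ i j, 0 ≤ C i j) (sbar : Fin M → ℝ) (fstar : ℝ)
    (hfstar : 0 < fstar)
    (hattain : ∃ vbar : Fin M → ℝ, (∀ m, 0 ≤ vbar m) ∧ (∑ m, vbar m) = 1 ∧
      ∀ m, (C - Matrix.of fun i _ => sbar i).mulVec vbar m ≤ fstar)
    (hopt : ∀ (vbar : Fin M → ℝ) (f : ℝ), (∀ m, 0 ≤ vbar m) → (∑ m, vbar m) = 1 →
      (∀ m, (C - Matrix.of fun i _ => sbar i).mulVec vbar m ≤ f) → fstar ≤ f)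
    (s : ℕ → Fin M → ℝ)
    (hs : ∀ m, Tendsto (fun n : ℕ => (∑ t ∈ Finset.Icc 1 n, s t m) / n) atTop (nhds (sbar m)))
    (δ : ℝ) (hδ : 0 < δ) :
    ∀ᶠ e0 : ℝ in atTop, Nopt τ C e0 s ≠ ⊤ ∧
        |((Nopt τ C e0 s).toNat : ℝ) / (e0 / (τ * fstar)) - 1| < δ := by
  obtain ⟨ε, hε, hε1, hε2⟩ : ∃ ε : ℝ, 0 < ε ∧ ε < fstar ∧ ε * (1 + δ) < fstar * δ := by
    refine ⟨fstar * δ / (2 * (1 + δ)), by positivity, ?_, ?_⟩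
    · rw [div_lt_iff₀ (by positivity)]; nlinarith
    · have : fstar * δ / (2 * (1 + δ)) * (1 + δ) = fstar * δ / 2 := by field_simp
      rw [this]; nlinarith [mul_pos hfstar hδ]
  choose K hK hKs using fun m => aux_dev _ _ (hs m) ε hε
  set K0 := ∑ m, K m with hK0
  have hK0n : 0 ≤ K0 := Finset.sum_nonneg fun m _ => hK m
  have hdev : ∀ m (n : ℕ), |∑ t ∈ Finset.Icc 1 n, s t m - n * sbar m| ≤ ε * n + K0 := by
    intro m n
    have := Finset.single_le_sum (f := K) (fun m _ => hK m) (Finset.mem_univ m)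
    have := hKs m n
    linarith
  obtain ⟨v, hv, hlow⟩ := aux_lower τ hτ C hC sbar fstar hattain s ε K0 (by linarith) hdev
  set A := K0 + ∑ i, ∑ j, C i j with hA
  have hinv : Tendsto (fun e0 : ℝ => τ / e0) atTop (nhds 0) := tendsto_const_nhds.div_atTop tendsto_id
  have hl1 : Tendsto (fun e0 : ℝ => (1 + K0 * (τ / e0)) * fstar / (fstar - ε)) atTop
      (nhds ((1 + K0 * 0) * fstar / (fstar - ε))) :=
    (((hinv.const_mul K0).const_add 1).mul_const fstar).div_const _
  have hl2 : Tendsto (fun e0 : ℝ => ((1 - (A + (fstar + ε)) * (τ / e0))) * fstar / (fstar + ε)) atTop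
      (nhds ((1 - (A + (fstar + ε)) * 0) * fstar / (fstar + ε))) :=
    (((hinv.const_mul _).const_sub 1).mul_const fstar).div_const _
  have hd1 : (1 + K0 * 0) * fstar / (fstar - ε) < 1 + δ := by
    rw [div_lt_iff₀ (by linarith)]; nlinarith
  have hd2 : 1 - δ < (1 - (A + (fstar + ε)) * 0) * fstar / (fstar + ε) := by
    rw [lt_div_iff₀ (by linarith)]; nlinarith
  filter_upwards [hl1.eventually_lt_const hd1, hl2.eventually_const_lt hd2, eventually_gt_atTop 0,
    eventually_ge_atTop (τ * A)]
    with e0 h1 h2 hpos hbig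
  set B := (e0 / τ + K0) / (fstar - ε) with hB
  have hB0 : 0 ≤ B := div_nonneg (by positivity) (by linarith)
  have hup : Nopt τ C e0 s ≤ ((⌊B⌋₊ : ℕ) : ℕ∞) := by
    refine sSup_le ?_
    rintro x ⟨N, rfl, w, hw, hN⟩
    have := aux_upper hM τ hτ C sbar fstar hopt s ε K0 hK0n hdev e0 hpos.le N w hw hN
    have : N ≤ ⌊B⌋₊ := Nat.le_floor (by rw [hB, le_div_iff₀ (by linarith)]; exact this)
    exact_mod_cast this
  set D := (e0 / τ - A) / (fstar + ε) with hD
  have hD0 : 0 ≤ D := by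
    refine div_nonneg ?_ (by linarith)
    rw [sub_nonneg, le_div_iff₀ hτ]; linarith
  have hlo : ((⌊D⌋₊ : ℕ) : ℕ∞) ≤ Nopt τ C e0 s := by
    refine le_sSup ⟨_, rfl, v, hv, hlow e0 _ ?_⟩
    rw [← le_div_iff₀ (by linarith)]
    exact Nat.floor_le hD0
  have hne : Nopt τ C e0 s ≠ ⊤ := ne_top_of_le_ne_top (ENat.natCast_ne_top _) hup
  refine ⟨hne, ?_⟩
  obtain ⟨n, hn⟩ := ENat.ne_top_iff_exists.1 hne
  rw [← hn] at hup hlo ⊢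
  rw [ENat.toNat_natCast]
  have hup' : (n : ℝ) ≤ B := by
    have h : n ≤ ⌊B⌋₊ := by exact_mod_cast hup
    exact (Nat.le_floor_iff hB0).1 h
  have hlo' : D - 1 < n := by
    have h : ⌊D⌋₊ ≤ n := by exact_mod_cast hlo
    have h' : (⌊D⌋₊ : ℝ) ≤ n := by exact_mod_cast h
    linarith [Nat.lt_floor_add_one D]
  have hc : 0 < τ * fstar / e0 := by positivity
  have hx : (n : ℝ) / (e0 / (τ * fstar)) = n * (τ * fstar / e0) := by field_simp
  have hfe : 0 < fstar - ε := by linarith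
  have hfe' : 0 < fstar + ε := by linarith
  have hu : n * (τ * fstar / e0) ≤ (1 + K0 * (τ / e0)) * fstar / (fstar - ε) := by
    refine (mul_le_mul_of_nonneg_right hup' hc.le).trans (le_of_eq ?_)
    rw [hB]; field_simp
  have hl : (1 - (A + (fstar + ε)) * (τ / e0)) * fstar / (fstar + ε) ≤ n * (τ * fstar / e0) := by
    refine (le_of_eq ?_).trans (mul_le_mul_of_nonneg_right hlo'.le hc.le)
    rw [hD]; field_simp; ring
  rw [hx, abs_lt]
  constructor <;> linarith

theorem aux_moment {M : ℕ} (sbar : Fin M → ℝ) (S : ℝ) (hS : 0 < S)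
    (hsbarS : ∀ m, 0 ≤ sbar m ∧ sbar m ≤ S)
    {Ω : Type*} {m0 : MeasurableSpace Ω} (μ : Measure Ω) [IsProbabilityMeasure μ]
    (s : ℕ → Ω → Fin M → ℝ) (hmeas : ∀ n, Measurable (s n))
    (hD1 : ∀ n, 1 ≤ n →
      (μ[s n | ⨆ i ∈ Finset.Icc 1 (n-1), MeasurableSpace.comap (s i) inferInstance]
        =ᵐ[μ] (fun _ => sbar)))
    (hD2 : ∀ n, 1 ≤ n → ∀ᵐ ω ∂μ, ∀ m, 0 ≤ s n ω m ∧ s n ω m ≤ S) (m : Fin M) (n : ℕ) :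
    Integrable (fun ω => (∑ t ∈ Finset.Icc 1 n, (s t ω m - sbar m)) ^ 2) μ ∧
    ∫ ω, (∑ t ∈ Finset.Icc 1 n, (s t ω m - sbar m)) ^ 2 ∂μ ≤ n * S ^ 2 := by
  have hcm : ∀ t, Measurable fun ω => s t ω m - sbar m := fun t =>
    ((measurable_pi_apply m).comp (hmeas t)).sub_const _
  have hd : ∀ t, 1 ≤ t → ∀ᵐ ω ∂μ, |s t ω m - sbar m| ≤ S := by
    intro t ht
    filter_upwards [hD2 t ht] with ω h
    have := h m
    have := hsbarS m
    rw [abs_le]; constructor <;> linarith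
  have hXm : ∀ n, Measurable fun ω => ∑ t ∈ Finset.Icc 1 n, (s t ω m - sbar m) := fun n =>
    Finset.measurable_sum _ fun t _ => hcm t
  have hXb : ∀ n, ∀ᵐ ω ∂μ, |∑ t ∈ Finset.Icc 1 n, (s t ω m - sbar m)| ≤ n * S := by
    intro n
    have : ∀ᵐ ω ∂μ, ∀ t, 1 ≤ t → |s t ω m - sbar m| ≤ S := by
      rw [ae_all_iff]; intro t
      by_cases ht : 1 ≤ t
      · filter_upwards [hd t ht] with ω h _ using h
      · exact ae_of_all _ fun ω h => absurd h ht
    filter_upwards [this] with ω h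
    refine (Finset.abs_sum_le_sum_abs _ _).trans ?_
    refine (Finset.sum_le_sum fun t ht => h t (Finset.mem_Icc.1 ht).1).trans ?_
    simp
  have hbddint : ∀ (f : Ω → ℝ), Measurable f → ∀ B : ℝ, (∀ᵐ ω ∂μ, |f ω| ≤ B) → Integrable f μ :=
    fun f hf B hB => Integrable.of_bound hf.aestronglyMeasurable B hB
  have hX2 : ∀ n, Integrable (fun ω => (∑ t ∈ Finset.Icc 1 n, (s t ω m - sbar m)) ^ 2) μ := by
    intro n
    refine hbddint _ ((hXm n).pow_const 2) ((n * S) ^ 2) ?_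
    filter_upwards [hXb n] with ω h
    rw [abs_pow]; gcongr
  refine ⟨hX2 n, ?_⟩
  induction n with
  | zero => simp
  | succ k ih =>
    set X : Ω → ℝ := fun ω => ∑ t ∈ Finset.Icc 1 k, (s t ω m - sbar m) with hX
    set d : Ω → ℝ := fun ω => s (k + 1) ω m - sbar m with hdd
    have hXd : Integrable (fun ω => X ω * d ω) μ := by
      refine hbddint _ ((hXm k).mul (hcm _)) (k * S * S) ?_
      filter_upwards [hXb k, hd (k + 1) (by omega)] with ω h1 h2
      rw [abs_mul]; gcongr
    have hd2 : Integrable (fun ω => d ω ^ 2) μ := by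
      refine hbddint _ ((hcm _).pow_const 2) (S ^ 2) ?_
      filter_upwards [hd (k + 1) (by omega)] with ω h2
      rw [abs_pow]; gcongr
    have hdi : Integrable d μ := hbddint _ (hcm _) S (hd (k + 1) (by omega))
    have hsi : Integrable (s (k + 1)) μ := by
      refine Integrable.of_bound (hmeas _).aestronglyMeasurable S ?_
      filter_upwards [hD2 (k + 1) (by omega)] with ω h
      rw [pi_norm_le_iff_of_nonneg hS.le]
      intro j
      rw [Real.norm_eq_abs, abs_le]; constructor <;> linarith [(h j).1, (h j).2]
    set F : MeasurableSpace Ω := ⨆ i ∈ Finset.Icc 1 k, MeasurableSpace.comap (s i) inferInstance with hF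
    have hFle : F ≤ m0 := by
      refine iSup₂_le fun i _ => (hmeas i).comap_le
    have hcond : μ[d | F] =ᵐ[μ] 0 := by
      have h1 := hD1 (k + 1) (by omega)
      rw [Nat.add_sub_cancel, ← hF] at h1
      have h2 := (ContinuousLinearMap.proj (R := ℝ) (φ := fun _ : Fin M => ℝ) m).comp_condExp_add_const_comm
        hFle hsi (-sbar m)
      have h3 : (fun y => (ContinuousLinearMap.proj (R := ℝ) (φ := fun _ : Fin M => ℝ) m) (s (k + 1) y) + -sbar m) = d := by
        ext y; simp [hdd, sub_eq_add_neg]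
      rw [h3] at h2
      filter_upwards [h1, h2] with ω h1 h2
      rw [← h2, h1]; simp
    have hXF : StronglyMeasurable[F] X := by
      refine Measurable.stronglyMeasurable ?_
      refine Finset.measurable_sum _ fun t ht => ?_
      have : Measurable[F] (s t) := by
        rw [measurable_iff_comap_le]
        exact le_iSup₂_of_le t ht le_rfl
      exact ((measurable_pi_apply m).comp this).sub_const _
    have hzero : ∫ ω, X ω * d ω ∂μ = 0 := by
      have h1 : μ[X * d | F] =ᵐ[μ] X * μ[d | F] :=
        condExp_mul_of_stronglyMeasurable_left hXF hXd hdi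
      have h2 := integral_condExp (μ := μ) (f := X * d) hFle
      have h3 : ∫ ω, (X * d) ω ∂μ = 0 := by
        rw [← h2]
        refine integral_eq_zero_of_ae ?_
        filter_upwards [h1, hcond] with ω h1 h2
        rw [h1]; simp [h2]
      exact h3
    have hd2le : ∫ ω, d ω ^ 2 ∂μ ≤ S ^ 2 := by
      have : ∫ ω, d ω ^ 2 ∂μ ≤ ∫ ω, S ^ 2 ∂μ := by
        refine integral_mono_ae hd2 (integrable_const _) ?_
        filter_upwards [hd (k + 1) (by omega)] with ω h2
        exact sq_le_sq' (abs_le.1 h2).1 (abs_le.1 h2).2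
      simpa using this
    have hexp : (fun ω => (∑ t ∈ Finset.Icc 1 (k + 1), (s t ω m - sbar m)) ^ 2)
        = fun ω => X ω ^ 2 + 2 * (X ω * d ω) + d ω ^ 2 := by
      ext ω
      rw [Finset.sum_Icc_succ_top (by omega)]
      simp only [hX, hdd]; ring
    have hX2k : Integrable (fun ω => X ω ^ 2) μ := hX2 k
    have hA : Integrable (fun ω => X ω ^ 2 + 2 * (X ω * d ω)) μ := hX2k.add (hXd.const_mul 2)
    have ih' : ∫ ω, X ω ^ 2 ∂μ ≤ k * S ^ 2 := ih
    rw [hexp, integral_add hA hd2, integral_add hX2k (hXd.const_mul 2),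
      integral_const_mul, hzero]
    push_cast
    linarith

theorem aux_lln {M : ℕ} (sbar : Fin M → ℝ) (S : ℝ) (hS : 0 < S)
    (hsbarS : ∀ m, 0 ≤ sbar m ∧ sbar m ≤ S)
    {Ω : Type*} {m0 : MeasurableSpace Ω} (μ : Measure Ω) [IsProbabilityMeasure μ]
    (s : ℕ → Ω → Fin M → ℝ) (hmeas : ∀ n, Measurable (s n))
    (hD1 : ∀ n, 1 ≤ n →
      (μ[s n | ⨆ i ∈ Finset.Icc 1 (n-1), MeasurableSpace.comap (s i) inferInstance]
        =ᵐ[μ] (fun _ => sbar)))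
    (hD2 : ∀ n, 1 ≤ n → ∀ᵐ ω ∂μ, ∀ m, 0 ≤ s n ω m ∧ s n ω m ≤ S) (m : Fin M) :
    ∀ᵐ ω ∂μ, Tendsto (fun n : ℕ => (∑ t ∈ Finset.Icc 1 n, s t ω m) / n) atTop (nhds (sbar m)) := by
  set X : ℕ → Ω → ℝ := fun n ω => ∑ t ∈ Finset.Icc 1 n, (s t ω m - sbar m) with hX
  have hXm : ∀ n, Measurable (X n) := fun n =>
    Finset.measurable_sum _ fun t _ => ((measurable_pi_apply m).comp (hmeas t)).sub_const _
  have hmom := aux_moment sbar S hS hsbarS μ s hmeas hD1 hD2 m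
  have hsum : Summable (fun k : ℕ => S ^ 2 / (k : ℝ) ^ 2) := by
    have := (Real.summable_one_div_nat_pow (p := 2)).2 (by norm_num)
    simpa [div_eq_mul_inv] using this.mul_left (S ^ 2)
  have hL : ∀ k : ℕ, ∫⁻ ω, ENNReal.ofReal ((X (k ^ 2) ω / (k ^ 2 : ℕ)) ^ 2) ∂μ
      ≤ ENNReal.ofReal (S ^ 2 / (k : ℝ) ^ 2) := by
    intro k
    have h1 : Integrable (fun ω => (X (k ^ 2) ω / (k ^ 2 : ℕ)) ^ 2) μ := by
      simp only [div_pow]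
      exact (hmom (k ^ 2)).1.div_const _
    rw [← ofReal_integral_eq_lintegral_ofReal h1 (ae_of_all _ fun ω => sq_nonneg _)]
    refine ENNReal.ofReal_le_ofReal ?_
    simp only [div_pow]
    rw [integral_div]
    rcases Nat.eq_zero_or_pos k with h | h
    · subst h; simp
    have hk : (0 : ℝ) < k := by exact_mod_cast h
    rw [div_le_div_iff₀ (by positivity) (by positivity)]
    have := mul_le_mul_of_nonneg_right (hmom (k ^ 2)).2 (sq_nonneg (k : ℝ))
    push_cast at this ⊢
    calc _ ≤ _ := this
      _ = _ := by ring
  have hfin : ∫⁻ ω, ∑' k : ℕ, ENNReal.ofReal ((X (k ^ 2) ω / (k ^ 2 : ℕ)) ^ 2) ∂μ ≠ ⊤ := by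
    rw [lintegral_tsum fun k =>
      (((hXm (k ^ 2)).div_const _).pow_const 2).ennreal_ofReal.aemeasurable]
    refine ne_top_of_le_ne_top ?_ (ENNReal.tsum_le_tsum hL)
    exact hsum.tsum_ofReal_ne_top
  have hae := ae_lt_top' (Measurable.ennreal_tsum fun k =>
      (((hXm (k ^ 2)).div_const _).pow_const 2).ennreal_ofReal).aemeasurable hfin
  have hD2' : ∀ᵐ ω ∂μ, ∀ n, 1 ≤ n → 0 ≤ s n ω m := by
    rw [ae_all_iff]; intro t
    by_cases ht : 1 ≤ t
    · filter_upwards [hD2 t ht] with ω h _ using (h m).1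
    · exact ae_of_all _ fun ω h => absurd h ht
  filter_upwards [hae, hD2'] with ω h1 h2
  have hz : Tendsto (fun k : ℕ => X (k ^ 2) ω / (k ^ 2 : ℕ)) atTop (nhds 0) := by
    have h3 := ENNReal.tendsto_atTop_zero_of_tsum_ne_top h1.ne
    have h4 := (ENNReal.tendsto_toReal ENNReal.zero_ne_top).comp h3
    have h5 : Tendsto (fun k : ℕ => (X (k ^ 2) ω / (k ^ 2 : ℕ)) ^ 2) atTop (nhds 0) := by
      refine (h4.congr fun k => ?_)
      simp only [Function.comp]
      rw [ENNReal.toReal_ofReal (sq_nonneg _)]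
    have h6 := h5.sqrt
    simp only [Real.sqrt_sq_eq_abs, Real.sqrt_zero] at h6
    exact (tendsto_zero_iff_abs_tendsto_zero _).2 h6
  refine tendsto_div_of_monotone_of_exists_subseq_tendsto_div
    (fun n => ∑ t ∈ Finset.Icc 1 n, s t ω m) (sbar m) ?_ ?_
  · refine monotone_nat_of_le_succ fun n => ?_
    rw [Finset.sum_Icc_succ_top (by omega)]
    linarith [h2 (n + 1) (by omega)]
  · intro a ha
    refine ⟨fun k => k ^ 2, ?_, tendsto_pow_atTop (by norm_num), ?_⟩
    · have hlim : Tendsto (fun k : ℕ => (1 + 1 / (k : ℝ)) ^ 2) atTop (nhds ((1 + 0) ^ 2)) :=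
        (tendsto_one_div_atTop_nhds_zero_nat.const_add 1).pow 2
      filter_upwards [hlim.eventually_lt_const (by simpa using ha), eventually_gt_atTop 0] with k h hk
      have hk' : (0 : ℝ) < k := by exact_mod_cast hk
      push_cast
      have : ((k : ℝ) + 1) ^ 2 = (1 + 1 / (k : ℝ)) ^ 2 * k ^ 2 := by field_simp
      rw [this]; gcongr
    · have := hz.add_const (sbar m)
      rw [zero_add] at this
      refine this.congr' ?_
      filter_upwards [eventually_gt_atTop 0] with k hk
      have hk' : (0 : ℝ) < k := by exact_mod_cast hk
      simp only [hX, Finset.sum_sub_distrib, Finset.sum_const, Nat.card_Icc, nsmul_eq_mul]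
      push_cast
      field_simp
      simp

theorem aux_meas {Ω : Type*} {m0 : MeasurableSpace Ω} (μ : Measure Ω) [IsProbabilityMeasure μ]
    (A : ℝ → Set Ω) (h : ∀ᵐ ω ∂μ, ∀ᶠ e in atTop, ω ∈ A e) :
    Tendsto (fun e => μ (A e)) atTop (nhds 1) := by
  let B : ℝ → Set Ω := fun e => {ω | ∀ e' ≥ e, ω ∈ A e'}
  have hB : Monotone B := fun a b hab ω hω e' he' => hω e' (hab.trans he')
  have h1 : Tendsto (fun e => μ (B e)) atTop (nhds (μ (⋃ e, B e))) :=
    tendsto_measure_iUnion_atTop hB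
  have h2 : μ (⋃ e, B e) = 1 := by
    rw [← measure_univ (μ := μ)]
    refine measure_congr ?_
    filter_upwards [h] with ω hω
    obtain ⟨e, he⟩ := eventually_atTop.1 hω
    refine eq_iff_iff.2 ⟨fun _ => trivial, fun _ => Set.mem_iUnion.2 ⟨e, he⟩⟩
  rw [h2] at h1
  exact tendsto_of_tendsto_of_tendsto_of_le_of_le h1 tendsto_const_nhds
    (fun e => measure_mono fun ω hω => hω e le_rfl) (fun e => prob_le_one)

/-- If the optimal LP value `f* > 0` and (D1), (D2) hold, then for every `δ > 0`,
`P(N_opt < ∞ and |N_opt/(e0/(τ f*)) − 1| < δ) → 1` as `e0 → ∞`. -/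
theorem optimal_lifetime_ratio_of_fstar_pos
    {M : ℕ} (hM : 2 ≤ M)
    (τ : ℝ) (hτ : 0 < τ)
    (C : Matrix (Fin M) (Fin M) ℝ) (hC : ∀ i j, 0 ≤ C i j)
    (sbar : Fin M → ℝ) (S : ℝ) (hS : 0 < S)
    (hsbarS : ∀ m, 0 ≤ sbar m ∧ sbar m ≤ S)
    (fstar : ℝ) (hfstar : 0 < fstar)
    -- `f*` is attained by a feasible point of the auxiliary LP (with `R = C − s̄·uᵀ`)
    (hattain : ∃ vbar : Fin M → ℝ, (∀ m, 0 ≤ vbar m) ∧ (∑ m, vbar m) = 1 ∧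
      ∀ m, (C - Matrix.of fun i _ => sbar i).mulVec vbar m ≤ fstar)
    -- and is optimal for it
    (hopt : ∀ (vbar : Fin M → ℝ) (f : ℝ), (∀ m, 0 ≤ vbar m) → (∑ m, vbar m) = 1 →
      (∀ m, (C - Matrix.of fun i _ => sbar i).mulVec vbar m ≤ f) → fstar ≤ f)
    {Ω : Type*} {m0 : MeasurableSpace Ω} (μ : Measure Ω) [IsProbabilityMeasure μ]
    (s : ℕ → Ω → Fin M → ℝ) (hmeas : ∀ n, Measurable (s n))
    -- (D1): constant conditional expectation given the past
    (hD1 : ∀ n, 1 ≤ n →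
      (μ[s n | ⨆ i ∈ Finset.Icc 1 (n-1), MeasurableSpace.comap (s i) inferInstance]
        =ᵐ[μ] (fun _ => sbar)))
    -- (D2): boundedness
    (hD2 : ∀ n, 1 ≤ n → ∀ᵐ ω ∂μ, ∀ m, 0 ≤ s n ω m ∧ s n ω m ≤ S)
    (δ : ℝ) (hδ : 0 < δ) :
    Tendsto (fun e0 : ℝ => μ {ω | Nopt τ C e0 (fun t => s t ω) ≠ ⊤ ∧
        |((Nopt τ C e0 (fun t => s t ω)).toNat : ℝ) / (e0 / (τ * fstar)) - 1| < δ})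
      atTop (nhds 1) := by
  refine aux_meas μ _ ?_
  have h := ae_all_iff.2 (aux_lln sbar S hS hsbarS μ s hmeas hD1 hD2)
  filter_upwards [h] with ω hω
  exact aux_det hM τ hτ C hC sbar fstar hfstar hattain hopt (fun t => s t ω) hω δ hδ
end

section
/- Suppose assumptions (D1) and (D2) on the recharge rates hold, and in addition (D3) C_{ij} − s̄_i < 0 for all i ≠ j, and (D4) C is invertible with (Cᵀ)⁻¹·u > 0 componentwise. If the optimal value f* of the auxiliary linear program satisfies f* < 0, then for every constant K > 0 and every HEF process, lim_{e0 → ∞} P(N_hef > K·e0) = 1. -/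
open MeasureTheory Filter Finset Matrix

/-- The lifetime of a given decision sequence: the smallest `n ≥ 1` such that some
component of `e^(n+1)` is negative, `∞` if no such `n` exists. -/
noncomputable def lifetime {M : ℕ} (τ : ℝ) (C : Matrix (Fin M) (Fin M) ℝ)
    (e0 : ℝ) (s v : ℕ → Fin M → ℝ) : ℕ∞ :=
  sInf {x : ℕ∞ | ∃ n : ℕ, x = (n : ℕ∞) ∧ 1 ≤ n ∧ ∃ m, energyVec τ C e0 s v (n+1) m < 0}

theorem hef_doob {Ω : Type*} {m0 : MeasurableSpace Ω} (μ : Measure Ω) [IsProbabilityMeasure μ]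
    (F : Filtration ℕ m0) (X : ℕ → Ω → ℝ) (S : ℝ) (hS : 0 < S)
    (hX : ∀ n, StronglyMeasurable[F (n+1)] (X (n+1)))
    (hb : ∀ n, ∀ᵐ ω ∂μ, |X (n+1) ω| ≤ S)
    (hc : ∀ n, μ[X (n+1) | F n] =ᵐ[μ] 0)
    (N : ℕ) (a : ℝ) (ha : 0 < a) :
    μ {ω | ∃ n ≤ N, a ≤ |∑ t ∈ Finset.Icc 1 n, X t ω|} ≤ ENNReal.ofReal (N * S^2 / a^2) := by
  set Y : ℕ → Ω → ℝ := fun n ω => ∑ t ∈ Finset.Icc 1 n, X t ω with hY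
  have hY0 : Y 0 = 0 := by funext ω; simp [hY]
  have hYs : ∀ n ω, Y (n+1) ω = Y n ω + X (n+1) ω := by
    intro n ω
    simp only [hY]
    rw [Finset.sum_Icc_succ_top (by omega)]
  have hYm : ∀ n, StronglyMeasurable[F n] (Y n) := by
    intro n
    induction n with
    | zero => rw [hY0]; exact stronglyMeasurable_zero
    | succ n ih =>
      have : Y (n+1) = Y n + X (n+1) := by funext ω; simp [hYs]
      rw [this]
      exact (ih.mono (F.mono (Nat.le_succ n))).add (hX n)
  have hYb : ∀ n, ∀ᵐ ω ∂μ, ‖Y n ω‖ ≤ n * S := by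
    intro n
    induction n with
    | zero => simp [hY0]
    | succ n ih =>
      filter_upwards [ih, hb n] with ω h1 h2
      rw [hYs]
      have := abs_add_le (Y n ω) (X (n+1) ω)
      rw [Real.norm_eq_abs] at *
      push_cast
      linarith
  have hXi : ∀ n, Integrable (X (n+1)) μ := fun n =>
    Integrable.of_bound ((hX n).mono (F.le _)).aestronglyMeasurable S
      (by filter_upwards [hb n] with ω h using by simpa using h)
  have hYXi : ∀ n, Integrable (Y n * X (n+1)) μ := fun n =>
    (hXi n).bdd_mul ((hYm n).mono (F.le _)).aestronglyMeasurable (hYb n)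
  have hX2i : ∀ n, Integrable (fun ω => X (n+1) ω ^ 2) μ := fun n =>
    Integrable.of_bound (((hX n).mono (F.le _)).pow 2).aestronglyMeasurable (S^2)
      (by
        filter_upwards [hb n] with ω h
        rw [norm_pow, Real.norm_eq_abs]
        exact pow_le_pow_left₀ (abs_nonneg _) h 2)
  have hY2i : ∀ n, Integrable (fun ω => Y n ω ^ 2) μ := fun n =>
    Integrable.of_bound (((hYm n).mono (F.le _)).pow 2).aestronglyMeasurable ((n * S)^2)
      (by
        filter_upwards [hYb n] with ω h
        rw [norm_pow]
        exact pow_le_pow_left₀ (norm_nonneg _) h 2)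
  have hYXc : ∀ n, μ[Y n * X (n+1) | F n] =ᵐ[μ] 0 := by
    intro n
    filter_upwards [condExp_mul_of_stronglyMeasurable_left (hYm n) (hYXi n) (hXi n), hc n]
      with ω h1 h2
    rw [h1, Pi.mul_apply, h2]; simp
  have hYX0 : ∀ n, ∫ ω, (Y n * X (n+1)) ω ∂μ = 0 := by
    intro n
    rw [← integral_condExp (F.le n), integral_congr_ae (hYXc n)]
    simp
  have hsub : Submartingale (fun n ω => Y n ω ^ 2) F μ := by
    refine submartingale_of_condExp_sub_nonneg_nat (fun n => (hYm n).pow 2) hY2i ?_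
    intro n
    have e1 : (fun ω => Y (n+1) ω ^ 2) - (fun ω => Y n ω ^ 2)
        = (2:ℝ) • (Y n * X (n+1)) + fun ω => X (n+1) ω ^ 2 := by
      funext ω
      simp only [Pi.sub_apply, Pi.add_apply, Pi.smul_apply, Pi.mul_apply, smul_eq_mul, hYs]
      ring
    have e2 : 0 ≤ᵐ[μ] μ[fun ω => X (n+1) ω ^ 2 | F n] :=
      condExp_nonneg (ae_of_all _ fun ω => sq_nonneg _)
    change 0 ≤ᵐ[μ] μ[(fun ω => Y (n+1) ω ^ 2) - (fun ω => Y n ω ^ 2) | F n]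
    rw [e1]
    filter_upwards [condExp_add ((hYXi n).smul (2:ℝ)) (hX2i n) (F n),
      condExp_smul (2:ℝ) (Y n * X (n+1)) (F n) (μ := μ), hYXc n, e2] with ω h1 h2 h3 h4
    rw [h1, Pi.add_apply, h2, Pi.smul_apply, h3]
    simpa using h4
  have hvar : ∀ n : ℕ, ∫ ω, Y n ω ^ 2 ∂μ ≤ n * S ^ 2 := by
    intro n
    induction n with
    | zero => simp [hY0]
    | succ n ih =>
      have e1 : ∀ ω, Y (n+1) ω ^ 2 = Y n ω ^ 2 + (2 * (Y n * X (n+1)) ω + X (n+1) ω ^ 2) := by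
        intro ω
        simp only [Pi.mul_apply, hYs]
        ring
      have e2 : ∫ ω, X (n+1) ω ^ 2 ∂μ ≤ S ^ 2 := by
        have : ∫ ω, X (n+1) ω ^ 2 ∂μ ≤ ∫ ω, S ^ 2 ∂μ := by
          refine integral_mono_ae (hX2i n) (integrable_const _) ?_
          filter_upwards [hb n] with ω h
          rw [← sq_abs]
          exact pow_le_pow_left₀ (abs_nonneg _) h 2
        simpa using this
      simp_rw [e1]
      rw [integral_add (hY2i n) (g := fun ω => 2 * (Y n * X (n+1)) ω + X (n+1) ω ^ 2)
          (((hYXi n).const_mul 2).add (hX2i n)),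
        integral_add ((hYXi n).const_mul 2) (hX2i n), integral_const_mul, hYX0]
      push_cast
      linarith
  have hmax := maximal_ineq hsub (fun n ω => sq_nonneg _) (ε := (⟨a^2, sq_nonneg a⟩ : NNReal)) N
  set B : Set Ω := {ω | ((⟨a^2, sq_nonneg a⟩ : NNReal) : ℝ) ≤
    (range (N + 1)).sup' nonempty_range_add_one fun k => Y k ω ^ 2} with hB
  have hBsub : {ω | ∃ n ≤ N, a ≤ |Y n ω|} ⊆ B := by
    rintro ω ⟨n, hn, h⟩
    simp only [hB, Set.mem_ofPred_eq]
    refine le_trans ?_ (Finset.le_sup' (fun k => Y k ω ^ 2)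
      (Finset.mem_range.2 (Nat.lt_succ_of_le hn)))
    change a ^ 2 ≤ Y n ω ^ 2
    rw [← sq_abs (Y n ω)]
    exact pow_le_pow_left₀ ha.le h 2
  refine (measure_mono hBsub).trans ?_
  have hI : ∫ ω in B, Y N ω ^ 2 ∂μ ≤ N * S ^ 2 :=
    (setIntegral_le_integral (hY2i N) (ae_of_all _ fun ω => sq_nonneg _)).trans (hvar N)
  have h2 := hmax.trans (ENNReal.ofReal_le_ofReal hI)
  have ha2 : (0:ℝ) < a ^ 2 := by positivity
  rw [ENNReal.ofReal_div_of_pos ha2, ENNReal.le_div_iff_mul_le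
    (Or.inl (by simpa using ha.ne')) (Or.inl ENNReal.ofReal_ne_top), mul_comm]
  rw [ENNReal.ofReal_eq_coe_nnreal (sq_nonneg a)]
  exact h2

theorem hef_decision {M : ℕ} {x : Fin M → ℝ} (hx : IsDecision x) : ∃ j, x = Pi.single j 1 := by
  obtain ⟨h01, hsum⟩ := hx
  have : ∃ j, x j = 1 := by
    by_contra hcon
    push Not at hcon
    have : ∀ m, x m = 0 := fun m => (h01 m).resolve_right (hcon m)
    simp [this] at hsum
  obtain ⟨j, hj⟩ := this
  refine ⟨j, ?_⟩
  have hnn : ∀ m, 0 ≤ x m := fun m => by rcases h01 m with h | h <;> simp [h]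
  funext m
  by_cases hm : m = j
  · subst hm; simp [hj]
  · rw [Pi.single_eq_of_ne hm]
    have h1 := Finset.add_sum_erase Finset.univ x (Finset.mem_univ j)
    have h2 := Finset.single_le_sum (f := x) (s := Finset.univ.erase j)
      (fun i _ => hnn i) (Finset.mem_erase.2 ⟨hm, Finset.mem_univ m⟩)
    linarith [hnn m]

theorem hef_energy_succ {M : ℕ} (τ : ℝ) (C : Matrix (Fin M) (Fin M) ℝ)
    (e0 : ℝ) (s v : ℕ → Fin M → ℝ) (n : ℕ) (j : Fin M) (hj : v (n+1) = Pi.single j 1)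
    (m : Fin M) :
    energyVec τ C e0 s v (n+1) m = energyVec τ C e0 s v n m + τ * s (n+1) m - τ * C m j := by
  unfold energyVec
  rw [Finset.sum_Icc_succ_top (by omega), Finset.sum_Icc_succ_top (by omega), hj,
    Matrix.mulVec_add]
  simp
  ring

theorem hef_det {M : ℕ} (τ : ℝ) (hτ : 0 < τ)
    (C : Matrix (Fin M) (Fin M) ℝ)
    (sbar : Fin M → ℝ) (hsbar : ∀ m, 0 ≤ sbar m)
    (hD3 : ∀ i j, i ≠ j → C i j - sbar i < 0)
    (w : Fin M → ℝ) (hw : ∀ m, 0 < w m) (hwC : ∀ j, ∑ m, w m * C m j = 1)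
    (hws : 1 ≤ ∑ m, w m * sbar m)
    (e0 : ℝ) (s v : ℕ → Fin M → ℝ)
    (hv : ∀ n, IsDecision (v n))
    (hhef : ∀ n m, v (n+1) m = 1 → ∀ l, energyVec τ C e0 s v n l ≤ energyVec τ C e0 s v n m)
    (N : ℕ) (b : ℝ) (hb : 0 ≤ b)
    (hD : ∀ n ≤ N, ∀ m, |∑ t ∈ Finset.Icc 1 n, (s t m - sbar m)| ≤ b)
    (hlarge : ∀ m, τ * C m m + 3 * τ * b ≤ e0) (hCnn : ∀ m, 0 ≤ C m m) :
    ∀ n ≤ N, ∀ m, 0 ≤ energyVec τ C e0 s v n m := by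
  set D : ℕ → Fin M → ℝ := fun n m => ∑ t ∈ Finset.Icc 1 n, (s t m - sbar m) with hDdef
  have hD0 : ∀ m, D 0 m = 0 := by intro m; simp [hDdef]
  have hDs : ∀ n m, D (n+1) m = D n m + (s (n+1) m - sbar m) := by
    intro n m
    simp only [hDdef]
    rw [Finset.sum_Icc_succ_top (by omega)]
  have he0 : ∀ m, energyVec τ C e0 s v 0 m = e0 := by intro m; simp [energyVec]
  have hW : ∀ n, e0 * ∑ m, w m + τ * ∑ m, w m * D n m ≤
      ∑ m, w m * energyVec τ C e0 s v n m := by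
    intro n
    induction n with
    | zero => simp [hD0, he0, Finset.mul_sum, mul_comm]
    | succ n ih =>
      obtain ⟨j, hj⟩ := hef_decision (hv (n+1))
      have e1 : ∑ m, w m * energyVec τ C e0 s v (n+1) m =
          ∑ m, w m * energyVec τ C e0 s v n m + τ * ∑ m, w m * s (n+1) m
            - τ * ∑ m, w m * C m j := by
        rw [Finset.mul_sum, Finset.mul_sum, ← Finset.sum_add_distrib, ← Finset.sum_sub_distrib]
        refine Finset.sum_congr rfl fun m _ => ?_
        rw [hef_energy_succ τ C e0 s v n j hj]; ring
      have e2 : ∑ m, w m * D (n+1) m = ∑ m, w m * D n m + ∑ m, w m * s (n+1) m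
            - ∑ m, w m * sbar m := by
        rw [← Finset.sum_add_distrib, ← Finset.sum_sub_distrib]
        refine Finset.sum_congr rfl fun m _ => ?_
        rw [hDs]; ring
      rw [e1, e2, hwC]
      nlinarith
  have hmaxe : ∀ n ≤ N, ∀ j, v (n+1) j = 1 → e0 - τ * b ≤ energyVec τ C e0 s v n j := by
    intro n hn j hj
    have h1 := hhef n j hj
    have hwpos : 0 < ∑ m, w m := Finset.sum_pos (fun m _ => hw m) ⟨j, Finset.mem_univ j⟩
    have h2 : ∑ m, w m * energyVec τ C e0 s v n m ≤
        (∑ m, w m) * energyVec τ C e0 s v n j := by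
      rw [Finset.sum_mul]
      exact Finset.sum_le_sum fun m _ => mul_le_mul_of_nonneg_left (h1 m) (hw m).le
    have h3 : - ((∑ m, w m) * b) ≤ ∑ m, w m * D n m := by
      rw [Finset.sum_mul, ← Finset.sum_neg_distrib]
      refine Finset.sum_le_sum fun m _ => ?_
      have := (abs_le.1 (hD n hn m)).1
      have := mul_le_mul_of_nonneg_left this (hw m).le
      linarith
    have h4 := hW n
    have h5 := mul_le_mul_of_nonneg_left h3 hτ.le
    refine le_of_mul_le_mul_left ?_ hwpos
    linarith
  have hmain : ∀ n ≤ N, ∀ m, e0 - 2 * τ * b - τ * C m m ≤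
      energyVec τ C e0 s v n m - τ * D n m := by
    intro n
    induction n with
    | zero =>
      intro _ m
      rw [he0, hD0]
      have := mul_nonneg hτ.le (hCnn m)
      have := mul_nonneg hτ.le hb
      linarith
    | succ n ih =>
      intro hn m
      obtain ⟨j, hj⟩ := hef_decision (hv (n+1))
      rw [hef_energy_succ τ C e0 s v n j hj, hDs]
      by_cases hmj : m = j
      · subst hmj
        have h1 := hmaxe n (by omega) m (by simp [hj])
        have h2 := mul_le_mul_of_nonneg_left (abs_le.1 (hD n (by omega) m)).2 hτ.le
        have h3 := mul_nonneg hτ.le (hsbar m)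
        change τ * D n m ≤ τ * b at h2
        linarith
      · have h1 := ih (by omega) m
        have h2 := mul_nonneg hτ.le (sub_nonneg.2 (sub_neg.1 (hD3 m j hmj)).le)
        linarith
  intro n hn m
  have h1 := hmain n hn m
  have h2 := mul_le_mul_of_nonneg_left (abs_le.1 (hD n hn m)).1 hτ.le
  change τ * (-b) ≤ τ * D n m at h2
  have := hlarge m
  linarith

theorem hef_lifetime_gt {M : ℕ} (τ : ℝ) (C : Matrix (Fin M) (Fin M) ℝ)
    (e0 : ℝ) (s v : ℕ → Fin M → ℝ) (x : ℝ)
    (h : ∀ n ≤ ⌊x⌋₊ + 1, ∀ m, 0 ≤ energyVec τ C e0 s v n m) :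
    lifetime τ C e0 s v = ⊤ ∨ x < ((lifetime τ C e0 s v).toNat : ℝ) := by
  by_cases ht : lifetime τ C e0 s v = ⊤
  · exact Or.inl ht
  right
  have hle : ((⌊x⌋₊ + 1 : ℕ) : ℕ∞) ≤ lifetime τ C e0 s v := by
    refine le_sInf ?_
    rintro y ⟨n, rfl, hn, m, hm⟩
    by_contra hcon
    have : n < ⌊x⌋₊ + 1 := by
      rw [not_le] at hcon
      exact_mod_cast hcon
    exact absurd (h (n+1) (by omega) m) (not_le.2 hm)
  have h2 : ⌊x⌋₊ + 1 ≤ (lifetime τ C e0 s v).toNat := by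
    have := ENat.toNat_le_toNat hle ht
    rwa [ENat.toNat_coe] at this
  calc x < ⌊x⌋₊ + 1 := Nat.lt_floor_add_one x
    _ ≤ _ := by exact_mod_cast h2

/-- If `f* < 0` and (D1)–(D4) hold, then for any constant `K > 0` and any HEF process,
`P(N_hef > K·e0) → 1` as `e0 → ∞`. -/
theorem hef_lifetime_exceeds_of_fstar_neg
    {M : ℕ} (hM : 2 ≤ M)
    (τ : ℝ) (hτ : 0 < τ)
    (C : Matrix (Fin M) (Fin M) ℝ) (hC : ∀ i j, 0 ≤ C i j)
    (sbar : Fin M → ℝ) (S : ℝ) (hS : 0 < S)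
    (hsbarS : ∀ m, 0 ≤ sbar m ∧ sbar m ≤ S)
    (fstar : ℝ) (hfstar : fstar < 0)
    -- `f*` is attained by a feasible point of the auxiliary LP (with `R = C − s̄·uᵀ`)
    (hattain : ∃ vbar : Fin M → ℝ, (∀ m, 0 ≤ vbar m) ∧ (∑ m, vbar m) = 1 ∧
      ∀ m, (C - Matrix.of fun i _ => sbar i).mulVec vbar m ≤ fstar)
    -- and is optimal for it
    (hopt : ∀ (vbar : Fin M → ℝ) (f : ℝ), (∀ m, 0 ≤ vbar m) → (∑ m, vbar m) = 1 →
      (∀ m, (C - Matrix.of fun i _ => sbar i).mulVec vbar m ≤ f) → fstar ≤ f)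
    -- (D3): every passive BS gains energy in expectation
    (hD3 : ∀ i j, i ≠ j → C i j - sbar i < 0)
    -- (D4): `C` is invertible with `(Cᵀ)⁻¹·u > 0` componentwise
    (hCdet : IsUnit C.det)
    (hD4 : ∀ m, 0 < (Matrix.transpose C)⁻¹.mulVec (fun _ => (1 : ℝ)) m)
    {Ω : Type*} {m0 : MeasurableSpace Ω} (μ : Measure Ω) [IsProbabilityMeasure μ]
    (s : ℕ → Ω → Fin M → ℝ) (hmeas : ∀ n, Measurable (s n))
    -- (D1): constant conditional expectation given the past
    (hD1 : ∀ n, 1 ≤ n →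
      (μ[s n | ⨆ i ∈ Finset.Icc 1 (n-1), MeasurableSpace.comap (s i) inferInstance]
        =ᵐ[μ] (fun _ => sbar)))
    -- (D2): boundedness
    (hD2 : ∀ n, 1 ≤ n → ∀ᵐ ω ∂μ, ∀ m, 0 ≤ s n ω m ∧ s n ω m ≤ S)
    (K : ℝ) (hK : 0 < K)
    -- an HEF process:
    (v : ℕ → Ω → Fin M → ℝ)
    (hvdec : ∀ n ω, IsDecision (v n ω))
    -- each `v^(n)` is measurable w.r.t. `σ(s^(1),…,s^(n−1))`
    (hvmeas : ∀ n, 1 ≤ n →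
      Measurable[⨆ i ∈ Finset.Icc 1 (n-1), MeasurableSpace.comap (s i) inferInstance] (v n))
    -- highest-energy-first selection rule
    (hvhef : ∀ (e0 : ℝ) (n : ℕ), 1 ≤ n → ∀ (ω : Ω) (m : Fin M), v n ω m = 1 →
      ∀ l, energyVec τ C e0 (fun t => s t ω) (fun t => v t ω) (n-1) l ≤
           energyVec τ C e0 (fun t => s t ω) (fun t => v t ω) (n-1) m) :
    Tendsto (fun e0 : ℝ => μ {ω |
        lifetime τ C e0 (fun t => s t ω) (fun t => v t ω) = ⊤ ∨
        K * e0 < ((lifetime τ C e0 (fun t => s t ω) (fun t => v t ω)).toNat : ℝ)})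
      atTop (nhds 1) := by
  set w : Fin M → ℝ := (Matrix.transpose C)⁻¹.mulVec (fun _ => (1 : ℝ)) with hw
  have hwC : ∀ j, ∑ m, w m * C m j = 1 := by
    intro j
    have h1 : (Matrix.transpose C).mulVec w = fun _ => (1:ℝ) := by
      rw [hw, Matrix.mulVec_mulVec, Matrix.mul_nonsing_inv _ (by rwa [Matrix.det_transpose]),
        Matrix.one_mulVec]
    have h2 := congrFun h1 j
    simp only [Matrix.mulVec, dotProduct, Matrix.transpose_apply] at h2
    rw [← h2]
    exact Finset.sum_congr rfl fun m _ => mul_comm _ _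
  have hws : 1 ≤ ∑ m, w m * sbar m := by
    obtain ⟨x, hx0, hx1, hx⟩ := hattain
    have h1 : ∀ m, ∑ j, (C m j - sbar m) * x j ≤ 0 := fun m => (hx m).trans hfstar.le
    have h2 : ∑ m, w m * ∑ j, (C m j - sbar m) * x j ≤ 0 :=
      Finset.sum_nonpos fun m _ => mul_nonpos_of_nonneg_of_nonpos (hD4 m).le (h1 m)
    have h3 : ∑ m, w m * ∑ j, (C m j - sbar m) * x j = 1 - ∑ m, w m * sbar m := by
      have e1 : ∀ m, w m * ∑ j, (C m j - sbar m) * x j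
          = ∑ j, (w m * C m j) * x j - w m * sbar m := by
        intro m
        simp_rw [sub_mul, Finset.sum_sub_distrib]
        rw [← Finset.mul_sum (f := x), hx1, mul_sub, Finset.mul_sum]
        simp [mul_assoc]
      simp_rw [e1]
      rw [Finset.sum_sub_distrib, Finset.sum_comm]
      simp_rw [← Finset.sum_mul, hwC]
      simp [hx1]
    linarith
  let F : Filtration ℕ m0 :=
    { seq := fun n => ⨆ i ∈ Finset.Icc 1 n, MeasurableSpace.comap (s i) inferInstance
      mono' := fun a b hab => biSup_mono fun i hi => Finset.Icc_subset_Icc le_rfl hab hi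
      le' := fun n => iSup₂_le fun i _ => (hmeas i).comap_le }
  have hbad : ∀ (m : Fin M) (N : ℕ) (a : ℝ), 0 < a →
      μ {ω | ∃ n ≤ N, a ≤ |∑ t ∈ Finset.Icc 1 n, (s t ω m - sbar m)|}
        ≤ ENNReal.ofReal (N * S^2 / a^2) := by
    intro m N a ha
    refine hef_doob μ F (fun t ω => s t ω m - sbar m) S hS ?_ ?_ ?_ N a ha
    · intro n
      have h1 : Measurable[F (n+1)] (s (n+1)) := by
        refine Measurable.mono (comap_measurable (s (n+1))) ?_ le_rfl
        exact le_iSup₂_of_le (n+1) (by simp) le_rfl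
      have h2 : Measurable[F (n+1)] (fun ω => s (n+1) ω m - sbar m) :=
        ((measurable_pi_apply m).comp h1).sub_const _
      exact h2.stronglyMeasurable
    · intro n
      filter_upwards [hD2 (n+1) (by omega)] with ω h
      have h1 := h m
      have h2 := hsbarS m
      rw [abs_le]
      constructor <;> linarith
    · intro n
      have hint : Integrable (s (n+1)) μ := by
        refine Integrable.of_bound (hmeas _).aestronglyMeasurable S ?_
        filter_upwards [hD2 (n+1) (by omega)] with ω h
        refine (pi_norm_le_iff_of_nonneg hS.le).2 fun i => ?_
        rw [Real.norm_eq_abs, abs_of_nonneg (h i).1]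
        exact (h i).2
      have h1 := hD1 (n+1) (by omega)
      have hint' : Integrable (fun ω => s (n+1) ω m) μ := hint.eval m
      have h2 := ContinuousLinearMap.comp_condExp_comm (m := F n) hint
        (ContinuousLinearMap.proj (R := ℝ) (φ := fun _ : Fin M => ℝ) m)
      have h3 := condExp_sub hint' (integrable_const (sbar m)) (F n)
      rw [condExp_const (F.le n)] at h3
      have h3' : μ[fun ω => s (n+1) ω m - sbar m | F n] =ᵐ[μ]
        μ[fun ω => s (n+1) ω m | F n] - fun _ => sbar m := h3
      have h2' : (fun ω => μ[s (n+1) | F n] ω m) =ᵐ[μ] μ[fun ω => s (n+1) ω m | F n] := h2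
      have h1' : μ[s (n+1) | F n] =ᵐ[μ] fun _ => sbar := h1
      filter_upwards [h1', h2', h3'] with ω g1 g2 g3
      rw [g3, Pi.sub_apply, ← g2, g1]
      simp
  -- the deviation scale
  set c : ℝ := 1 / (6 * τ) with hc
  have hcpos : 0 < c := by positivity
  set A : ℝ := ∑ m, C m m with hA
  have hAm : ∀ m, C m m ≤ A := fun m =>
    Finset.single_le_sum (f := fun m => C m m) (fun i _ => hC i i) (Finset.mem_univ m)
  let bad : ℝ → Fin M → Set Ω := fun e0 m =>
    {ω | ∃ n ≤ ⌊K * e0⌋₊ + 1, c * e0 ≤ |∑ t ∈ Finset.Icc 1 n, (s t ω m - sbar m)|}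
  have hbadm : ∀ e0 m, MeasurableSet (bad e0 m) := by
    intro e0 m
    have : bad e0 m = ⋃ n ∈ Set.Iic (⌊K * e0⌋₊ + 1),
        {ω | c * e0 ≤ |∑ t ∈ Finset.Icc 1 n, (s t ω m - sbar m)|} := by
      ext ω; simp [bad]
    rw [this]
    refine MeasurableSet.biUnion (Set.to_countable _) fun n _ => ?_
    refine measurableSet_le measurable_const ?_
    have : Measurable (fun ω => ∑ t ∈ Finset.Icc 1 n, (s t ω m - sbar m)) :=
      Finset.measurable_sum _ fun t _ =>
        ((measurable_pi_apply m).comp (hmeas t)).sub_const _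
    exact measurable_norm.comp this
  let g : ℝ → ℝ := fun e0 => M * ((K * e0 + 1) * S ^ 2 / (c * e0) ^ 2)
  have hg : Tendsto g atTop (nhds 0) := by
    have h1 : Tendsto (fun x : ℝ => x⁻¹) atTop (nhds 0) := tendsto_inv_atTop_zero
    have h2 : Tendsto (fun x : ℝ => M * ((K * x⁻¹ + x⁻¹ * x⁻¹) * S ^ 2 / c ^ 2)) atTop
        (nhds (M * ((K * 0 + 0 * 0) * S ^ 2 / c ^ 2))) :=
      ((((h1.const_mul K).add (h1.mul h1)).mul_const _).div_const _).const_mul _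
    simp only [mul_zero, add_zero, zero_mul, zero_div] at h2
    refine h2.congr' ?_
    filter_upwards [eventually_gt_atTop 0] with x hx
    simp only [g]
    field_simp
  have hlow : Tendsto (fun e0 => 1 - ENNReal.ofReal (g e0)) atTop (nhds 1) := by
    have h1 := ENNReal.tendsto_ofReal hg
    have h2 := ENNReal.Tendsto.sub (tendsto_const_nhds (x := (1:ENNReal)) (f := atTop)) h1
      (Or.inl ENNReal.one_ne_top)
    simpa using h2
  refine tendsto_of_tendsto_of_tendsto_of_le_of_le' hlow tendsto_const_nhds ?_
    (Eventually.of_forall fun e0 => prob_le_one)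
  filter_upwards [eventually_gt_atTop 0, eventually_ge_atTop (2 * τ * A)] with e0 he0 heA
  have hU : μ (⋃ m, bad e0 m) ≤ ENNReal.ofReal (g e0) := by
    refine (measure_iUnion_fintype_le μ _).trans ?_
    have h1 : ∀ m, μ (bad e0 m) ≤ ENNReal.ofReal ((K * e0 + 1) * S ^ 2 / (c * e0) ^ 2) := by
      intro m
      refine (hbad m _ (c * e0) (by positivity)).trans (ENNReal.ofReal_le_ofReal ?_)
      have : ((⌊K * e0⌋₊ + 1 : ℕ) : ℝ) ≤ K * e0 + 1 := by
        push_cast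
        linarith [Nat.floor_le (mul_pos hK he0).le]
      gcongr
    refine (Finset.sum_le_sum fun m _ => h1 m).trans ?_
    rw [Finset.sum_const, Finset.card_univ, Fintype.card_fin, nsmul_eq_mul]
    simp only [g]
    rw [ENNReal.ofReal_mul (by positivity), ENNReal.ofReal_natCast]
  have hgood : (⋃ m, bad e0 m)ᶜ ⊆ {ω |
        lifetime τ C e0 (fun t => s t ω) (fun t => v t ω) = ⊤ ∨
        K * e0 < ((lifetime τ C e0 (fun t => s t ω) (fun t => v t ω)).toNat : ℝ)} := by
    intro ω hω
    simp only [Set.mem_compl_iff, Set.mem_iUnion, not_exists, bad, Set.mem_ofPred_eq, not_and,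
      not_le] at hω
    refine hef_lifetime_gt _ _ _ _ _ _ ?_
    refine hef_det τ hτ C sbar (fun m => (hsbarS m).1) hD3 w hD4 hwC hws e0 _ _
      (fun n => hvdec n ω) (fun n m h => hvhef e0 (n+1) (by omega) ω m h) _ (c * e0)
      (by positivity) (fun n hn m => (hω m n hn).le) ?_ (fun m => hC m m)
    intro m
    have h1 : 3 * τ * (c * e0) = e0 / 2 := by
      rw [hc]; field_simp; norm_num
    have h2 := mul_le_mul_of_nonneg_left (hAm m) hτ.le
    rw [h1]
    linarith
  refine le_trans ?_ (measure_mono hgood)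
  rw [prob_compl_eq_one_sub (MeasurableSet.iUnion fun m => hbadm e0 m)]
  exact tsub_le_tsub_left hU 1
end

section
/- Suppose assumptions (D1) and (D2) on the recharge rates hold, and in addition (D3) C_{ij} − s̄_i < 0 for all i ≠ j, and (D4) C is invertible with (Cᵀ)⁻¹·u > 0 componentwise. If the optimal value f* of the auxiliary linear program satisfies f* > 0, then for every δ > 0 and every HEF process, lim_{e0 → ∞} P( N_hef is finite and |N_hef / (e0/(τ f*)) − 1| < δ ) = 1. -/
open MeasureTheory Filter Finset Matrix

theorem hef_slln {Ω : Type*} {m0 : MeasurableSpace Ω} (μ : Measure Ω) [IsProbabilityMeasure μ]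
    (F : Filtration ℕ m0) (d : ℕ → Ω → ℝ) (K : ℝ)
    (hmeas : ∀ n, StronglyMeasurable[F (n+1)] (d n))
    (hb : ∀ n, ∀ᵐ ω ∂μ, |d n ω| ≤ K)
    (hce : ∀ n, μ[d n | F n] =ᵐ[μ] 0) :
    ∀ᵐ ω ∂μ, Tendsto (fun n : ℕ => (∑ i ∈ Finset.range n, d i ω) / (n : ℝ)) atTop (nhds 0) := by
  let Y : ℕ → Ω → ℝ := fun n ω => ∑ i ∈ Finset.range n, ((i : ℝ) + 1)⁻¹ * d i ω
  have hYs : ∀ n ω, Y (n+1) ω = Y n ω + ((n : ℝ) + 1)⁻¹ * d n ω := by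
    intro n ω
    simp only [Y, Finset.sum_range_succ]
  have hYm : ∀ n, StronglyMeasurable[F n] (Y n) := by
    intro n
    refine Finset.stronglyMeasurable_fun_sum _ ?_
    intro i hi
    have := (hmeas i).mono (F.mono (Nat.succ_le_of_lt (Finset.mem_range.1 hi)))
    exact this.const_mul _
  have hdm0 : ∀ n, StronglyMeasurable (d n) := fun n => (hmeas n).mono (F.le _)
  have hYm0 : ∀ n, StronglyMeasurable (Y n) := fun n => (hYm n).mono (F.le _)
  have hdint : ∀ n, Integrable (d n) μ := fun n =>
    Integrable.of_bound (hdm0 n).aestronglyMeasurable K (hb n)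
  have hYb : ∀ n, ∃ B : ℝ, ∀ᵐ ω ∂μ, |Y n ω| ≤ B := by
    intro n
    induction n with
    | zero => exact ⟨0, by simp [Y]⟩
    | succ n ih =>
      obtain ⟨B, hB⟩ := ih
      refine ⟨B + |((n : ℝ) + 1)⁻¹| * K, ?_⟩
      filter_upwards [hB, hb n] with ω h1 h2
      rw [hYs]
      refine (abs_add_le _ _).trans ?_
      rw [abs_mul]
      gcongr
  have hYint : ∀ n, Integrable (Y n) μ := fun n => by
    obtain ⟨B, hB⟩ := hYb n
    exact Integrable.of_bound (hYm0 n).aestronglyMeasurable B hB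
  have hY2int : ∀ n, Integrable (fun ω => Y n ω ^ 2) μ := fun n => by
    obtain ⟨B, hB⟩ := hYb n
    refine Integrable.of_bound ((hYm0 n).pow 2).aestronglyMeasurable (B^2) ?_
    filter_upwards [hB] with ω h
    rw [norm_pow, Real.norm_eq_abs]
    gcongr
  have hd2int : ∀ n, Integrable (fun ω => d n ω ^ 2) μ := fun n => by
    refine Integrable.of_bound ((hdm0 n).pow 2).aestronglyMeasurable (K^2) ?_
    filter_upwards [hb n] with ω h
    rw [norm_pow, Real.norm_eq_abs]
    gcongr
  have hYdint : ∀ n, Integrable (Y n * d n) μ := fun n => by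
    obtain ⟨B, hB⟩ := hYb n
    refine Integrable.of_bound ((hYm0 n).mul (hdm0 n)).aestronglyMeasurable (B * K) ?_
    filter_upwards [hB, hb n] with ω h h2
    rw [Pi.mul_apply, norm_mul, Real.norm_eq_abs, Real.norm_eq_abs]
    have := abs_nonneg (Y n ω)
    gcongr
    linarith
  have hYd : ∀ n, ∫ ω, Y n ω * d n ω ∂μ = 0 := by
    intro n
    have h1 := condExp_mul_of_stronglyMeasurable_left (hYm n) (hYdint n) (hdint n)
    have h2 : ∫ ω, (Y n * d n) ω ∂μ = ∫ ω, (μ[Y n * d n | F n]) ω ∂μ :=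
      (integral_condExp (F.le n)).symm
    have h3 : μ[Y n * d n | F n] =ᵐ[μ] 0 := by
      filter_upwards [h1, hce n] with ω a b
      rw [a, Pi.mul_apply, b]; simp
    rw [integral_congr_ae h3] at h2
    simpa using h2
  have hmart : Martingale Y F μ := by
    refine martingale_of_condExp_sub_eq_zero_nat hYm hYint ?_
    intro n
    have e : Y (n+1) - Y n = ((n : ℝ) + 1)⁻¹ • d n := by
      funext ω
      simp [hYs]
    rw [e]
    filter_upwards [condExp_smul (μ := μ) (((n : ℝ) + 1)⁻¹) (d n) (F n), hce n] with ω a b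
    rw [a, Pi.smul_apply, b]; simp
  have hsq : ∀ n, ∫ ω, Y n ω ^ 2 ∂μ ≤ ∑ i ∈ Finset.range n, K^2 * (1 / ((i : ℝ) + 1) ^ 2) := by
    intro n
    induction n with
    | zero => simp [Y]
    | succ n ih =>
      rw [Finset.sum_range_succ]
      have hYdint' : Integrable (fun ω => Y n ω * d n ω) μ := hYdint n
      have e : ∫ ω, Y (n+1) ω ^ 2 ∂μ = ∫ ω, Y n ω ^ 2 ∂μ
          + (2 * ((n : ℝ) + 1)⁻¹) * ∫ ω, Y n ω * d n ω ∂μ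
          + (((n : ℝ) + 1)⁻¹)^2 * ∫ ω, d n ω ^ 2 ∂μ := by
        rw [← integral_const_mul, ← integral_const_mul, ← integral_add (hY2int n)
          (hYdint'.const_mul _), ← integral_add _ ((hd2int n).const_mul _)]
        · congr 1; funext ω; rw [hYs]; ring
        · exact (hY2int n).add (hYdint'.const_mul _)
      have hd2 : ∫ ω, d n ω ^ 2 ∂μ ≤ K^2 := by
        calc _ ≤ ∫ ω, K^2 ∂μ := by
              refine integral_mono_ae (hd2int n) (integrable_const _) ?_
              filter_upwards [hb n] with ω h
              exact sq_le_sq.2 (h.trans (le_abs_self _))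
          _ = K^2 := by simp
      rw [e, hYd, mul_zero, add_zero]
      have : (((n : ℝ) + 1)⁻¹)^2 * ∫ ω, d n ω ^ 2 ∂μ ≤ (((n : ℝ) + 1)⁻¹)^2 * K^2 := by gcongr
      have e2 : K^2 * (1 / ((n : ℝ) + 1) ^ 2) = (((n : ℝ) + 1)⁻¹)^2 * K^2 := by
        rw [one_div, inv_pow]; ring
      linarith
  have hsum : Summable (fun i : ℕ => K^2 * (1 / ((i : ℝ) + 1) ^ 2)) := by
    have h := (summable_nat_add_iff 1).2 (Real.summable_one_div_nat_pow.2 (one_lt_two))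
    refine Summable.mul_left _ ?_
    simpa using h
  set T : ℝ := ∑' i : ℕ, K^2 * (1 / ((i : ℝ) + 1) ^ 2) with hT
  have hbd : ∀ n, eLpNorm (Y n) 1 μ ≤ ((1 + T).toNNReal : ENNReal) := by
    intro n
    rw [eLpNorm_one_eq_lintegral_enorm, ← ofReal_integral_norm_eq_lintegral_enorm (hYint n)]
    refine ENNReal.ofReal_le_ofReal ?_
    calc ∫ ω, ‖Y n ω‖ ∂μ ≤ ∫ ω, (1 + Y n ω ^ 2) ∂μ := by
          refine integral_mono (hYint n).norm ((integrable_const _).add (hY2int n)) ?_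
          intro ω
          simp only [Real.norm_eq_abs]
          nlinarith [sq_abs (Y n ω), sq_nonneg (|Y n ω| - 1), abs_nonneg (Y n ω)]
      _ = 1 + ∫ ω, Y n ω ^ 2 ∂μ := by
          rw [integral_add (integrable_const _) (hY2int n)]; simp
      _ ≤ 1 + T := by
          have := hsum.sum_le_tsum (Finset.range n) (fun i _ => by positivity)
          linarith [hsq n]
  filter_upwards [hmart.submartingale.exists_ae_tendsto_of_bdd hbd] with ω hω
  obtain ⟨c, hc⟩ := hω
  have h := hc.sub hc.cesaro
  rw [sub_self] at h
  have habel : ∀ n : ℕ, ∑ i ∈ Finset.range n, d i ω = n * Y n ω - ∑ i ∈ Finset.range n, Y i ω := by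
    intro n
    induction n with
    | zero => simp
    | succ n ih =>
      rw [Finset.sum_range_succ, Finset.sum_range_succ, ih, hYs]
      push_cast
      field_simp
      ring
  refine h.congr' ?_
  filter_upwards [eventually_gt_atTop 0] with n hn
  have : (n : ℝ) ≠ 0 := by positivity
  rw [habel]
  field_simp

theorem hef_lp {M : ℕ} (R : Matrix (Fin M) (Fin M) ℝ) (f : ℝ) (hf : 0 < f)
    (hR : ∀ i j, i ≠ j → R i j < 0)
    (hattain : ∃ vbar : Fin M → ℝ, (∀ m, 0 ≤ vbar m) ∧ (∑ m, vbar m) = 1 ∧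
      ∀ m, R.mulVec vbar m ≤ f)
    (hopt : ∀ (vbar : Fin M → ℝ) (g : ℝ), (∀ m, 0 ≤ vbar m) → (∑ m, vbar m) = 1 →
      (∀ m, R.mulVec vbar m ≤ g) → f ≤ g) :
    ∃ vs : Fin M → ℝ, (∀ m, 0 < vs m) ∧ (∑ m, vs m) = 1 ∧ ∀ m, R.mulVec vs m = f := by
  obtain ⟨w, hw0, hw1, hwf⟩ := hattain
  have heq : ∀ m, R.mulVec w m = f := by
    intro i
    by_contra hne
    have hlt : R.mulVec w i < f := lt_of_le_of_ne (hwf i) hne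
    set g := f - R.mulVec w i with hg
    have hg0 : 0 < g := by linarith
    set D := R i i - R.mulVec w i with hD
    have hDa := abs_nonneg D
    set η := g / (2 * (g + |D|)) with hη
    have hη0 : 0 < η := by positivity
    have hηeq : η * (2 * (g + |D|)) = g := by rw [hη]; field_simp
    have hη1 : η ≤ 1 := by
      rw [hη, div_le_one (by positivity)]; linarith
    let w' : Fin M → ℝ := (1 - η) • w + η • Pi.single i 1
    have hmv : ∀ m, R.mulVec w' m = (1 - η) * R.mulVec w m + η * R m i := by
      intro m
      simp [w', Matrix.mulVec_add, Matrix.mulVec_smul]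
    have hw'0 : ∀ m, 0 ≤ w' m := by
      intro m
      have h1 : 0 ≤ (1 - η) * w m := mul_nonneg (by linarith) (hw0 m)
      have h2 : (0:ℝ) ≤ (Pi.single i 1 : Fin M → ℝ) m := by
        by_cases h : m = i
        · subst h; simp
        · simp [h]
      have h3 := mul_nonneg hη0.le h2
      simp only [w', Pi.add_apply, Pi.smul_apply, smul_eq_mul]
      linarith
    have hw'1 : ∑ m, w' m = 1 := by
      simp only [w', Pi.add_apply, Pi.smul_apply, smul_eq_mul, Finset.sum_add_distrib,
        ← Finset.mul_sum, hw1]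
      simp
    have hstrict : ∀ m, R.mulVec w' m < f := by
      intro m
      rw [hmv]
      by_cases h : m = i
      · subst h
        have : η * D ≤ η * |D| := by gcongr; exact le_abs_self D
        nlinarith
      · have h1 := hR m i h
        have h2 : (1 - η) * R.mulVec w m ≤ (1 - η) * f :=
          mul_le_mul_of_nonneg_left (hwf m) (by linarith)
        nlinarith
    have : Nonempty (Fin M) := ⟨i⟩
    obtain ⟨k, hk⟩ := Finite.exists_max (fun m => R.mulVec w' m)
    have := hopt w' _ hw'0 hw'1 hk
    linarith [hstrict k]
  refine ⟨w, fun m => ?_, hw1, heq⟩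
  refine lt_of_le_of_ne (hw0 m) ?_
  intro h0
  have : R.mulVec w m ≤ 0 := by
    simp only [Matrix.mulVec, dotProduct]
    refine Finset.sum_nonpos ?_
    intro j _
    by_cases hj : m = j
    · subst hj; rw [← h0]; simp
    · exact mul_nonpos_of_nonpos_of_nonneg (hR m j hj).le (hw0 j)
  linarith [heq m]

theorem hef_det_s3 {M : ℕ} (R : Matrix (Fin M) (Fin M) ℝ) (f : ℝ) (hf : 0 < f)
    (hR : ∀ i j, i ≠ j → R i j < 0)
    (vs : Fin M → ℝ) (hvs0 : ∀ m, 0 < vs m) (hvs1 : ∑ m, vs m = 1)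
    (hRv : ∀ m, R.mulVec vs m = f)
    (V : ℕ → Fin M → ℝ) (sel : ℕ → Fin M) (hV0 : ∀ j, V 0 j = 0)
    (hVs : ∀ n j, V (n+1) j = V n j + if j = sel n then 1 else 0)
    (E c : ℝ) (hE : 0 ≤ E) (hc : 0 ≤ c) (hRc : ∀ m, R m m ≤ c) (N : ℕ)
    (hsel : ∀ n < N, ∀ l, R.mulVec (V n) (sel n) ≤ R.mulVec (V n) l + E) :
    ∀ n ≤ N, ∀ j, V n j - n * vs j ≤ (E + c) / f * vs j := by
  have hsum : ∀ n : ℕ, ∑ j, V n j = n := by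
    intro n
    induction n with
    | zero => simp [hV0]
    | succ n ih => simp [hVs, Finset.sum_add_distrib, ih]
  have hB0 : 0 ≤ (E + c) / f := by positivity
  have hBf : (E + c) / f * f = E + c := by field_simp
  set B := (E + c) / f with hB
  intro n
  induction n with
  | zero => 
    intro _ j
    have := mul_nonneg hB0 (hvs0 j).le
    simpa [hV0] using this
  | succ n ih =>
    intro hn j
    have ih' := ih (by omega)
    rw [hVs]
    push_cast
    by_cases hj : j = sel n
    swap
    · simp only [hj, if_false]
      linarith [ih' j, hvs0 j]
    subst hj
    simp only [if_true]
    by_contra hcon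
    push Not at hcon
    set m := sel n with hm
    let z : Fin M → ℝ := fun j => V n j - n * vs j
    have hz : ∀ k, R.mulVec (V n) k = R.mulVec z k + n * f := by
      intro k
      have : V n = z + (n : ℝ) • vs := by funext i; simp [z]
      rw [this, Matrix.mulVec_add, Matrix.mulVec_smul]
      simp [hRv]
    have hcomb : ∀ (k : Fin M) (q : ℝ), ∑ j, R k j * (z j - q * vs j) = R.mulVec z k - q * f := by
      intro k q
      rw [← hRv k]
      simp only [Matrix.mulVec, dotProduct, Finset.mul_sum]
      rw [← Finset.sum_sub_distrib]
      refine Finset.sum_congr rfl fun i _ => ?_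
      ring
    have hzsum : ∑ j, z j = 0 := by
      simp only [z, Finset.sum_sub_distrib, ← Finset.mul_sum, hvs1, hsum]; simp
    have : Nonempty (Fin M) := ⟨m⟩
    obtain ⟨l, hl⟩ := Finite.exists_min (fun j => z j / vs j)
    have hql : ∀ j, z l / vs l * vs j ≤ z j := by
      intro j
      have := hl j
      rwa [le_div_iff₀ (hvs0 j)] at this
    have hq0 : z l / vs l ≤ 0 := by
      have h := Finset.sum_le_sum (fun j (_ : j ∈ Finset.univ) => hql j)
      rw [← Finset.mul_sum, hvs1, hzsum] at h
      linarith
    have hRl : R.mulVec z l ≤ 0 := by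
      have h1 := hcomb l (z l / vs l)
      have h2 : ∑ j, R l j * (z j - z l / vs l * vs j) ≤ 0 := by
        refine Finset.sum_nonpos fun j _ => ?_
        by_cases hj : l = j
        · subst hj
          have := hvs0 l
          field_simp
          simp
        · exact mul_nonpos_of_nonpos_of_nonneg (hR l j hj).le (by linarith [hql j])
      have := mul_nonpos_of_nonpos_of_nonneg hq0 hf.le
      linarith
    have hmm : 0 < R m m := by
      have h := hRv m
      simp only [Matrix.mulVec, dotProduct] at h
      rw [← Finset.add_sum_erase _ _ (Finset.mem_univ m)] at h
      have h2 : ∑ x ∈ Finset.univ.erase m, R m x * vs x ≤ 0 := by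
        refine Finset.sum_nonpos fun j hj => ?_
        exact mul_nonpos_of_nonpos_of_nonneg (hR m j (Finset.ne_of_mem_erase hj).symm).le (hvs0 j).le
      have h3 : 0 < R m m * vs m := by linarith
      exact pos_of_mul_pos_left h3 (hvs0 m).le
    have h1 := hcomb m B
    rw [← Finset.add_sum_erase _ _ (Finset.mem_univ m)] at h1
    have h2 : 0 ≤ ∑ x ∈ Finset.univ.erase m, R m x * (z x - B * vs x) := by
      refine Finset.sum_nonneg fun j hj => ?_
      refine mul_nonneg_of_nonpos_of_nonpos (hR m j (Finset.ne_of_mem_erase hj).symm).le ?_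
      have := ih' j
      simp only [z]
      linarith
    have h3 : R m m * (-1 + vs m) ≤ R m m * (z m - B * vs m) := by
      refine mul_le_mul_of_nonneg_left ?_ hmm.le
      simp only [z]
      linarith
    have h4 := mul_pos hmm (hvs0 m)
    have h5 := hsel n (by omega) l
    rw [hz, hz] at h5
    have h6 := hRc m
    linarith

theorem hef_lim {M : ℕ} (R : Matrix (Fin M) (Fin M) ℝ) (f : ℝ) (hf : 0 < f)
    (hR : ∀ i j, i ≠ j → R i j < 0)
    (vs : Fin M → ℝ) (hvs0 : ∀ m, 0 < vs m) (hvs1 : ∑ m, vs m = 1)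
    (hRv : ∀ m, R.mulVec vs m = f)
    (V : ℕ → Fin M → ℝ) (sel : ℕ → Fin M) (hV0 : ∀ j, V 0 j = 0)
    (hVs : ∀ n j, V (n+1) j = V n j + if j = sel n then 1 else 0)
    (ε : ℕ → Fin M → ℝ)
    (hε : ∀ l, Tendsto (fun n : ℕ => ε n l / (n : ℝ)) atTop (nhds 0))
    (hsel : ∀ n l, ε n l - R.mulVec (V n) l ≤ ε n (sel n) - R.mulVec (V n) (sel n)) (j : Fin M) :
    Tendsto (fun n : ℕ => V n j / (n : ℝ)) atTop (nhds (vs j)) := by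
  have hsum : ∀ n : ℕ, ∑ j, V n j = n := by
    intro n
    induction n with
    | zero => simp [hV0]
    | succ n ih => simp [hVs, Finset.sum_add_distrib, ih]
  have hbd : ∀ η > 0, ∃ K : ℝ, 0 ≤ K ∧ ∀ (n : ℕ) l, |ε n l| ≤ K + η * n := by
    intro η hη
    have h1 : ∀ᶠ n : ℕ in atTop, ∀ l, |ε n l| ≤ η * n := by
      rw [eventually_all]
      intro l
      have := (Metric.tendsto_nhds.1 (hε l)) η hη
      filter_upwards [this, eventually_gt_atTop 0] with n hn hn0
      have hnp : (0:ℝ) < n := by exact_mod_cast hn0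
      rw [Real.dist_eq, sub_zero, abs_div, abs_of_pos hnp, div_lt_iff₀ hnp] at hn
      exact hn.le
    obtain ⟨n0, hn0⟩ := eventually_atTop.1 h1
    refine ⟨∑ n ∈ Finset.range n0, ∑ l, |ε n l|, by positivity, ?_⟩
    intro n l
    by_cases h : n0 ≤ n
    · have h2 : 0 ≤ ∑ n ∈ Finset.range n0, ∑ l, |ε n l| := by positivity
      linarith [hn0 n h l]
    · have h2 : |ε n l| ≤ ∑ l, |ε n l| :=
        Finset.single_le_sum (f := fun l => |ε n l|) (fun i _ => abs_nonneg _) (Finset.mem_univ l)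
      have h3 : ∑ l, |ε n l| ≤ ∑ n ∈ Finset.range n0, ∑ l, |ε n l| :=
        Finset.single_le_sum (f := fun n => ∑ l, |ε n l|) (fun i _ => by positivity)
          (Finset.mem_range.2 (by omega))
      have h4 : 0 ≤ η * (n:ℝ) := by positivity
      linarith
  have hup : ∀ η > 0, ∀ᶠ n : ℕ in atTop, ∀ j, V n j - n * vs j ≤ η * n := by
    intro η hη
    obtain ⟨K, hK0, hK⟩ := hbd (η * f / 4) (by positivity)
    let c := ∑ m, |R m m|
    have hc : 0 ≤ c := by positivity
    have hRc : ∀ m, R m m ≤ c := fun m => (le_abs_self _).trans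
      (Finset.single_le_sum (f := fun m => |R m m|) (fun i _ => abs_nonneg _) (Finset.mem_univ m))
    obtain ⟨N0, hN0⟩ := exists_nat_ge ((2 * K + c) / f * 2 / η)
    filter_upwards [eventually_ge_atTop N0] with N hN j
    have hNr : ((2 * K + c) / f * 2 / η) ≤ N := hN0.trans (by exact_mod_cast hN)
    rw [div_le_iff₀ hη] at hNr
    have h := hef_det_s3 R f hf hR vs hvs0 hvs1 hRv V sel hV0 hVs (2 * (K + η * f / 4 * N)) c
      (by positivity) hc hRc N (by
        intro n hn l
        have h1 := hsel n l
        have h2 := abs_le.1 (hK n l)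
        have h3 := abs_le.1 (hK n (sel n))
        have h4 : η * f / 4 * (n:ℝ) ≤ η * f / 4 * N := by gcongr
        linarith) N le_rfl j
    have hv1 : vs j ≤ 1 := by
      rw [← hvs1]
      exact Finset.single_le_sum (fun i _ => (hvs0 i).le) (Finset.mem_univ j)
    have h2 : (2 * (K + η * f / 4 * N) + c) / f * vs j ≤ (2 * (K + η * f / 4 * N) + c) / f :=
      mul_le_of_le_one_right (by positivity) hv1
    have h3 : (2 * (K + η * f / 4 * N) + c) / f = (2 * K + c) / f + η / 2 * N := by
      field_simp; ring
    linarith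
  rw [Metric.tendsto_nhds]
  intro η hη
  have hM : 0 < M := j.pos
  have hMr : (0:ℝ) < M := by exact_mod_cast hM
  have hη' : 0 < η / (2 * M) := by positivity
  filter_upwards [hup _ hη', eventually_gt_atTop 0] with n hn hn0
  have hnp : (0:ℝ) < n := by exact_mod_cast hn0
  have e : V n j / (n:ℝ) - vs j = (V n j - n * vs j) / n := by field_simp
  rw [Real.dist_eq, e, abs_div, abs_of_pos hnp, div_lt_iff₀ hnp]
  have hzs : ∑ i, (V n i - n * vs i) = 0 := by
    simp only [Finset.sum_sub_distrib, ← Finset.mul_sum, hvs1, hsum]; simp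
  rw [← Finset.add_sum_erase _ _ (Finset.mem_univ j)] at hzs
  have h1 : ∑ x ∈ Finset.univ.erase j, (V n x - n * vs x) ≤ M * (η / (2 * M) * n) := by
    refine (Finset.sum_le_card_nsmul _ _ _ (fun i _ => hn i)).trans ?_
    rw [nsmul_eq_mul]
    gcongr
    refine (Finset.card_le_univ _).trans ?_
    simp
  have h2 : (M:ℝ) * (η / (2 * M) * n) = η * n / 2 := by field_simp
  have h4 : 0 < η * n := by positivity
  have h3 : η / (2 * M) * n ≤ η * n / 2 := by
    rw [← h2]
    refine le_mul_of_one_le_left (by positivity) ?_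
    exact_mod_cast hM
  rw [abs_lt]
  constructor
  · linarith
  · linarith [hn j]

theorem hef_life {M : ℕ} (hM : 0 < M) (τ : ℝ) (hτ : 0 < τ) (C : Matrix (Fin M) (Fin M) ℝ)
    (s v : ℕ → Fin M → ℝ) (f : ℝ) (hf : 0 < f) (x : ℕ → Fin M → ℝ)
    (hx : ∀ e0 n m, energyVec τ C e0 s v n m = e0 + τ * x n m)
    (hlim : ∀ m, Tendsto (fun n : ℕ => x n m / (n : ℝ)) atTop (nhds (-f)))
    (δ : ℝ) (hδ : 0 < δ) :
    ∃ E : ℝ, ∀ e0 ≥ E, lifetime τ C e0 s v ≠ ⊤ ∧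
      |((lifetime τ C e0 s v).toNat : ℝ) / (e0 / (τ * f)) - 1| < δ := by
  obtain ⟨θ, hθ0, hθ1, hθδ⟩ : ∃ θ : ℝ, 0 < θ ∧ θ ≤ 1/2 ∧ θ ≤ δ / 4 :=
    ⟨min (1/2) (δ/4), by positivity, min_le_left _ _, min_le_right _ _⟩
  have hev : ∀ᶠ n : ℕ in atTop, ∀ m, -(f * (1 + θ)) * n < x n m ∧ x n m < -(f * (1 - θ)) * n := by
    rw [eventually_all]
    intro m
    have := (Metric.tendsto_nhds.1 (hlim m)) (f * θ) (by positivity)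
    filter_upwards [this, eventually_gt_atTop 0] with n hn hn0
    have hnp : (0:ℝ) < n := by exact_mod_cast hn0
    rw [Real.dist_eq, abs_lt] at hn
    constructor
    · rw [← lt_div_iff₀ hnp]; linarith [hn.1]
    · rw [← div_lt_iff₀ hnp]; linarith [hn.2]
  obtain ⟨n0, hn0⟩ := eventually_atTop.1 hev
  let K := ∑ n ∈ Finset.range n0, ∑ l, |x n l|
  have hK : ∀ n < n0, ∀ m, |x n m| ≤ K := by
    intro n hn l
    have h2 : |x n l| ≤ ∑ l, |x n l| :=
      Finset.single_le_sum (f := fun l => |x n l|) (fun i _ => abs_nonneg _) (Finset.mem_univ l)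
    have h3 : ∑ l, |x n l| ≤ ∑ n ∈ Finset.range n0, ∑ l, |x n l| :=
      Finset.single_le_sum (f := fun n => ∑ l, |x n l|) (fun i _ => by positivity)
        (Finset.mem_range.2 (by omega))
    exact h2.trans h3
  refine ⟨max (max (τ * K) (τ * f * (n0 + 1))) (τ * f * 2 / δ + 1), ?_⟩
  intro e0 he
  have he1 : τ * K ≤ e0 := (le_max_left _ _).trans ((le_max_left _ _).trans he)
  have he2 : τ * f * (n0 + 1) ≤ e0 := (le_max_right _ _).trans ((le_max_left _ _).trans he)
  have he3 : τ * f * 2 / δ < e0 := lt_of_lt_of_le (lt_add_one _) ((le_max_right _ _).trans he)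
  have hτf : 0 < τ * f := by positivity
  set r := e0 / (τ * f) with hr
  have hre : e0 = τ * f * r := by rw [hr]; field_simp
  have hr1 : (n0 : ℝ) + 1 ≤ r := by rw [hr, le_div_iff₀ hτf]; linarith
  have hr0 : 0 < r := by have : (0:ℝ) ≤ n0 := by positivity
                         linarith
  have hr2 : 2 < δ * r := by
    rw [div_lt_iff₀ hδ, hre] at he3
    have : τ * f * 2 < τ * f * (δ * r) := by linarith
    exact lt_of_mul_lt_mul_left this hτf.le
  -- nonnegative early
  have hearly : ∀ (n : ℕ) m, energyVec τ C e0 s v n m < 0 → r < (1 + θ) * n := by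
    intro n m hneg
    rw [hx] at hneg
    by_cases h : n0 ≤ n
    · have h1 := (hn0 n h m).1
      have h2 : τ * (-(f * (1 + θ)) * n) < τ * x n m := by gcongr
      have h3 : τ * f * r < τ * f * ((1 + θ) * n) := by rw [← hre]; linarith
      exact lt_of_mul_lt_mul_left h3 hτf.le
    · exfalso
      have h1 := (abs_le.1 (hK n (by omega) m)).1
      have h2 : τ * (-K) ≤ τ * x n m := by gcongr
      linarith
  let n1 := ⌈r / (1 - θ)⌉₊
  have hθp : 0 < 1 - θ := by linarith
  have hn1 : r / (1 - θ) ≤ n1 := Nat.le_ceil _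
  have hn1' : (n1 : ℝ) < r / (1 - θ) + 1 := Nat.ceil_lt_add_one (by positivity)
  have hrr : r ≤ r / (1 - θ) := by
    rw [le_div_iff₀ hθp]; nlinarith
  have hn10 : n0 + 1 ≤ n1 := by
    have : ((n0 + 1 : ℕ) : ℝ) ≤ n1 := by push_cast; linarith
    exact_mod_cast this
  have hmem : (n1 : ℕ∞) ∈ {y : ℕ∞ | ∃ n : ℕ, y = (n : ℕ∞) ∧ 1 ≤ n ∧
      ∃ m, energyVec τ C e0 s v (n+1) m < 0} := by
    refine ⟨n1, rfl, by omega, ⟨0, hM⟩, ?_⟩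
    rw [hx]
    have h1 := (hn0 (n1 + 1) (by omega) ⟨0, hM⟩).2
    have h2 : τ * x (n1+1) ⟨0, hM⟩ < τ * (-(f * (1 - θ)) * ((n1+1 : ℕ) : ℝ)) := by gcongr
    have h3 : r ≤ n1 * (1 - θ) := by rwa [div_le_iff₀ hθp] at hn1
    have h4 : τ * f * r ≤ τ * f * (n1 * (1 - θ)) := by gcongr
    have h5 : 0 < τ * f * (1 - θ) := by positivity
    push_cast at h2
    rw [← hre] at h4
    linarith
  have hle : lifetime τ C e0 s v ≤ n1 := sInf_le hmem
  have hin := csInf_mem (s := {y : ℕ∞ | ∃ n : ℕ, y = (n : ℕ∞) ∧ 1 ≤ n ∧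
      ∃ m, energyVec τ C e0 s v (n+1) m < 0}) ⟨_, hmem⟩
  change lifetime τ C e0 s v ∈ _ at hin
  obtain ⟨L, hL, hL1, m, hLm⟩ := hin
  rw [hL] at hle ⊢
  have hLn : L ≤ n1 := by exact_mod_cast hle
  refine ⟨ENat.natCast_ne_top L, ?_⟩
  rw [ENat.toNat_natCast]
  have hLr : (L:ℝ) ≤ n1 := by exact_mod_cast hLn
  have h1 := hearly _ m hLm
  push_cast at h1
  have hup : r / (1 - θ) ≤ r * (1 + 2 * θ) := by
    rw [div_le_iff₀ hθp]
    have : 1 ≤ (1 + 2 * θ) * (1 - θ) := by nlinarith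
    nlinarith
  have e : (L:ℝ) / r - 1 = (L - r) / r := by field_simp
  rw [e, abs_div, abs_of_pos hr0, div_lt_iff₀ hr0, abs_lt]
  have h2 : θ * r ≤ δ / 4 * r := by gcongr
  constructor
  · -- L + 1 > r/(1+θ) ≥ r(1-θ)
    have h3 : r * (1 - θ) < L + 1 := by
      have : (1 + θ) * (r * (1 - θ)) < (1 + θ) * (L + 1) := by nlinarith [mul_pos hr0 (pow_pos hθ0 2)]
      exact lt_of_mul_lt_mul_left this (by linarith)
    nlinarith
  · nlinarith

/-- If `f* > 0` and (D1)–(D4) hold, then for any `δ > 0` and any HEF process,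
`P(N_hef < ∞ and |N_hef/(e0/(τ f*)) − 1| < δ) → 1` as `e0 → ∞`. -/
theorem hef_lifetime_ratio_of_fstar_pos
    {M : ℕ} (hM : 2 ≤ M)
    (τ : ℝ) (hτ : 0 < τ)
    (C : Matrix (Fin M) (Fin M) ℝ) (hC : ∀ i j, 0 ≤ C i j)
    (sbar : Fin M → ℝ) (S : ℝ) (hS : 0 < S)
    (hsbarS : ∀ m, 0 ≤ sbar m ∧ sbar m ≤ S)
    (fstar : ℝ) (hfstar : 0 < fstar)
    -- `f*` is attained by a feasible point of the auxiliary LP (with `R = C − s̄·uᵀ`)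
    (hattain : ∃ vbar : Fin M → ℝ, (∀ m, 0 ≤ vbar m) ∧ (∑ m, vbar m) = 1 ∧
      ∀ m, (C - Matrix.of fun i _ => sbar i).mulVec vbar m ≤ fstar)
    -- and is optimal for it
    (hopt : ∀ (vbar : Fin M → ℝ) (f : ℝ), (∀ m, 0 ≤ vbar m) → (∑ m, vbar m) = 1 →
      (∀ m, (C - Matrix.of fun i _ => sbar i).mulVec vbar m ≤ f) → fstar ≤ f)
    -- (D3): every passive BS gains energy in expectation
    (hD3 : ∀ i j, i ≠ j → C i j - sbar i < 0)
    -- (D4): `C` is invertible with `(Cᵀ)⁻¹·u > 0` componentwise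
    (hCdet : IsUnit C.det)
    (hD4 : ∀ m, 0 < (Matrix.transpose C)⁻¹.mulVec (fun _ => (1 : ℝ)) m)
    {Ω : Type*} {m0 : MeasurableSpace Ω} (μ : Measure Ω) [IsProbabilityMeasure μ]
    (s : ℕ → Ω → Fin M → ℝ) (hmeas : ∀ n, Measurable (s n))
    -- (D1): constant conditional expectation given the past
    (hD1 : ∀ n, 1 ≤ n →
      (μ[s n | ⨆ i ∈ Finset.Icc 1 (n-1), MeasurableSpace.comap (s i) inferInstance]
        =ᵐ[μ] (fun _ => sbar)))
    -- (D2): boundedness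
    (hD2 : ∀ n, 1 ≤ n → ∀ᵐ ω ∂μ, ∀ m, 0 ≤ s n ω m ∧ s n ω m ≤ S)
    (δ : ℝ) (hδ : 0 < δ)
    -- an HEF process:
    (v : ℕ → Ω → Fin M → ℝ)
    (hvdec : ∀ n ω, IsDecision (v n ω))
    -- each `v^(n)` is measurable w.r.t. `σ(s^(1),…,s^(n−1))`
    (hvmeas : ∀ n, 1 ≤ n →
      Measurable[⨆ i ∈ Finset.Icc 1 (n-1), MeasurableSpace.comap (s i) inferInstance] (v n))
    -- highest-energy-first selection rule
    (hvhef : ∀ (e0 : ℝ) (n : ℕ), 1 ≤ n → ∀ (ω : Ω) (m : Fin M), v n ω m = 1 →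
      ∀ l, energyVec τ C e0 (fun t => s t ω) (fun t => v t ω) (n-1) l ≤
           energyVec τ C e0 (fun t => s t ω) (fun t => v t ω) (n-1) m) :
    Tendsto (fun e0 : ℝ => μ {ω |
        lifetime τ C e0 (fun t => s t ω) (fun t => v t ω) ≠ ⊤ ∧
        |((lifetime τ C e0 (fun t => s t ω) (fun t => v t ω)).toNat : ℝ) /
            (e0 / (τ * fstar)) - 1| < δ})
      atTop (nhds 1) := by
  set R : Matrix (Fin M) (Fin M) ℝ := C - Matrix.of fun i _ => sbar i with hRdef
  have hR : ∀ i j, i ≠ j → R i j < 0 := fun i j hij => by simpa [hRdef] using hD3 i j hij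
  obtain ⟨vs, hvs0, hvs1, hRv⟩ := hef_lp R fstar hfstar hR hattain hopt
  -- the filtration
  let F : Filtration ℕ m0 :=
    { seq := fun n => ⨆ i ∈ Finset.Icc 1 n, MeasurableSpace.comap (s i) inferInstance
      mono' := by
        intro a b hab
        refine biSup_mono ?_
        intro i hi
        rw [Finset.mem_Icc] at hi ⊢
        omega
      le' := by
        intro n
        exact iSup₂_le fun i _ => (hmeas i).comap_le }
  have hslln : ∀ m, ∀ᵐ ω ∂μ, Tendsto (fun n : ℕ =>
      (∑ i ∈ Finset.range n, (s (i+1) ω m - sbar m)) / (n : ℝ)) atTop (nhds 0) := by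
    intro m
    refine hef_slln μ F (fun i ω => s (i+1) ω m - sbar m) S ?_ ?_ ?_
    · intro n
      have h1 : Measurable[F (n+1)] (s (n+1)) := by
        have h2 : MeasurableSpace.comap (s (n+1)) inferInstance ≤ F (n+1) :=
          le_iSup₂_of_le (n+1) (Finset.mem_Icc.2 ⟨by omega, le_rfl⟩) le_rfl
        exact measurable_iff_comap_le.2 h2
      have h3 : Measurable[F (n+1)] (fun ω => s (n+1) ω m) := (measurable_pi_apply m).comp h1
      exact (h3.sub_const _).stronglyMeasurable
    · intro n
      filter_upwards [hD2 (n+1) (by omega)] with ω hω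
      rw [abs_le]
      have := hω m
      have := hsbarS m
      constructor <;> linarith
    · intro n
      have hint : Integrable (s (n+1)) μ := by
        refine Integrable.of_bound (hmeas _).aestronglyMeasurable S ?_
        filter_upwards [hD2 (n+1) (by omega)] with ω hω
        rw [pi_norm_le_iff_of_nonneg hS.le]
        intro i
        rw [Real.norm_eq_abs, abs_le]
        have := hω i
        constructor <;> linarith
      have hint' : Integrable (fun ω => s (n+1) ω m) μ := hint.eval m
      have h1 := ContinuousLinearMap.comp_condExp_comm (m := F n) hint
        (ContinuousLinearMap.proj (R := ℝ) (φ := fun _ : Fin M => ℝ) m)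
      have h2 : μ[s (n+1) | F n] =ᵐ[μ] fun _ => sbar := hD1 (n+1) (by omega)
      have h3 := condExp_sub hint' (integrable_const (μ := μ) (sbar m)) (F n)
      have h4 : μ[fun _ : Ω => sbar m | F n] = fun _ => sbar m := condExp_const (F.le n) _
      filter_upwards [h1, h2, h3] with ω a b c
      refine c.trans ?_
      rw [Pi.sub_apply, h4]
      have a' : (μ[s (n+1) | F n]) ω m = (μ[fun ω => s (n+1) ω m | F n]) ω := a
      rw [← a', b]
      simp
  have hae : ∀ᵐ ω ∂μ, ∃ E : ℝ, ∀ e0 ≥ E,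
      lifetime τ C e0 (fun t => s t ω) (fun t => v t ω) ≠ ⊤ ∧
        |((lifetime τ C e0 (fun t => s t ω) (fun t => v t ω)).toNat : ℝ) /
            (e0 / (τ * fstar)) - 1| < δ := by
    filter_upwards [ae_all_iff.2 hslln] with ω hω
    have hdec : ∀ n, ∃ i, ∀ j, v n ω j = if j = i then 1 else 0 := by
      intro n
      obtain ⟨h01, hsum⟩ := hvdec n ω
      obtain ⟨i, hi⟩ : ∃ i, v n ω i = 1 := by
        by_contra hcon
        push Not at hcon
        have : ∑ m, v n ω m = 0 := Finset.sum_eq_zero fun i _ => (h01 i).resolve_right (hcon i)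
        linarith
      refine ⟨i, fun j => ?_⟩
      by_cases hj : j = i
      · simp [hj, hi]
      · rw [if_neg hj]
        refine (h01 j).resolve_right fun hj1 => ?_
        have h0 : ∀ k, 0 ≤ v n ω k := fun k => by rcases h01 k with h | h <;> rw [h] <;> norm_num
        have h2 := Finset.sum_le_sum_of_subset_of_nonneg (Finset.subset_univ {j, i})
          (fun k _ _ => h0 k)
        rw [Finset.sum_pair hj, hsum, hi, hj1] at h2
        norm_num at h2
    choose sel0 hsel0 using hdec
    let V : ℕ → Fin M → ℝ := fun n => ∑ t ∈ Finset.Icc 1 n, v t ω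
    let sel : ℕ → Fin M := fun n => sel0 (n+1)
    let ε : ℕ → Fin M → ℝ := fun n m => ∑ i ∈ Finset.range n, (s (i+1) ω m - sbar m)
    have hV0 : ∀ j, V 0 j = 0 := fun j => by simp [V]
    have hVs : ∀ n j, V (n+1) j = V n j + if j = sel n then 1 else 0 := by
      intro n j
      simp only [V, sel]
      rw [Finset.sum_Icc_succ_top (by omega), Pi.add_apply, hsel0]
    have hsumV : ∀ n : ℕ, ∑ j, V n j = n := by
      intro n
      induction n with
      | zero => simp [hV0]
      | succ n ih => simp [hVs, Finset.sum_add_distrib, ih]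
    have hSeq : ∀ (n : ℕ) m, ∑ t ∈ Finset.Icc 1 n, s t ω m = ε n m + n * sbar m := by
      intro n m
      induction n with
      | zero => simp [ε]
      | succ n ih =>
        rw [Finset.sum_Icc_succ_top (by omega), ih]
        simp only [ε, Finset.sum_range_succ]
        push_cast
        ring
    have hRV : ∀ n m, R.mulVec (V n) m = C.mulVec (V n) m - n * sbar m := by
      intro n m
      rw [hRdef, Matrix.sub_mulVec, Pi.sub_apply]
      congr 1
      simp only [Matrix.mulVec, dotProduct, Matrix.of_apply]
      rw [← Finset.mul_sum, hsumV, mul_comm]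
    have hx : ∀ e0 n m, energyVec τ C e0 (fun t => s t ω) (fun t => v t ω) n m
        = e0 + τ * (ε n m - R.mulVec (V n) m) := by
      intro e0 n m
      simp only [energyVec]
      rw [hSeq, hRV]
      simp only [V]
      ring
    have hsel : ∀ n l, ε n l - R.mulVec (V n) l ≤ ε n (sel n) - R.mulVec (V n) (sel n) := by
      intro n l
      have h := hvhef 0 (n+1) (by omega) ω (sel n) (by rw [hsel0]; simp [sel]) l
      rw [hx, hx] at h
      simp only [Nat.add_sub_cancel, zero_add] at h
      exact le_of_mul_le_mul_left h hτ
    have hVlim := hef_lim R fstar hfstar hR vs hvs0 hvs1 hRv V sel hV0 hVs ε hω hsel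
    refine hef_life (by omega) τ hτ C _ _ fstar hfstar (fun n m => ε n m - R.mulVec (V n) m) hx ?_
      δ hδ
    intro m
    have h1 : Tendsto (fun n : ℕ => R.mulVec (V n) m / (n:ℝ)) atTop (nhds fstar) := by
      rw [← hRv m]
      simp only [Matrix.mulVec, dotProduct, Finset.sum_div, mul_div_assoc]
      exact tendsto_finsetSum _ fun j _ => (hVlim j).const_mul _
    have h2 := (hω m).sub h1
    rw [zero_sub] at h2
    refine h2.congr fun n => ?_
    simp only [ε, sub_div]
  -- conclude by monotone continuity
  let G : ℝ → Set Ω := fun e0 => {ω |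
        lifetime τ C e0 (fun t => s t ω) (fun t => v t ω) ≠ ⊤ ∧
        |((lifetime τ C e0 (fun t => s t ω) (fun t => v t ω)).toNat : ℝ) /
            (e0 / (τ * fstar)) - 1| < δ}
  let B : ℝ → Set Ω := fun E => {ω | ∀ e0 ≥ E, ω ∈ G e0}
  have hBmono : Monotone B := fun a b hab ω hω e0 he => hω e0 (hab.trans he)
  have hB := tendsto_measure_iUnion_atTop (μ := μ) hBmono
  have hU : μ (⋃ E, B E) = 1 := by
    have : (⋃ E, B E) =ᵐ[μ] Set.univ := by
      rw [eventuallyEq_univ]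
      filter_upwards [hae] with ω hω
      obtain ⟨E, hE⟩ := hω
      exact Set.mem_iUnion.2 ⟨E, hE⟩
    rw [measure_congr this, measure_univ]
  rw [hU] at hB
  exact tendsto_of_tendsto_of_tendsto_of_le_of_le hB tendsto_const_nhds
    (fun E => measure_mono fun ω hω => hω E le_rfl) (fun E => prob_le_one)
end

section
/- Suppose C is invertible with (Cᵀ)⁻¹·u ≥ 0 componentwise, 1 − uᵀ·C⁻¹·s̄ ≠ 0, R = C − s̄·uᵀ is invertible, and either R⁻¹·u ≥ 0 componentwise or R⁻¹·u ≤ 0 componentwise. Then uᵀ·R⁻¹·u ≠ 0 and the pair v̄* = R⁻¹·u / (uᵀ·R⁻¹·u), f* = 1 / (uᵀ·R⁻¹·u) is an optimal solution of the auxiliary linear program: v̄* ≥ 0, uᵀ·v̄* = 1, R·v̄* = f*·u, and every (v̄, f) with v̄ ≥ 0, uᵀ·v̄ = 1, and R·v̄ ≤ f·u satisfies f ≥ f*. -/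
open Matrix Finset

/-- Optimal solution of the auxiliary LP: under (D4)-type conditions and a sign condition
on `R⁻¹·u`, the pair `v̄* = R⁻¹u/(uᵀR⁻¹u)`, `f* = 1/(uᵀR⁻¹u)` is feasible and optimal for
`min f s.t. R·v̄ ≤ f·u, uᵀ·v̄ = 1, v̄ ≥ 0`. -/
theorem auxiliary_LP_optimal_solution
    {M : ℕ} (hM : 2 ≤ M)
    (C : Matrix (Fin M) (Fin M) ℝ) (sbar : Fin M → ℝ)
    (u : Fin M → ℝ) (hu : u = fun _ => 1)
    (R : Matrix (Fin M) (Fin M) ℝ) (hR : R = C - Matrix.of fun i _ => sbar i)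
    (hCdet : IsUnit C.det)
    (hCTu : ∀ m, 0 ≤ (Matrix.transpose C)⁻¹.mulVec u m)
    (hne : 1 - (∑ m, C⁻¹.mulVec sbar m) ≠ 0)
    (hRdet : IsUnit R.det)
    (hsign : (∀ m, 0 ≤ R⁻¹.mulVec u m) ∨ (∀ m, R⁻¹.mulVec u m ≤ 0)) :
    (∑ m, R⁻¹.mulVec u m) ≠ 0 ∧
    (∀ m, 0 ≤ R⁻¹.mulVec u m / (∑ m', R⁻¹.mulVec u m')) ∧
    (∑ m, R⁻¹.mulVec u m / (∑ m', R⁻¹.mulVec u m')) = 1 ∧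
    (∀ m, R.mulVec (fun k => R⁻¹.mulVec u k / (∑ m', R⁻¹.mulVec u m')) m
        = 1 / (∑ m', R⁻¹.mulVec u m')) ∧
    (∀ (vbar : Fin M → ℝ) (f : ℝ), (∀ m, 0 ≤ vbar m) → (∑ m, vbar m) = 1 →
      (∀ m, R.mulVec vbar m ≤ f) → 1 / (∑ m', R⁻¹.mulVec u m') ≤ f) := by
  have hM0 : 0 < M := by omega
  set w := R⁻¹.mulVec u with hw
  set y := (Matrix.transpose C)⁻¹.mulVec u with hy
  have hRw : R.mulVec w = u := by
    rw [hw, Matrix.mulVec_mulVec, Matrix.mul_nonsing_inv _ hRdet, Matrix.one_mulVec]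
  have hCy : (Matrix.transpose C).mulVec y = u := by
    rw [hy, Matrix.mulVec_mulVec, Matrix.mul_nonsing_inv _ (by rwa [Matrix.det_transpose]),
      Matrix.one_mulVec]
  have hu0 : u ≠ 0 := by
    intro h
    have := congrFun h ⟨0, hM0⟩
    rw [hu] at this
    simp at this
  have hw0 : w ≠ 0 := by
    intro h
    rw [h, Matrix.mulVec_zero] at hRw
    exact hu0 hRw.symm
  have hy0 : y ≠ 0 := by
    intro h
    rw [h, Matrix.mulVec_zero] at hCy
    exact hu0 hCy.symm
  have hS : (∑ m, w m) ≠ 0 := by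
    intro h
    apply hw0
    funext m
    rcases hsign with hs | hs
    · exact (Finset.sum_eq_zero_iff_of_nonneg (fun i _ => hs i)).1 h m (Finset.mem_univ m)
    · exact (Finset.sum_eq_zero_iff_of_nonpos (fun i _ => hs i)).1 h m (Finset.mem_univ m)
  have hypos : 0 < ∑ m, y m := by
    refine lt_of_le_of_ne (Finset.sum_nonneg fun i _ => hCTu i) fun h => hy0 ?_
    funext m
    exact (Finset.sum_eq_zero_iff_of_nonneg (fun i _ => hCTu i)).1 h.symm m (Finset.mem_univ m)
  -- the row identity `yᵀ R v = (1 - yᵀ s) uᵀ v`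
  have key : ∀ v : Fin M → ℝ,
      ∑ m, y m * R.mulVec v m = (1 - ∑ m, y m * sbar m) * ∑ m, v m := by
    intro v
    have h1 : ∀ m, R.mulVec v m = C.mulVec v m - sbar m * ∑ k, v k := by
      intro m
      rw [hR, Matrix.sub_mulVec, Pi.sub_apply, Finset.mul_sum]
      rfl
    have h2 : ∑ m, y m * C.mulVec v m = ∑ m, v m := by
      change y ⬝ᵥ (C *ᵥ v) = _
      rw [Matrix.dotProduct_mulVec, ← Matrix.mulVec_transpose, hCy, hu]
      simp [dotProduct]
    simp only [h1, mul_sub, Finset.sum_sub_distrib, h2, ← mul_assoc, ← Finset.sum_mul]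
    ring
  refine ⟨hS, ?_, ?_, ?_, ?_⟩
  · intro m
    rcases hsign with hs | hs
    · exact div_nonneg (hs m) (Finset.sum_nonneg fun i _ => hs i)
    · exact div_nonneg_of_nonpos (hs m) (Finset.sum_nonpos fun i _ => hs i)
  · rw [← Finset.sum_div, div_self hS]
  · intro m
    have : (fun k => w k / ∑ m', w m') = (∑ m', w m')⁻¹ • w := by
      funext k
      simp [div_eq_inv_mul]
    rw [this, Matrix.mulVec_smul, hRw, hu]
    simp
  · intro v f _ hv1 hvf
    have e1 := key w
    have e2 := key v
    rw [hRw, hu] at e1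
    simp only [mul_one] at e1
    rw [hv1, mul_one] at e2
    have h3 : ∑ m, y m * R.mulVec v m ≤ (∑ m, y m) * f := by
      rw [Finset.sum_mul]
      exact Finset.sum_le_sum fun m _ => mul_le_mul_of_nonneg_left (hvf m) (hCTu m)
    rw [e2] at h3
    have h4 : 1 / (∑ m, w m) = (1 - ∑ m, y m * sbar m) / ∑ m, y m := by
      rw [div_eq_div_iff hS hypos.ne', one_mul, e1]
    rw [h4, div_le_iff₀ hypos]
    linarith
end

section
/- Suppose C is an invertible M×M real matrix with (Cᵀ)⁻¹·u ≥ 0 componentwise, s̄ ∈ ℝ^M satisfies 1 − uᵀ·C⁻¹·s̄ ≠ 0, and R = C − s̄·uᵀ (which is then invertible). Then every pair (v̄, f) ∈ ℝ^M × ℝ with v̄ ≥ 0 componentwise, uᵀ·v̄ = 1, and R·v̄ ≤ f·u componentwise satisfies f ≥ 1 / (uᵀ·R⁻¹·u). -/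
open Matrix Finset

/-- Weak-duality lower bound for the auxiliary LP: if `C` is invertible with
`(Cᵀ)⁻¹·u ≥ 0` and `1 − uᵀ·C⁻¹·s̄ ≠ 0`, then `R = C − s̄·uᵀ` is invertible and every
feasible `(v̄, f)` of the auxiliary LP satisfies `f ≥ 1/(uᵀ·R⁻¹·u)`. -/
theorem auxiliary_LP_weak_duality
    {M : ℕ} (hM : 2 ≤ M)
    (C : Matrix (Fin M) (Fin M) ℝ) (sbar : Fin M → ℝ)
    (u : Fin M → ℝ) (hu : u = fun _ => 1)
    (R : Matrix (Fin M) (Fin M) ℝ) (hR : R = C - Matrix.of fun i _ => sbar i)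
    (hCdet : IsUnit C.det)
    (hCTu : ∀ m, 0 ≤ (Matrix.transpose C)⁻¹.mulVec u m)
    (hne : 1 - (∑ m, C⁻¹.mulVec sbar m) ≠ 0) :
    IsUnit R.det ∧
    ∀ (vbar : Fin M → ℝ) (f : ℝ), (∀ m, 0 ≤ vbar m) → (∑ m, vbar m) = 1 →
      (∀ m, R.mulVec vbar m ≤ f) → 1 / (∑ m', R⁻¹.mulVec u m') ≤ f := by
  have hu1 : ∀ x : Fin M → ℝ, u ⬝ᵥ x = ∑ m, x m := by
    intro x; simp [hu, dotProduct]
  set y : Fin M → ℝ := (Matrix.transpose C)⁻¹.mulVec u with hy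
  have hyx : ∀ x : Fin M → ℝ, y ⬝ᵥ x = ∑ m, C⁻¹.mulVec x m := by
    intro x
    rw [← hu1, hy, ← Matrix.transpose_nonsing_inv, Matrix.mulVec_transpose,
      Matrix.dotProduct_mulVec]
  have hRv : ∀ v : Fin M → ℝ, R.mulVec v = C.mulVec v - (∑ m, v m) • sbar := by
    intro v
    rw [hR, Matrix.sub_mulVec]
    congr 1
    ext i
    simp [Matrix.mulVec, dotProduct, Finset.mul_sum, mul_comm]
  have hCC : ∀ v : Fin M → ℝ, C⁻¹.mulVec (C.mulVec v) = v := by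
    intro v
    rw [Matrix.mulVec_mulVec, Matrix.nonsing_inv_mul _ hCdet, Matrix.one_mulVec]
  have key : ∀ v : Fin M → ℝ,
      y ⬝ᵥ R.mulVec v = (1 - ∑ m, C⁻¹.mulVec sbar m) * ∑ m, v m := by
    intro v
    rw [hRv, dotProduct_sub, dotProduct_smul, hyx, hyx, hCC, smul_eq_mul]
    ring
  have hdet : IsUnit R.det := by
    rw [isUnit_iff_ne_zero]
    intro h0
    obtain ⟨v, hv, hv0⟩ := Matrix.exists_mulVec_eq_zero_iff.mpr h0
    have h1 := key v
    rw [hv0, dotProduct_zero] at h1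
    have h2 : ∑ m, v m = 0 := by
      rcases mul_eq_zero.mp h1.symm with h | h
      · exact absurd h hne
      · exact h
    have h3 := hRv v
    rw [hv0, h2, zero_smul, sub_zero] at h3
    apply hv
    rw [← hCC v, ← h3, Matrix.mulVec_zero]
  refine ⟨hdet, ?_⟩
  intro v f hv hv1 hf
  have hS0 : 0 ≤ ∑ m, y m := Finset.sum_nonneg fun m _ => hCTu m
  have hSne : ∑ m, y m ≠ 0 := by
    intro h
    have h1 := (Finset.sum_eq_zero_iff_of_nonneg fun m _ => hCTu m).mp h
    have h2 : y = 0 := by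
      ext m
      exact h1 m (Finset.mem_univ m)
    have h3 := key v
    rw [h2, zero_dotProduct, hv1, mul_one] at h3
    exact hne h3.symm
  have hS : 0 < ∑ m, y m := lt_of_le_of_ne hS0 (Ne.symm hSne)
  have hw := key (R⁻¹.mulVec u)
  rw [Matrix.mulVec_mulVec, Matrix.mul_nonsing_inv _ hdet, Matrix.one_mulVec,
    dotProduct_comm, hu1] at hw
  have hle : (1 - ∑ m, C⁻¹.mulVec sbar m) ≤ f * ∑ m, y m := by
    have h3 := key v
    rw [hv1, mul_one] at h3
    rw [← h3, Finset.mul_sum]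
    apply Finset.sum_le_sum
    intro m _
    rw [mul_comm]
    exact mul_le_mul_of_nonneg_right (hf m) (hCTu m)
  have hWne : ∑ m, R⁻¹.mulVec u m ≠ 0 := by
    intro h
    rw [h, mul_zero] at hw
    exact hSne hw
  have heq : 1 / (∑ m, R⁻¹.mulVec u m) = (1 - ∑ m, C⁻¹.mulVec sbar m) / ∑ m, y m := by
    rw [div_eq_div_iff hWne hSne, one_mul, hw]
  rw [heq, div_le_iff₀ hS]
  exact hle
end

section
/- Suppose the recharge rates are deterministic with s^(n) = s̄ for all n ≥ 1. Let v̄* ∈ ℝ^M satisfy v̄* ≥ 0, uᵀ·v̄* = 1, and R·v̄* ≤ f*·u with f* ≤ 0, and let ρ = max_{i,j} |R_{ij}|. Let (v^(n))_{n≥1} be any sequence of decision vectors whose cumulative sums stay close to the target fractions: ‖Σ_{t=1}^{n} v^(t) − n·v̄*‖_∞ ≤ M for all n ≥ 1. If e0 ≥ M²·τ·ρ, then e^(n) ≥ 0 componentwise for all n ≥ 1; in particular the network lifetime is infinite. -/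
open Matrix Finset

/-- Deterministic recharge `s^(n) = s̄`: if the cumulative decisions stay within `M` of the
target fractions `v̄*` (feasible for the LP with value `f* ≤ 0`) and `e0 ≥ M²·τ·ρ` with
`ρ = max_{i,j}|R_{ij}|`, then all energies stay nonnegative forever; in particular the
lifetime is infinite. -/
theorem energies_nonneg_of_deterministic_recharge
    {M : ℕ} (hM : 2 ≤ M)
    (τ : ℝ) (hτ : 0 < τ)
    (C : Matrix (Fin M) (Fin M) ℝ) (hC : ∀ i j, 0 ≤ C i j)
    (sbar : Fin M → ℝ)
    (s : ℕ → Fin M → ℝ) (hs : ∀ n, 1 ≤ n → s n = sbar)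
    (vbar : Fin M → ℝ) (fstar : ℝ) (hfstar : fstar ≤ 0)
    (hvpos : ∀ m, 0 ≤ vbar m) (hvsum : (∑ m, vbar m) = 1)
    (hfeas : ∀ m, (C - Matrix.of fun i _ => sbar i).mulVec vbar m ≤ fstar)
    (ρ : ℝ)
    (hρub : ∀ i j, |C i j - sbar i| ≤ ρ)
    (hρmem : ∃ i j, ρ = |C i j - sbar i|)
    (v : ℕ → Fin M → ℝ) (hvdec : ∀ t, IsDecision (v t))
    (hclose : ∀ n, 1 ≤ n → ∀ m,
      |(∑ t ∈ Finset.Icc 1 n, v t m) - (n : ℝ) * vbar m| ≤ M)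
    (e0 : ℝ) (he0 : (M : ℝ)^2 * τ * ρ ≤ e0) :
    (∀ n, 1 ≤ n → ∀ m, 0 ≤ energyVec τ C e0 s v n m) ∧
    lifetime τ C e0 s v = ⊤ := by
  have key : ∀ n, 1 ≤ n → ∀ m, 0 ≤ energyVec τ C e0 s v n m := by
    intro n hn m
    have h1 : ∑ t ∈ Finset.Icc 1 n, s t m = n * sbar m := by
      rw [Finset.sum_congr rfl (fun t ht => by rw [hs t (Finset.mem_Icc.mp ht).1])]
      simp
    have h2 : ∑ j, ∑ t ∈ Finset.Icc 1 n, v t j = n := by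
      rw [Finset.sum_comm, Finset.sum_congr rfl (fun t _ => (hvdec t).2)]
      simp
    have h3 : ∑ j, (C m j - sbar m) * vbar j ≤ fstar := by
      have := hfeas m
      simpa [Matrix.mulVec, dotProduct] using this
    have h4 : ∑ j, (C m j - sbar m) * ((∑ t ∈ Finset.Icc 1 n, v t j) - (n : ℝ) * vbar j)
        ≤ ∑ _j : Fin M, ρ * (M : ℝ) := by
      apply Finset.sum_le_sum
      intro j _
      refine (le_abs_self _).trans ?_
      rw [abs_mul]
      exact mul_le_mul (hρub m j) (hclose n hn j) (abs_nonneg _)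
        ((abs_nonneg _).trans (hρub m j))
    have h5 : ∑ j, (C m j - sbar m) * ((∑ t ∈ Finset.Icc 1 n, v t j) - (n : ℝ) * vbar j)
        = C.mulVec (∑ t ∈ Finset.Icc 1 n, v t) m - n * sbar m
          - n * ∑ j, (C m j - sbar m) * vbar j := by
      have : (n : ℝ) * sbar m = ∑ j, sbar m * ∑ t ∈ Finset.Icc 1 n, v t j := by
        rw [← Finset.mul_sum, h2, mul_comm]
      rw [this, Finset.mul_sum]
      simp only [Matrix.mulVec, dotProduct, Finset.sum_apply]
      rw [← Finset.sum_sub_distrib, ← Finset.sum_sub_distrib]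
      exact Finset.sum_congr rfl (fun j _ => by ring)
    have h6 : (n : ℝ) * ∑ j, (C m j - sbar m) * vbar j ≤ 0 :=
      mul_nonpos_of_nonneg_of_nonpos (Nat.cast_nonneg n) (h3.trans hfstar)
    have h7 : C.mulVec (∑ t ∈ Finset.Icc 1 n, v t) m - n * sbar m ≤ M * (ρ * M) := by
      simp only [Finset.sum_const, Finset.card_univ, Fintype.card_fin, nsmul_eq_mul] at h4
      linarith
    have h8 := mul_le_mul_of_nonneg_left h7 hτ.le
    unfold energyVec
    rw [h1]
    linarith
  refine ⟨key, ?_⟩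
  unfold lifetime
  rw [sInf_eq_top]
  rintro x ⟨n, -, -, m, hm⟩
  exact absurd (key (n + 1) (by omega) m) (not_le.mpr hm)
end

section
/- Suppose assumptions (D1) and (D2) on the recharge rates hold. Let v̄* ∈ ℝ^M satisfy v̄* ≥ 0, uᵀ·v̄* = 1, and R·v̄* ≤ f*·u with f* < 0. Let (v^(n))_{n≥1} be a fixed (deterministic) sequence of decision vectors with ‖Σ_{t=1}^{n} v^(t) − n·v̄*‖_∞ ≤ M for all n ≥ 1. Then lim_{e0 → ∞} P( e^(n) ≥ 0 componentwise for all n ≥ 1 ) = 1. -/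
open MeasureTheory Filter Finset Matrix

lemma aux_mgf_step {Ω : Type*} (G : MeasurableSpace Ω) {m0 : MeasurableSpace Ω}
    (μ : Measure Ω) [IsProbabilityMeasure μ]
    (hG : G ≤ m0) (Z X : Ω → ℝ) (hZ : Measurable[G] Z)
    (hX : Measurable X) (B : ℝ) (hZpos : ∀ ω, 0 ≤ Z ω) (hZB : ∀ᵐ ω ∂μ, Z ω ≤ B)
    (S l : ℝ) (hl : 0 < l) (hlS : l * S ≤ 1)
    (hXS : ∀ᵐ ω ∂μ, |X ω| ≤ S) (hc : μ[X | G] =ᵐ[μ] 0) :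
    ∫ ω, Z ω * Real.exp (l * X ω) ∂μ ≤ (1 + l ^ 2 * S ^ 2) * ∫ ω, Z ω ∂μ := by
  have hZ0 : Measurable Z := hZ.mono hG le_rfl
  have iZ : Integrable Z μ := by
    refine Integrable.of_bound hZ0.aestronglyMeasurable B ?_
    filter_upwards [hZB] with ω h
    rwa [Real.norm_eq_abs, abs_of_nonneg (hZpos ω)]
  have iX : Integrable X μ := Integrable.of_bound hX.aestronglyMeasurable S (by simpa using hXS)
  have iZX : Integrable (Z * X) μ := by
    refine Integrable.of_bound (hZ0.mul hX).aestronglyMeasurable (B * S) ?_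
    filter_upwards [hZB, hXS] with ω h h'
    simp only [Pi.mul_apply, Real.norm_eq_abs, abs_mul]
    rw [abs_of_nonneg (hZpos ω)]
    exact mul_le_mul h h' (abs_nonneg _) ((hZpos ω).trans h)
  have hzero : ∫ ω, (Z * X) ω ∂μ = 0 := by
    rw [← integral_condExp hG]
    have h1 := condExp_mul_of_stronglyMeasurable_left (μ := μ) (m := G) hZ.stronglyMeasurable iZX iX
    have : μ[Z * X | G] =ᵐ[μ] 0 := by
      filter_upwards [h1, hc] with ω h h'
      simp [h, h']
    rw [integral_congr_ae this]; simp
  have iE : Integrable (fun ω => Z ω * Real.exp (l * X ω)) μ := by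
    refine Integrable.of_bound (by fun_prop) (B * Real.exp 1) ?_
    filter_upwards [hZB, hXS] with ω h h'
    rw [Real.norm_eq_abs, abs_mul, abs_of_nonneg (hZpos ω), Real.abs_exp]
    refine mul_le_mul h (Real.exp_le_exp.2 ?_) (Real.exp_pos _).le ((hZpos ω).trans h)
    exact (mul_le_mul_of_nonneg_left ((le_abs_self _).trans h') hl.le).trans hlS
  calc ∫ ω, Z ω * Real.exp (l * X ω) ∂μ
      ≤ ∫ ω, ((1 + l ^ 2 * S ^ 2) * Z ω + l * (Z * X) ω) ∂μ := by
        refine integral_mono_ae iE ((iZ.const_mul _).add (iZX.const_mul _)) ?_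
        filter_upwards [hXS] with ω h
        have hb : |l * X ω| ≤ 1 := by
          rw [abs_mul, abs_of_pos hl]
          exact (mul_le_mul_of_nonneg_left h hl.le).trans hlS
        have h1 := (abs_le.1 (Real.abs_exp_sub_one_sub_id_le hb)).2
        have h2 : (l * X ω) ^ 2 ≤ l ^ 2 * S ^ 2 := by
          rw [mul_pow]
          exact mul_le_mul_of_nonneg_left (sq_le_sq' (abs_le.1 h).1 (abs_le.1 h).2) (sq_nonneg _)
        have h3 : Real.exp (l * X ω) ≤ 1 + l ^ 2 * S ^ 2 + l * X ω := by linarith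
        have := mul_le_mul_of_nonneg_left h3 (hZpos ω)
        simp only [Pi.mul_apply]
        linarith
    _ = _ := by
        rw [integral_add (iZ.const_mul _) (iZX.const_mul _), integral_const_mul,
          integral_const_mul, hzero]; ring

lemma aux_bdd {Ω : Type*} {m0 : MeasurableSpace Ω} (μ : Measure Ω) [IsProbabilityMeasure μ]
    (G : ℕ → MeasurableSpace Ω) (hG : ∀ n, G n ≤ m0) (X : ℕ → Ω → ℝ)
    (hX : ∀ n, Measurable (X n))
    (hGX : ∀ n, Measurable[G n] (fun ω => ∑ t ∈ Finset.Icc 1 n, X t ω))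
    (S : ℝ) (hS : 0 < S) (hXS : ∀ n, ∀ᵐ ω ∂μ, |X (n + 1) ω| ≤ S)
    (hc : ∀ n, μ[X (n + 1) | G n] =ᵐ[μ] 0) (δ : ℝ) (hδ : 0 < δ) :
    ∀ᵐ ω ∂μ, ∃ B : ℝ, ∀ n : ℕ, ∑ t ∈ Finset.Icc 1 n, X t ω ≤ n * δ + B := by
  obtain ⟨l, hl, hlS, hlδ⟩ : ∃ l : ℝ, 0 < l ∧ l * S ≤ 1 ∧ l * S ^ 2 ≤ δ / 2 := by
    refine ⟨min (1 / S) (δ / 2 / S ^ 2), by positivity, ?_, ?_⟩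
    · rw [← le_div_iff₀ hS]; exact min_le_left _ _
    · rw [← le_div_iff₀ (by positivity)]; exact min_le_right _ _
  have hbd : ∀ n : ℕ, ∀ᵐ ω ∂μ, Real.exp (l * ∑ t ∈ Finset.Icc 1 n, X t ω) ≤ Real.exp (l * (n * S)) := by
    intro n
    filter_upwards [ae_all_iff.2 hXS] with ω h
    refine Real.exp_le_exp.2 (mul_le_mul_of_nonneg_left ?_ hl.le)
    have : ∑ t ∈ Finset.Icc 1 n, X t ω ≤ ∑ t ∈ Finset.Icc 1 n, S := by
      refine Finset.sum_le_sum fun t ht => ?_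
      obtain ⟨k, rfl⟩ := Nat.exists_eq_add_of_le' (Finset.mem_Icc.1 ht).1
      exact (le_abs_self _).trans (h k)
    simpa using this
  have hme : ∀ n, Measurable (fun ω => Real.exp (l * ∑ t ∈ Finset.Icc 1 n, X t ω)) := by
    intro n; fun_prop
  have hint : ∀ n, Integrable (fun ω => Real.exp (l * ∑ t ∈ Finset.Icc 1 n, X t ω)) μ := by
    intro n
    refine Integrable.of_bound (hme n).aestronglyMeasurable (Real.exp (l * (n * S))) ?_
    · simpa only [Real.norm_eq_abs, Real.abs_exp] using hbd n
  have hI : ∀ n : ℕ, ∫ ω, Real.exp (l * ∑ t ∈ Finset.Icc 1 n, X t ω) ∂μ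
      ≤ (1 + l ^ 2 * S ^ 2) ^ n := by
    intro n
    induction n with
    | zero => simp
    | succ n ih =>
      have hm : Measurable[G n] (fun ω => Real.exp (l * ∑ t ∈ Finset.Icc 1 n, X t ω)) :=
        Real.measurable_exp.comp ((hGX n).const_mul l)
      have := aux_mgf_step (G n) μ (hG n) _ (X (n + 1)) hm (hX _) _
        (fun ω => (Real.exp_pos _).le) (hbd n) S l hl hlS (hXS n) (hc n)
      calc _ = ∫ ω, Real.exp (l * ∑ t ∈ Finset.Icc 1 n, X t ω) * Real.exp (l * X (n + 1) ω) ∂μ := by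
            refine integral_congr_ae (ae_of_all _ fun ω => ?_)
            simp only
            rw [← Real.exp_add, Finset.sum_Icc_succ_top (by omega), mul_add]
        _ ≤ _ := this
        _ ≤ (1 + l ^ 2 * S ^ 2) * (1 + l ^ 2 * S ^ 2) ^ n :=
            mul_le_mul_of_nonneg_left ih (by positivity)
        _ = _ := by ring
  set F : ℕ → Ω → ENNReal := fun n ω =>
    ENNReal.ofReal (Real.exp (-(l * (n * δ))) * Real.exp (l * ∑ t ∈ Finset.Icc 1 n, X t ω)) with hF
  have hFm : ∀ n, Measurable (F n) := fun n => ((hme n).const_mul _).ennreal_ofReal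
  have hFi : ∀ n : ℕ, ∫⁻ ω, F n ω ∂μ ≤ ENNReal.ofReal (Real.exp (-(l * δ / 2)) ^ n) := by
    intro n
    rw [← ofReal_integral_eq_lintegral_ofReal ((hint n).const_mul _)
      (ae_of_all _ fun ω => by positivity)]
    refine ENNReal.ofReal_le_ofReal ?_
    rw [integral_const_mul]
    calc _ ≤ Real.exp (-(l * (n * δ))) * Real.exp (l * δ / 2) ^ n := by
          refine mul_le_mul_of_nonneg_left ((hI n).trans ?_) (Real.exp_pos _).le
          refine pow_le_pow_left₀ (by positivity) ?_ n
          have := Real.add_one_le_exp (l * δ / 2)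
          nlinarith
      _ = _ := by
          rw [← Real.exp_nat_mul, ← Real.exp_nat_mul, ← Real.exp_add]
          congr 1; ring
  have hsum : ∫⁻ ω, ∑' n, F n ω ∂μ ≠ ⊤ := by
    rw [lintegral_tsum fun n => (hFm n).aemeasurable]
    refine ne_top_of_le_ne_top ?_ (ENNReal.tsum_le_tsum hFi)
    refine Summable.tsum_ofReal_ne_top ?_
    refine summable_geometric_of_lt_one (Real.exp_pos _).le ?_
    rw [Real.exp_lt_one_iff]
    have : 0 < l * δ := by positivity
    linarith
  filter_upwards [ae_lt_top (Measurable.tsum hFm) hsum] with ω hω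
  refine ⟨(∑' n, F n ω).toReal / l, fun n => ?_⟩
  have h1 : F n ω ≤ ∑' n, F n ω := ENNReal.le_tsum n
  have h2 := (ENNReal.ofReal_le_iff_le_toReal hω.ne).1 h1
  rw [← Real.exp_add] at h2
  have h3 := Real.add_one_le_exp (-(l * (n * δ)) + l * ∑ t ∈ Finset.Icc 1 n, X t ω)
  rw [← sub_le_iff_le_add', le_div_iff₀ hl]
  linarith

/-- Under (D1) and (D2), if a fixed decision sequence tracks target fractions `v̄*`
(feasible for the LP with `f* < 0`) within `M`, then the probability that all energies
stay nonnegative forever tends to `1` as `e0 → ∞`. -/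
theorem energies_nonneg_whp_of_fstar_neg
    {M : ℕ} (hM : 2 ≤ M)
    (τ : ℝ) (hτ : 0 < τ)
    (C : Matrix (Fin M) (Fin M) ℝ) (hC : ∀ i j, 0 ≤ C i j)
    (sbar : Fin M → ℝ) (S : ℝ) (hS : 0 < S)
    (hsbarS : ∀ m, 0 ≤ sbar m ∧ sbar m ≤ S)
    {Ω : Type*} {m0 : MeasurableSpace Ω} (μ : Measure Ω) [IsProbabilityMeasure μ]
    (s : ℕ → Ω → Fin M → ℝ) (hmeas : ∀ n, Measurable (s n))
    -- (D1): constant conditional expectation given the past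
    (hD1 : ∀ n, 1 ≤ n →
      (μ[s n | ⨆ i ∈ Finset.Icc 1 (n-1), MeasurableSpace.comap (s i) inferInstance]
        =ᵐ[μ] (fun _ => sbar)))
    -- (D2): boundedness
    (hD2 : ∀ n, 1 ≤ n → ∀ᵐ ω ∂μ, ∀ m, 0 ≤ s n ω m ∧ s n ω m ≤ S)
    (vbar : Fin M → ℝ) (fstar : ℝ) (hfstar : fstar < 0)
    (hvpos : ∀ m, 0 ≤ vbar m) (hvsum : (∑ m, vbar m) = 1)
    (hfeas : ∀ m, (C - Matrix.of fun i _ => sbar i).mulVec vbar m ≤ fstar)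
    (v : ℕ → Fin M → ℝ) (hvdec : ∀ t, IsDecision (v t))
    (hclose : ∀ n, 1 ≤ n → ∀ m,
      |(∑ t ∈ Finset.Icc 1 n, v t m) - (n : ℝ) * vbar m| ≤ M) :
    Tendsto (fun e0 : ℝ => μ {ω | ∀ n, 1 ≤ n → ∀ m,
        0 ≤ energyVec τ C e0 (fun t => s t ω) v n m})
      atTop (nhds 1) := by
  have hMpos : 0 < M := by omega
  set G : ℕ → MeasurableSpace Ω := fun n =>
    ⨆ i ∈ Finset.Icc 1 n, MeasurableSpace.comap (s i) inferInstance with hGdef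
  have hG : ∀ n, G n ≤ m0 := fun n => iSup₂_le fun i _ => (hmeas i).comap_le
  have hsG : ∀ n, ∀ i ∈ Finset.Icc 1 n, Measurable[G n] (s i) := by
    intro n i hi
    exact (comap_measurable (s i)).mono
      (le_iSup₂_of_le (f := fun i (_ : i ∈ Finset.Icc 1 n) =>
        MeasurableSpace.comap (s i) inferInstance) i hi le_rfl) le_rfl
  have hint : ∀ n, Integrable (s (n + 1)) μ := by
    intro n
    refine Integrable.of_bound (hmeas _).aestronglyMeasurable S ?_
    filter_upwards [hD2 (n + 1) (by omega)] with ω h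
    rw [pi_norm_le_iff_of_nonneg hS.le]
    intro m
    rw [Real.norm_eq_abs, abs_of_nonneg (h m).1]
    exact (h m).2
  have key : ∀ m, ∀ᵐ ω ∂μ, ∃ B : ℝ, ∀ n : ℕ,
      ∑ t ∈ Finset.Icc 1 n, (sbar m - s t ω m) ≤ n * (-fstar) + B := by
    intro m
    refine aux_bdd μ G hG (fun t ω => sbar m - s t ω m) ?_ ?_ S hS ?_ ?_ (-fstar) (by linarith)
    · intro n
      exact measurable_const.sub ((measurable_pi_apply m).comp (hmeas n))
    · intro n
      refine Finset.measurable_fun_sum _ fun i hi => ?_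
      exact measurable_const.sub ((measurable_pi_apply m).comp (hsG n i hi))
    · intro n
      filter_upwards [hD2 (n + 1) (by omega)] with ω h
      have := h m
      have := hsbarS m
      rw [abs_le]; constructor <;> linarith
    · intro n
      have h0 := hD1 (n + 1) (by omega)
      have h1 := ContinuousLinearMap.comp_condExp_comm (m := G n) (hint n)
        (ContinuousLinearMap.proj (R := ℝ) (φ := fun _ : Fin M => ℝ) m)
      have h2 : Integrable (fun ω => s (n + 1) ω m) μ :=
        (ContinuousLinearMap.proj (R := ℝ) (φ := fun _ : Fin M => ℝ) m).integrable_comp (hint n)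
      have h3 := condExp_sub (μ := μ) (integrable_const (sbar m)) h2 (G n)
      have h4 : μ[fun ω => sbar m - s (n + 1) ω m | G n] =ᵐ[μ]
        μ[fun _ : Ω => sbar m | G n] - μ[fun ω => s (n + 1) ω m | G n] := h3
      rw [condExp_const (hG n)] at h4
      filter_upwards [h0, h1, h4] with ω e0 e1 e4
      have e0' : (μ[s (n + 1) | G n]) ω = sbar := e0
      have e1' : (μ[s (n + 1) | G n]) ω m = (μ[fun ω => s (n + 1) ω m | G n]) ω := e1
      rw [e4, Pi.sub_apply, ← e1', e0']
      simp
  set A : ℝ → Set Ω := fun e0 => {ω | ∀ n, 1 ≤ n → ∀ m,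
        0 ≤ energyVec τ C e0 (fun t => s t ω) v n m} with hA
  have hmono : Monotone A := by
    intro a b hab ω hω n hn m
    have := hω n hn m
    simp only [energyVec] at this ⊢
    linarith
  have hlim := tendsto_measure_iUnion_atTop (μ := μ) hmono
  suffices h : μ (⋃ e, A e) = 1 by rw [h] at hlim; exact hlim
  rw [← measure_univ (μ := μ)]
  refine measure_congr (eventuallyEq_univ.2 ?_)
  filter_upwards [ae_all_iff.2 key] with ω hω
  choose B hB using hω
  rw [Set.mem_iUnion]
  refine ⟨∑ m, τ * (|B m| + ∑ j, C m j * M), fun n hn m => ?_⟩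
  have hle : τ * (|B m| + ∑ j, C m j * M) ≤ ∑ m, τ * (|B m| + ∑ j, C m j * M) := by
    refine Finset.single_le_sum (f := fun m => τ * (|B m| + ∑ j, C m j * M))
      (fun i _ => ?_) (Finset.mem_univ m)
    refine mul_nonneg hτ.le (add_nonneg (abs_nonneg _) (Finset.sum_nonneg fun j _ => ?_))
    exact mul_nonneg (hC _ _) (Nat.cast_nonneg _)
  have h1 := hB m n
  rw [Finset.sum_sub_distrib] at h1
  simp only [Finset.sum_const, Nat.card_Icc, Nat.add_sub_cancel, nsmul_eq_mul] at h1
  have h2 : C.mulVec vbar m - sbar m ≤ fstar := by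
    have := hfeas m
    rw [Matrix.sub_mulVec, Pi.sub_apply] at this
    have h : (Matrix.of fun i (_ : Fin M) => sbar i).mulVec vbar m = sbar m := by
      simp [Matrix.mulVec, dotProduct, ← Finset.mul_sum, hvsum]
    rwa [h] at this
  have h3 : C.mulVec (∑ t ∈ Finset.Icc 1 n, v t) m ≤ n * C.mulVec vbar m + ∑ j, C m j * M := by
    simp only [Matrix.mulVec, dotProduct, Finset.mul_sum]
    rw [← Finset.sum_add_distrib]
    refine Finset.sum_le_sum fun j _ => ?_
    have := (abs_le.1 (hclose n hn j)).2
    rw [Finset.sum_apply]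
    have := mul_le_mul_of_nonneg_left this (hC m j)
    linarith
  have h4 := mul_le_mul_of_nonneg_left h2 (Nat.cast_nonneg (α := ℝ) n)
  have h5 := le_abs_self (B m)
  have h6 : 0 ≤ τ * (|B m| + ∑ j, C m j * M + ∑ t ∈ Finset.Icc 1 n, s t ω m
      - C.mulVec (∑ t ∈ Finset.Icc 1 n, v t) m) := by
    refine mul_nonneg hτ.le ?_
    linarith
  simp only [energyVec]
  linarith
end

section
/- Suppose assumptions (D1) and (D2) on the recharge rates hold. Let v̄* ∈ ℝ^M satisfy v̄* ≥ 0, uᵀ·v̄* = 1, and R·v̄* ≤ f*·u with f* < 0; set ρ = max_{i,j}|R_{ij}|, and for a BS index m set a_m = (R·v̄*)_m (so a_m ≤ f* < 0). Let (v^(n))_{n≥1} be a fixed (deterministic) sequence of decision vectors with ‖Σ_{t=1}^{n} v^(t) − n·v̄*‖_∞ ≤ M for all n ≥ 1, and suppose e0 > M²·τ·ρ. Then P( ∃ n ≥ 2 with e_m^(n) < 0 ) ≤ β · exp( (e0 − M²·τ·ρ)·a_m / (τ·S²) ), where β = Σ_{n=2}^{∞} exp( −n·a_m² / (2·S²) )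 < ∞. -/
open MeasureTheory Filter Finset Matrix

/-- Exponential moment bound for sums of bounded martingale differences. -/
lemma azuma_exp_moment {Ω : Type*} {m0 : MeasurableSpace Ω} (μ : Measure Ω)
    [IsProbabilityMeasure μ] (Y : ℕ → Ω → ℝ) (F : ℕ → MeasurableSpace Ω)
    (hF : ∀ n, F n ≤ m0) (hYF : ∀ n, ∀ i ∈ Finset.Icc 1 n, Measurable[F n] (Y i))
    (S : ℝ) (hS : 0 < S)
    (hY0 : ∀ n, μ[Y (n + 1) | F n] =ᵐ[μ] 0)
    (hYb : ∀ n, 1 ≤ n → ∀ᵐ ω ∂μ, |Y n ω| ≤ S) (θ : ℝ) (n : ℕ) :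
    Integrable (fun ω => Real.exp (θ * ∑ t ∈ Finset.Icc 1 n, Y t ω)) μ ∧
    ∫ ω, Real.exp (θ * ∑ t ∈ Finset.Icc 1 n, Y t ω) ∂μ ≤ Real.exp (n * (θ ^ 2 * S ^ 2 / 2)) := by
  have hmY : ∀ i, 1 ≤ i → Measurable (Y i) := fun i hi =>
    (hYF i i (by simp [hi])).mono (hF i) le_rfl
  have hmG : ∀ n, Measurable[F n] (fun ω => Real.exp (θ * ∑ t ∈ Finset.Icc 1 n, Y t ω)) := by
    intro n
    refine Real.measurable_exp.comp (Measurable.const_mul ?_ θ)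
    exact Finset.measurable_fun_sum _ (fun i hi => hYF n i hi)
  induction n with
  | zero => simp
  | succ n ih =>
    obtain ⟨ihI, ihB⟩ := ih
    set G : Ω → ℝ := fun ω => Real.exp (θ * ∑ t ∈ Finset.Icc 1 n, Y t ω) with hG
    have hYm := hmY (n + 1) (by omega)
    have hb := hYb (n + 1) (by omega)
    have hYI : Integrable (Y (n + 1)) μ := Integrable.of_bound hYm.aestronglyMeasurable S hb
    have hGY : Integrable (G * Y (n + 1)) μ :=
      ihI.mul_bdd (c := S) hYm.aestronglyMeasurable hb
    have hzero : ∫ ω, (G * Y (n + 1)) ω ∂μ = 0 := by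
      rw [← integral_condExp (hF n)]
      have h1 := condExp_mul_of_stronglyMeasurable_left (m := F n) (μ := μ)
        (hmG n).stronglyMeasurable hGY hYI
      have h2 : μ[G * Y (n + 1) | F n] =ᵐ[μ] 0 := by
        filter_upwards [h1, hY0 n] with ω h1 h2
        rw [h1, Pi.mul_apply, h2]; simp
      rw [integral_congr_ae h2]; simp
    have hle : ∀ᵐ ω ∂μ, Real.exp (θ * ∑ t ∈ Finset.Icc 1 (n + 1), Y t ω) ≤
        Real.cosh (θ * S) * G ω + Real.sinh (θ * S) / S * (G * Y (n + 1)) ω := by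
      filter_upwards [hb] with ω hω
      rw [Finset.sum_Icc_succ_top (by omega), mul_add, Real.exp_add]
      have h := Real.exp_mul_le_cosh_add_mul_sinh (t := Y (n + 1) ω / S)
        (by rw [abs_div, abs_of_pos hS]; exact (div_le_one hS).2 hω) (θ * S)
      have e : Y (n + 1) ω / S * (θ * S) = θ * Y (n + 1) ω := by field_simp
      rw [e] at h
      have hp : 0 ≤ G ω := (Real.exp_pos _).le
      calc G ω * Real.exp (θ * Y (n + 1) ω) ≤ G ω * _ := mul_le_mul_of_nonneg_left h hp
        _ = _ := by simp only [Pi.mul_apply]; ring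
    have hI2 : Integrable (fun ω => Real.cosh (θ * S) * G ω +
        Real.sinh (θ * S) / S * (G * Y (n + 1)) ω) μ :=
      (ihI.const_mul _).add (hGY.const_mul _)
    have hI1 : Integrable (fun ω => Real.exp (θ * ∑ t ∈ Finset.Icc 1 (n + 1), Y t ω)) μ := by
      refine hI2.mono' ((hmG (n + 1)).mono (hF _) le_rfl).aestronglyMeasurable ?_
      filter_upwards [hle] with ω h
      rwa [Real.norm_of_nonneg (Real.exp_pos _).le]
    refine ⟨hI1, (integral_mono_ae hI1 hI2 hle).trans ?_⟩
    rw [integral_add (ihI.const_mul _) (hGY.const_mul _), integral_const_mul, integral_const_mul,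
      hzero, mul_zero, add_zero]
    have hc := Real.cosh_le_exp_half_sq (θ * S)
    calc _ ≤ Real.exp ((θ * S) ^ 2 / 2) * Real.exp (n * (θ ^ 2 * S ^ 2 / 2)) :=
          mul_le_mul hc ihB (integral_nonneg fun ω => (Real.exp_pos _).le) (Real.exp_pos _).le
      _ = _ := by rw [← Real.exp_add]; congr 1; push_cast; ring

/-- Under (D1) and (D2), with feasible target fractions `v̄*` (LP value `f* < 0`) tracked
within `M` by a fixed decision sequence, `a_m = (R·v̄*)_m ≤ f* < 0`, `ρ = max_{i,j}|R_{ij}|`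
and `e0 > M²·τ·ρ`, the probability that station `m` ever runs out of energy is at most
`β·exp((e0 − M²τρ)·a_m/(τS²))` where `β = Σ_{n=2}^∞ exp(−n·a_m²/(2S²)) < ∞`. -/
theorem ruin_probability_bound_of_fstar_neg
    {M : ℕ} (hM : 2 ≤ M)
    (τ : ℝ) (hτ : 0 < τ)
    (C : Matrix (Fin M) (Fin M) ℝ) (hC : ∀ i j, 0 ≤ C i j)
    (sbar : Fin M → ℝ) (S : ℝ) (hS : 0 < S)
    (hsbarS : ∀ m, 0 ≤ sbar m ∧ sbar m ≤ S)
    {Ω : Type*} {m0 : MeasurableSpace Ω} (μ : Measure Ω) [IsProbabilityMeasure μ]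
    (s : ℕ → Ω → Fin M → ℝ) (hmeas : ∀ n, Measurable (s n))
    -- (D1): constant conditional expectation given the past
    (hD1 : ∀ n, 1 ≤ n →
      (μ[s n | ⨆ i ∈ Finset.Icc 1 (n-1), MeasurableSpace.comap (s i) inferInstance]
        =ᵐ[μ] (fun _ => sbar)))
    -- (D2): boundedness
    (hD2 : ∀ n, 1 ≤ n → ∀ᵐ ω ∂μ, ∀ m, 0 ≤ s n ω m ∧ s n ω m ≤ S)
    (vbar : Fin M → ℝ) (fstar : ℝ) (hfstar : fstar < 0)
    (hvpos : ∀ m, 0 ≤ vbar m) (hvsum : (∑ m, vbar m) = 1)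
    (hfeas : ∀ m, (C - Matrix.of fun i _ => sbar i).mulVec vbar m ≤ fstar)
    (ρ : ℝ)
    (hρub : ∀ i j, |C i j - sbar i| ≤ ρ)
    (hρmem : ∃ i j, ρ = |C i j - sbar i|)
    (v : ℕ → Fin M → ℝ) (hvdec : ∀ t, IsDecision (v t))
    (hclose : ∀ n, 1 ≤ n → ∀ m,
      |(∑ t ∈ Finset.Icc 1 n, v t m) - (n : ℝ) * vbar m| ≤ M)
    (m : Fin M) (a : ℝ) (ha : a = (C - Matrix.of fun i _ => sbar i).mulVec vbar m)
    (e0 : ℝ) (he0 : (M : ℝ)^2 * τ * ρ < e0) :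
    Summable (fun n : ℕ => Real.exp (-(((n : ℝ) + 2) * a^2) / (2 * S^2))) ∧
    μ {ω | ∃ n : ℕ, 2 ≤ n ∧ energyVec τ C e0 (fun t => s t ω) v n m < 0}
      ≤ ENNReal.ofReal ((∑' n : ℕ, Real.exp (-(((n : ℝ) + 2) * a^2) / (2 * S^2))) *
          Real.exp ((e0 - (M : ℝ)^2 * τ * ρ) * a / (τ * S^2))) := by
  have ha0 : a < 0 := by rw [ha]; exact (hfeas m).trans_lt hfstar
  have ha2 : 0 < a ^ 2 / (2 * S ^ 2) := by have := ha0.ne; positivity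
  have hsum : Summable (fun n : ℕ => Real.exp (-(((n : ℝ) + 2) * a^2) / (2 * S^2))) := by
    have h1 : Summable (fun n : ℕ => Real.exp (n * (-(a ^ 2 / (2 * S ^ 2))))) :=
      Real.summable_exp_nat_mul_iff.2 (by linarith)
    refine ((summable_nat_add_iff 2).2 h1).congr fun n => ?_
    congr 1; push_cast; ring
  refine ⟨hsum, ?_⟩
  set Y : ℕ → Ω → ℝ := fun n ω => sbar m - s n ω m with hYdef
  set F : ℕ → MeasurableSpace Ω := fun n =>
    ⨆ i ∈ Finset.Icc 1 n, MeasurableSpace.comap (s i) inferInstance with hFdef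
  have hF : ∀ n, F n ≤ m0 := fun n => iSup₂_le fun i _ => (hmeas i).comap_le
  have hYF : ∀ n, ∀ i ∈ Finset.Icc 1 n, Measurable[F n] (Y i) := by
    intro n i hi
    have h1 : Measurable[F n] (s i) := by
      refine (comap_measurable (s i)).mono ?_ le_rfl
      exact le_iSup₂ (f := fun i (_ : i ∈ Finset.Icc 1 n) =>
        MeasurableSpace.comap (s i) inferInstance) i hi
    exact ((measurable_pi_apply m).comp h1).const_sub _
  have hY0 : ∀ n, μ[Y (n + 1) | F n] =ᵐ[μ] 0 := by
    intro n
    have hsI : Integrable (s (n + 1)) μ := by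
      refine Integrable.of_bound (hmeas _).aestronglyMeasurable S ?_
      filter_upwards [hD2 (n + 1) (by omega)] with ω h
      refine (pi_norm_le_iff_of_nonneg hS.le).2 fun i => ?_
      rw [Real.norm_of_nonneg (h i).1]; exact (h i).2
    have h1 := ContinuousLinearMap.comp_condExp_add_const_comm (hF n) hsI
      (-(ContinuousLinearMap.proj (R := ℝ) (φ := fun _ : Fin M => ℝ) m)) (sbar m)
    have h2 := hD1 (n + 1) (by omega)
    have h3 : (fun y => (-(ContinuousLinearMap.proj (R := ℝ) (φ := fun _ : Fin M => ℝ) m))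
        (s (n + 1) y) + sbar m) = Y (n + 1) := by
      ext ω; simp [hYdef]; ring
    rw [h3] at h1
    filter_upwards [h1, h2] with ω h1 h2
    rw [← h1]
    simp only [Nat.add_sub_cancel] at h2
    have h4 : (μ[s (n + 1) | F n]) ω = sbar := h2
    rw [h4]; simp
  have hYb : ∀ n, 1 ≤ n → ∀ᵐ ω ∂μ, |Y n ω| ≤ S := by
    intro n hn
    filter_upwards [hD2 n hn] with ω h
    have := h m; have := hsbarS m
    simp only [hYdef]
    rw [abs_le]; constructor <;> linarith
  -- the deterministic inclusion
  have hdet : ∀ n, 1 ≤ n → ∀ ω, energyVec τ C e0 (fun t => s t ω) v n m < 0 →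
      (e0 - (M : ℝ)^2 * τ * ρ) / τ - n * a ≤ ∑ t ∈ Finset.Icc 1 n, Y t ω := by
    intro n hn ω hlt
    set w : Fin M → ℝ := ∑ t ∈ Finset.Icc 1 n, v t with hw
    have hwsum : ∑ j, w j = n := by
      simp only [hw, Finset.sum_apply]
      rw [Finset.sum_comm]
      simp [fun t => (hvdec t).2]
    have hdiff : ∑ j, (C m j - sbar m) * (w j - n * vbar j) ≤ (M : ℝ) ^ 2 * ρ := by
      calc _ ≤ ∑ j : Fin M, ρ * (M : ℝ) := by
            refine Finset.sum_le_sum fun j _ => ?_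
            have h1 := hclose n hn j
            have h2 := hρub m j
            rw [← Finset.sum_apply] at h1
            refine (le_abs_self _).trans ?_
            rw [abs_mul]
            exact mul_le_mul h2 h1 (abs_nonneg _) ((abs_nonneg _).trans h2)
        _ = _ := by simp; ring
    have hav : a = ∑ j, (C m j - sbar m) * vbar j := by
      rw [ha]; simp [Matrix.mulVec, dotProduct]
    have hCw : C.mulVec w m = n * a + n * sbar m +
        ∑ j, (C m j - sbar m) * (w j - n * vbar j) := by
      rw [hav, ← hwsum]
      simp only [Matrix.mulVec, dotProduct]
      rw [hwsum, Finset.mul_sum]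
      nth_rewrite 2 [← hwsum]
      rw [Finset.sum_mul, ← Finset.sum_add_distrib, ← Finset.sum_add_distrib]
      exact Finset.sum_congr rfl fun j _ => by ring
    have hYs : ∑ t ∈ Finset.Icc 1 n, Y t ω = n * sbar m - ∑ t ∈ Finset.Icc 1 n, s t ω m := by
      simp [hYdef, Finset.sum_sub_distrib]
    unfold energyVec at hlt
    rw [← hw, hCw] at hlt
    rw [hYs, sub_le_iff_le_add, div_le_iff₀ hτ]
    have := mul_le_mul_of_nonneg_left hdiff hτ.le
    nlinarith
  set x : ℝ := e0 - (M : ℝ)^2 * τ * ρ with hx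
  set θ : ℝ := -a / S ^ 2 with hθ
  have hθ0 : 0 < θ := by rw [hθ]; have : 0 < -a := by linarith
                         positivity
  have hpoint : ∀ n, 1 ≤ n → μ {ω | energyVec τ C e0 (fun t => s t ω) v n m < 0} ≤
      ENNReal.ofReal (Real.exp (-((n : ℝ) * a^2) / (2 * S^2)) * Real.exp (x * a / (τ * S ^ 2))) := by
    intro n hn
    obtain ⟨hI, hB⟩ := azuma_exp_moment μ Y F hF hYF S hS hY0 hYb θ n
    have hmk := mul_meas_ge_le_integral_of_nonneg (μ := μ)
      (ae_of_all _ fun ω => (Real.exp_pos (θ * ∑ t ∈ Finset.Icc 1 n, Y t ω)).le) hI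
      (Real.exp (θ * (x / τ - n * a)))
    have hsub : {ω | energyVec τ C e0 (fun t => s t ω) v n m < 0} ⊆
        {ω | Real.exp (θ * (x / τ - n * a)) ≤ Real.exp (θ * ∑ t ∈ Finset.Icc 1 n, Y t ω)} := by
      intro ω hω
      exact Real.exp_le_exp.2 (mul_le_mul_of_nonneg_left (hdet n hn ω hω) hθ0.le)
    refine (measure_mono hsub).trans ?_
    rw [← ofReal_measureReal]
    refine ENNReal.ofReal_le_ofReal ?_
    have h3 := hmk.trans hB
    rw [← le_div_iff₀' (Real.exp_pos _), ← Real.exp_sub] at h3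
    refine h3.trans (le_of_eq ?_)
    rw [← Real.exp_add]
    congr 1
    rw [hθ]; field_simp; ring
  calc μ {ω | ∃ n : ℕ, 2 ≤ n ∧ energyVec τ C e0 (fun t => s t ω) v n m < 0}
      ≤ μ (⋃ n : ℕ, {ω | energyVec τ C e0 (fun t => s t ω) v (n + 2) m < 0}) := by
        refine measure_mono ?_
        rintro ω ⟨n, hn, h⟩
        obtain ⟨k, rfl⟩ := Nat.exists_eq_add_of_le' hn
        exact Set.mem_iUnion.2 ⟨k, h⟩
    _ ≤ ∑' n : ℕ, μ {ω | energyVec τ C e0 (fun t => s t ω) v (n + 2) m < 0} :=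
        measure_iUnion_le _
    _ ≤ ∑' n : ℕ, ENNReal.ofReal (Real.exp (-(((n : ℝ) + 2) * a^2) / (2 * S^2)) *
          Real.exp (x * a / (τ * S ^ 2))) := by
        refine ENNReal.tsum_le_tsum fun n => ?_
        have := hpoint (n + 2) (by omega)
        push_cast at this
        exact this
    _ = _ := by
        rw [← ENNReal.ofReal_tsum_of_nonneg (fun n => by positivity) (hsum.mul_right _),
          tsum_mul_right]
end

section
/- Let f* > 0 and δ > 0, and suppose f* is a lower bound on the auxiliary LP value, i.e. for every v̄ ∈ ℝ^M with v̄ ≥ 0 and uᵀ·v̄ = 1 there exists an index m with (R·v̄)_m ≥ f*. Let n0 be a positive integer with n0 ≥ (1+δ)·e0/(τ·f*), let v^(1),…,v^(n0) be decision vectors, let s^(1),…,s^(n0) ∈ ℝ^M, and suppose the resulting available energy satisfies e^(n0) ≥ 0 componentwise. Then there exists an index m* such that (1/n0)·Σ_{t=1}^{n0} ( s_{m*}^(t) − s̄_{m*} ) ≥ f*·δ/(1+δ). -/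
open Matrix Finset

/-- If `f* > 0` lower-bounds the auxiliary LP and the energies are still nonnegative at
slot `n0 ≥ (1+δ)·e0/(τ·f*)`, then some station's empirical recharge deviation from its
mean must be at least `f*·δ/(1+δ)`. -/
theorem recharge_deviation_of_long_survival
    {M : ℕ} (hM : 2 ≤ M)
    (τ : ℝ) (hτ : 0 < τ)
    (C : Matrix (Fin M) (Fin M) ℝ) (hC : ∀ i j, 0 ≤ C i j)
    (sbar : Fin M → ℝ)
    (fstar δ e0 : ℝ) (hfstar : 0 < fstar) (hδ : 0 < δ) (he0 : 0 < e0)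
    -- `f*` is a lower bound for the auxiliary LP (with `R = C − s̄·uᵀ`)
    (hlb : ∀ vbar : Fin M → ℝ, (∀ m, 0 ≤ vbar m) → (∑ m, vbar m) = 1 →
      ∃ m, fstar ≤ (C - Matrix.of fun i _ => sbar i).mulVec vbar m)
    (n0 : ℕ) (hn0 : 1 ≤ n0) (hn0big : (1 + δ) * e0 / (τ * fstar) ≤ (n0 : ℝ))
    (v : ℕ → Fin M → ℝ) (hvdec : ∀ t, IsDecision (v t))
    (s : ℕ → Fin M → ℝ)
    (hE : ∀ m, 0 ≤ energyVec τ C e0 s v n0 m) :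
    ∃ m, fstar * δ / (1 + δ)
      ≤ (1 / (n0 : ℝ)) * ∑ t ∈ Finset.Icc 1 n0, (s t m - sbar m) := by
  have hn : (0 : ℝ) < n0 := by exact_mod_cast hn0
  have hsum : ∑ m, (∑ t ∈ Finset.Icc 1 n0, v t) m = (n0 : ℝ) := by
    simp only [Finset.sum_apply]
    rw [Finset.sum_comm, Finset.sum_congr rfl (fun t _ => (hvdec t).2)]
    simp
  have hnn : ∀ m, 0 ≤ (∑ t ∈ Finset.Icc 1 n0, v t) m := by
    intro m
    rw [Finset.sum_apply]
    refine Finset.sum_nonneg fun t _ => ?_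
    rcases (hvdec t).1 m with h | h <;> rw [h]
    exact zero_le_one
  have hE' := hE
  simp only [energyVec] at hE'
  generalize (∑ t ∈ Finset.Icc 1 n0, v t) = V at hsum hnn hE'
  obtain ⟨m, hm⟩ := hlb ((n0 : ℝ)⁻¹ • V)
    (fun m => mul_nonneg (inv_nonneg.2 hn.le) (hnn m))
    (by
      simp only [Pi.smul_apply, smul_eq_mul]
      rw [← Finset.mul_sum, hsum, inv_mul_cancel₀ hn.ne'])
  refine ⟨m, ?_⟩
  have h1 : (Matrix.of fun (i : Fin M) (_ : Fin M) => sbar i).mulVec V m = sbar m * n0 := by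
    simp only [Matrix.mulVec, dotProduct, Matrix.of_apply]
    rw [← Finset.mul_sum, hsum]
  rw [Matrix.mulVec_smul, Matrix.sub_mulVec, Pi.smul_apply, Pi.sub_apply, h1, smul_eq_mul,
    inv_mul_eq_div, le_div_iff₀ hn] at hm
  have hEm := hE' m
  rw [Finset.sum_sub_distrib, Finset.sum_const, Nat.card_Icc, nsmul_eq_mul, one_div,
    inv_mul_eq_div, le_div_iff₀ hn, Nat.add_sub_cancel]
  generalize C.mulVec V m = c at hm hEm
  generalize (∑ t ∈ Finset.Icc 1 n0, s t m) = S at hEm ⊢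
  rw [div_le_iff₀ (by positivity)] at hn0big
  rw [div_mul_eq_mul_div, div_le_iff₀ (by positivity)]
  have h2 : τ * (fstar * n0) ≤ τ * (c - sbar m * n0) := mul_le_mul_of_nonneg_left hm hτ.le
  have h3 : τ * (fstar * n0) - e0 ≤ τ * (S - n0 * sbar m) := by nlinarith
  have h4 := mul_le_mul_of_nonneg_right h3 (by positivity : (0 : ℝ) ≤ 1 + δ)
  refine le_of_mul_le_mul_left ?_ hτ
  nlinarith
end

section
/- Suppose all entries of C lie in [0, d2] and 0 ≤ s^(t) ≤ S componentwise for all t. Let (v^(t)) be decision vectors, let N' ≤ N be slot indices and l* a BS index such that: v_{l*}^(t) = 0 for all N' < t ≤ N+1 (BS l* is never active after slot N'), e_{l*}^(N') ≥ e_m^(N') for all 1 ≤ m ≤ M (l* has the highest available energy at slot N'), and e_{l*}^(N+1) < 0. Then e_m^(N+1) < τ·(d2 + S)·(N + 1 − N') for every 1 ≤ m ≤ M. -/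
open Matrix Finset

/-- One-slot bounds on the change of available energy. -/
theorem energyVec_step {M : ℕ} (τ : ℝ) (hτ : 0 < τ) (C : Matrix (Fin M) (Fin M) ℝ)
    (d2 S : ℝ) (hC : ∀ i j, 0 ≤ C i j ∧ C i j ≤ d2)
    (s : ℕ → Fin M → ℝ) (hs : ∀ t m, 0 ≤ s t m ∧ s t m ≤ S)
    (v : ℕ → Fin M → ℝ) (hvdec : ∀ t, IsDecision (v t)) (e0 : ℝ) (n : ℕ) (m : Fin M) :
    energyVec τ C e0 s v (n+1) m ≤ energyVec τ C e0 s v n m + τ * S ∧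
    energyVec τ C e0 s v n m - τ * d2 ≤ energyVec τ C e0 s v (n+1) m := by
  have hnn : ∀ j, 0 ≤ v (n+1) j := fun j => by
    rcases (hvdec (n+1)).1 j with h | h <;> rw [h] <;> norm_num
  have h0 : 0 ≤ C.mulVec (v (n+1)) m := by
    change 0 ≤ ∑ j, C m j * v (n+1) j
    exact Finset.sum_nonneg fun j _ => mul_nonneg (hC m j).1 (hnn j)
  have h1 : C.mulVec (v (n+1)) m ≤ d2 := by
    calc C.mulVec (v (n+1)) m = ∑ j, C m j * v (n+1) j := rfl
      _ ≤ ∑ j, d2 * v (n+1) j :=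
        Finset.sum_le_sum fun j _ => mul_le_mul_of_nonneg_right (hC m j).2 (hnn j)
      _ = d2 := by rw [← Finset.mul_sum, (hvdec (n+1)).2, mul_one]
  have e : energyVec τ C e0 s v (n+1) m =
      energyVec τ C e0 s v n m + τ * s (n+1) m - τ * C.mulVec (v (n+1)) m := by
    unfold energyVec
    rw [Finset.sum_Icc_succ_top (by omega), Finset.sum_Icc_succ_top (by omega),
      Matrix.mulVec_add, Pi.add_apply]
    ring
  have a := mul_le_mul_of_nonneg_left h1 hτ.le
  have b := mul_nonneg hτ.le h0
  have c := mul_le_mul_of_nonneg_left (hs (n+1) m).2 hτ.le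
  have d := mul_nonneg hτ.le (hs (n+1) m).1
  constructor <;> linarith

/-- Under the HEF rule, if the station `l` that dies at slot `N+1` was last active at slot
`N'` (where it had the highest energy), then at slot `N+1` every station has available
energy below `τ·(d2 + S)·(N + 1 − N')`. -/
theorem all_energies_small_at_death
    {M : ℕ} (hM : 2 ≤ M)
    (τ : ℝ) (hτ : 0 < τ)
    (C : Matrix (Fin M) (Fin M) ℝ)
    (d2 S : ℝ) (hd2 : 0 < d2) (hS : 0 < S)
    (hC : ∀ i j, 0 ≤ C i j ∧ C i j ≤ d2)
    (s : ℕ → Fin M → ℝ) (hs : ∀ t m, 0 ≤ s t m ∧ s t m ≤ S)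
    (v : ℕ → Fin M → ℝ) (hvdec : ∀ t, IsDecision (v t))
    (e0 : ℝ) (he0 : 0 < e0)
    (N' N : ℕ) (hNN : N' ≤ N) (l : Fin M)
    -- `l` is never active after slot `N'`
    (hnotact : ∀ t, N' < t → t ≤ N + 1 → v t l = 0)
    -- `l` has the highest available energy at slot `N'`
    (hhigh : ∀ m, energyVec τ C e0 s v N' m ≤ energyVec τ C e0 s v N' l)
    -- `l` is dead at slot `N+1`
    (hdead : energyVec τ C e0 s v (N+1) l < 0) :
    ∀ m, energyVec τ C e0 s v (N+1) m < τ * (d2 + S) * ((N : ℝ) + 1 - N') := by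
  have key : ∀ k : ℕ, ∀ m,
      energyVec τ C e0 s v (N'+k) m ≤ energyVec τ C e0 s v N' m + τ * S * k ∧
      energyVec τ C e0 s v N' m - τ * d2 * k ≤ energyVec τ C e0 s v (N'+k) m := by
    intro k m
    induction k with
    | zero => simp
    | succ k ih =>
      have h := energyVec_step τ hτ C d2 S hC s hs v hvdec e0 (N'+k) m
      rw [← add_assoc]
      push_cast
      constructor <;> linarith [h.1, h.2, ih.1, ih.2]
  intro m
  obtain ⟨k, hk⟩ := Nat.exists_eq_add_of_le (show N' ≤ N + 1 by omega)
  have hk' : (N : ℝ) + 1 = N' + k := by exact_mod_cast hk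
  rw [hk] at hdead ⊢
  rw [hk']
  have h1 := (key k m).1
  have h2 := (key k l).2
  have h3 := hhigh m
  linarith
end

section
/- Let R = C − s̄·uᵀ be invertible with uᵀ·R⁻¹·u ≠ 0, and let ‖R⁻¹‖ denote the ℓ∞ operator norm of R⁻¹ (so ‖R⁻¹·x‖_∞ ≤ ‖R⁻¹‖·‖x‖_∞). Let (v^(t)) be decision vectors, N ∈ ℕ, e0 > 0, d2 > 0, ε1 > 0, ε4 > 0, and suppose: (i) N+1 ≥ e0/(τ·d2); (ii) ‖e^(N+1)‖_∞ ≤ ε1·e0; (iii) ‖(1/(N+1))·Σ_{t=1}^{N+1} (s^(t) − s̄)‖_∞ ≤ ε4. Then, with η = ε1·d2 + ε4, ‖ (1/(N+1))·Σ_{t=1}^{N+1} v^(t) − R⁻¹·u/(uᵀ·R⁻¹·u) ‖_∞ ≤ ‖R⁻¹‖·η·( 1 + M·‖R⁻¹·u‖_∞ / |uᵀ·R⁻¹·u| ). -/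
open Matrix Finset

/-- If by slot `N+1` all stations have essentially exhausted their energy (ii) and the
empirical recharge average is close to its mean (iii), then the empirical fractions of
active time are close to the optimal fractions `R⁻¹·u/(uᵀ·R⁻¹·u)` in `ℓ∞` norm
(where the norm on `Fin M → ℝ` is the sup norm). -/
theorem empirical_fractions_close_to_optimal
    {M : ℕ} (hM : 2 ≤ M)
    (τ : ℝ) (hτ : 0 < τ)
    (C : Matrix (Fin M) (Fin M) ℝ) (hC : ∀ i j, 0 ≤ C i j)
    (sbar : Fin M → ℝ)
    (u : Fin M → ℝ) (hu : u = fun _ => 1)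
    (R : Matrix (Fin M) (Fin M) ℝ) (hRdef : R = C - Matrix.of fun i _ => sbar i)
    (hRdet : IsUnit R.det)
    (hq : (∑ m, R⁻¹.mulVec u m) ≠ 0)
    -- `Rnorm` is an `ℓ∞` operator norm bound for `R⁻¹`
    (Rnorm : ℝ) (hRnorm : ∀ x : Fin M → ℝ, ‖R⁻¹.mulVec x‖ ≤ Rnorm * ‖x‖)
    (s v : ℕ → Fin M → ℝ) (hvdec : ∀ t, IsDecision (v t))
    (N : ℕ) (e0 d2 ε1 ε4 : ℝ)
    (he0 : 0 < e0) (hd2 : 0 < d2) (hε1 : 0 < ε1) (hε4 : 0 < ε4)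
    -- (i)
    (h1 : e0 / (τ * d2) ≤ (N : ℝ) + 1)
    -- (ii)
    (h2 : ‖energyVec τ C e0 s v (N+1)‖ ≤ ε1 * e0)
    -- (iii)
    (h3 : ‖(fun m : Fin M => (1 / ((N : ℝ) + 1)) *
        ∑ t ∈ Finset.Icc 1 (N+1), (s t m - sbar m))‖ ≤ ε4) :
    ‖(fun m : Fin M => (1 / ((N : ℝ) + 1)) * (∑ t ∈ Finset.Icc 1 (N+1), v t m)
        - R⁻¹.mulVec u m / (∑ m', R⁻¹.mulVec u m'))‖
      ≤ Rnorm * (ε1 * d2 + ε4) *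
        (1 + (M : ℝ) * ‖R⁻¹.mulVec u‖ / |∑ m', R⁻¹.mulVec u m'|) := by
  have hn : (0 : ℝ) < (N : ℝ) + 1 := by positivity
  have hMpos : 0 < M := by omega
  haveI : Nonempty (Fin M) := ⟨⟨0, hMpos⟩⟩
  have hunorm : ‖u‖ = 1 := by
    rw [hu]
    simp
  have hR0 : 0 ≤ Rnorm := by
    have h := hRnorm u
    rw [hunorm, mul_one] at h
    exact le_trans (norm_nonneg _) h
  set n : ℝ := (N : ℝ) + 1 with hndef
  set V : Fin M → ℝ := ∑ t ∈ Finset.Icc 1 (N+1), v t with hV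
  have hVm : ∀ m, ∑ t ∈ Finset.Icc 1 (N+1), v t m = V m := by
    intro m
    rw [hV, Finset.sum_apply]
  have hVsum : ∑ m, V m = n := by
    simp only [← hVm]
    rw [Finset.sum_comm, Finset.sum_congr rfl (fun t _ => (hvdec t).2)]
    simp [hndef]
  set q : ℝ := ∑ m, R⁻¹.mulVec u m with hqdef
  set E := energyVec τ C e0 s v (N+1) with hE
  set D : Fin M → ℝ := fun m : Fin M => (1 / n) *
        ∑ t ∈ Finset.Icc 1 (N+1), (s t m - sbar m) with hD
  set κ : ℝ := e0 / (τ * n) with hκ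
  set δ : Fin M → ℝ := D - (1 / (τ * n)) • E with hδ
  set w : Fin M → ℝ := R⁻¹.mulVec δ with hw
  have hRa : R.mulVec ((1 / n) • V) = κ • u + δ := by
    have hs : (Matrix.of fun (i : Fin M) (_ : Fin M) => sbar i).mulVec V = fun m => sbar m * n := by
      funext m
      simp only [Matrix.mulVec, dotProduct, Matrix.of_apply]
      rw [← Finset.mul_sum, hVsum]
    rw [Matrix.mulVec_smul, hRdef, Matrix.sub_mulVec, hs]
    funext m
    have hEm : E m = e0 + τ * (∑ t ∈ Finset.Icc 1 (N+1), s t m) - τ * C.mulVec V m := rfl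
    have hDm : D m = (1 / n) * ((∑ t ∈ Finset.Icc 1 (N+1), s t m) - n * sbar m) := by
      simp [hD, Finset.sum_sub_distrib, hndef]
    simp only [hδ, Pi.smul_apply, Pi.sub_apply, Pi.add_apply, smul_eq_mul, hEm, hDm, hκ, hu]
    field_simp
    ring
  have ha : (1 / n) • V = κ • R⁻¹.mulVec u + w := by
    have h := congrArg (fun x => R⁻¹.mulVec x) hRa
    simp only [Matrix.mulVec_mulVec, Matrix.nonsing_inv_mul R hRdet, Matrix.one_mulVec,
      Matrix.mulVec_add, Matrix.mulVec_smul] at h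
    exact h
  have hδn : ‖δ‖ ≤ ε1 * d2 + ε4 := by
    have hk : κ ≤ d2 := by
      rw [div_le_iff₀ (by positivity)] at h1
      rw [hκ, div_le_iff₀ (by positivity)]
      linarith
    have hE2 : ‖(1 / (τ * n)) • E‖ ≤ ε1 * d2 := by
      rw [norm_smul, Real.norm_of_nonneg (by positivity)]
      calc 1 / (τ * n) * ‖E‖ ≤ 1 / (τ * n) * (ε1 * e0) := by gcongr
        _ = ε1 * κ := by rw [hκ]; ring
        _ ≤ ε1 * d2 := by gcongr
    have := norm_sub_le D ((1 / (τ * n)) • E)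
    rw [hδ]
    linarith
  have hwn : ‖w‖ ≤ Rnorm * (ε1 * d2 + ε4) :=
    (hRnorm δ).trans (mul_le_mul_of_nonneg_left hδn hR0)
  have hsum : 1 = κ * q + ∑ m, w m := by
    have h := congrArg (fun x : Fin M → ℝ => ∑ m, x m) ha
    simp only [Pi.smul_apply, Pi.add_apply, smul_eq_mul, Finset.sum_add_distrib,
      ← Finset.mul_sum, hVsum] at h
    rw [← h]
    field_simp
  have hWs : |∑ m, w m| ≤ M * ‖w‖ := by
    calc |∑ m, w m| ≤ ∑ m, |w m| := Finset.abs_sum_le_sum_abs _ _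
      _ ≤ ∑ _m : Fin M, ‖w‖ := Finset.sum_le_sum (fun m _ => norm_le_pi_norm w m)
      _ = M * ‖w‖ := by simp
  have hfin : (fun m : Fin M => (1 / n) * (∑ t ∈ Finset.Icc 1 (N+1), v t m)
        - R⁻¹.mulVec u m / q) = w - ((∑ m, w m) / q) • R⁻¹.mulVec u := by
    funext m
    have h := congrFun ha m
    simp only [Pi.smul_apply, Pi.add_apply, smul_eq_mul] at h
    rw [hVm, h]
    simp only [Pi.smul_apply, Pi.sub_apply, smul_eq_mul]
    have hS : ∑ m, w m = 1 - κ * q := by linarith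
    rw [hS]
    field_simp
    ring
  rw [hfin]
  have hq0 : 0 < |q| := abs_pos.mpr hq
  calc ‖w - ((∑ m, w m) / q) • R⁻¹.mulVec u‖
      ≤ ‖w‖ + ‖((∑ m, w m) / q) • R⁻¹.mulVec u‖ := norm_sub_le _ _
    _ = ‖w‖ + |∑ m, w m| / |q| * ‖R⁻¹.mulVec u‖ := by
        rw [norm_smul, Real.norm_eq_abs, abs_div]
    _ ≤ ‖w‖ + (M * ‖w‖) / |q| * ‖R⁻¹.mulVec u‖ := by gcongr
    _ = ‖w‖ * (1 + (M : ℝ) * ‖R⁻¹.mulVec u‖ / |q|) := by ring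
    _ ≤ _ := by gcongr
end
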